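/- arXiv:1712.04916 — 3 statements merged into one kernel-verified Lean document; each statement's English description precedes it below -/
import Mathlib

section
/- Let n ≥ 2, let a ∈ (0,∞)ⁿ have pairwise distinct entries, and let s ∈ ℂⁿ satisfy Re(s_j − s_{j+1}) ≥ 2 for all j = 1,…,n−1 (with s_{n+1} := −n−1). Then f_n(s, D(a)) = [(2n−2)!/(n−1)!] · (∏_{j=1}^n a_j)^{s_n+n−1} · ∫_{(0,∞)^{n−1}} (Δ_{n−1}(x²)/Δ_n(a²)) · det M(x,a) · f_{n−1}(s', D(x)) dx, where s' := (s_1 − s_n − n, …, s_{n−1} − s_n − n) ∈ ℂ^{n−1}, and M(x,a) is the n×n matrix whose first row has all entries equal to 1 and whose (j+1,k)-entry, for j = 1,…,n−1 and k = 1,…,n, equals (a_k − x_j)·1{a_k ≥ x_j}. -/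
open MeasureTheory Matrix
open scoped BigOperators

noncomputable section

instance matrixMeasurableSpace {l : Type*} [Fintype l] : MeasurableSpace (Matrix l l ℝ) :=
  inferInstanceAs (MeasurableSpace (l → l → ℝ))

/-- The orthogonal group `O(m)` as a subtype of `m × m` real matrices. -/
abbrev OG (m : ℕ) := Matrix.orthogonalGroup (Fin m) ℝ

/-- `t ^ w` for a real `t ≥ 0` and complex `w`, with the convention `0 ^ w = 0`. -/
def cpw (t : ℝ) (w : ℂ) : ℂ := if t = 0 then 0 else Complex.exp (w * Real.log t)

/-- The `2n × 2n` real antisymmetric matrix `D(a) = diag(a₁ J, …, aₙ J)`,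
`J = [[0,1],[-1,0]]`. -/
def Dmat {n : ℕ} (a : Fin n → ℝ) : Matrix (Fin (2 * n)) (Fin (2 * n)) ℝ :=
  Matrix.of fun i j =>
    if i.val / 2 = j.val / 2 then
      a ⟨i.val / 2, by have := i.isLt; omega⟩ *
        (if i.val % 2 = 0 ∧ j.val % 2 = 1 then 1
          else if i.val % 2 = 1 ∧ j.val % 2 = 0 then -1 else 0)
    else 0

/-- Vandermonde product `Δ_m(x) = ∏_{j<k} (x_k - x_j)`. -/
def vdm {m : ℕ} {R : Type*} [CommRing R] (x : Fin m → R) : R :=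
  ∏ p ∈ Finset.univ.filter (fun p : Fin m × Fin m => p.1 < p.2), (x p.2 - x p.1)

/-- `s_{n+1} := -n-1` convention: the `j`-th exponent `(s_j - s_{j+1})/2 - 1`. -/
def expo (n : ℕ) (s : Fin n → ℂ) (j : Fin n) : ℂ :=
  (s j - (if h : j.val + 1 < n then s ⟨j.val + 1, h⟩ else -(n : ℂ) - 1)) / 2 - 1

/-- The spherical-type group integral
`f_n(s,X) = ∫_{O(2n)} ∏_j det((kXkᵀ)_{[2j]})^{(s_j-s_{j+1})/2-1} d*k`. -/
def sphInt (n : ℕ) (μ : Measure (OG (2 * n))) (s : Fin n → ℂ)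
    (X : Matrix (Fin (2 * n)) (Fin (2 * n)) ℝ) : ℂ :=
  ∫ k : OG (2 * n), ∏ j : Fin n,
    cpw ((((k : Matrix (Fin (2 * n)) (Fin (2 * n)) ℝ) * X *
        (k : Matrix (Fin (2 * n)) (Fin (2 * n)) ℝ)ᵀ).submatrix
          (Fin.castLE (by have := j.isLt; omega : 2 * (j.val + 1) ≤ 2 * n))
          (Fin.castLE (by have := j.isLt; omega : 2 * (j.val + 1) ≤ 2 * n))).det)
      (expo n s j) ∂μ


/-- A bounded measurable `O(m)`-invariant test function on antisymmetric matrices. -/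
def IsInvTest (m : ℕ) (φ : Matrix (Fin m) (Fin m) ℝ → ℝ) : Prop :=
  Measurable φ ∧ (∃ C, ∀ X, |φ X| ≤ C) ∧
    ∀ X : Matrix (Fin m) (Fin m) ℝ, Xᵀ = -X →
      ∀ k ∈ Matrix.orthogonalGroup (Fin m) ℝ, φ (k * X * kᵀ) = φ X

/-- The matrix `M(x,a)`: first row all ones, `(j+1,k)` entry `(a_k - x_j)·1{a_k ≥ x_j}`. -/
def Mxa {n : ℕ} (x : Fin (n - 1) → ℝ) (a : Fin n → ℝ) (hn : 2 ≤ n) :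
    Matrix (Fin n) (Fin n) ℝ :=
  Matrix.of fun b c =>
    if hb : b.val = 0 then 1
    else
      if x ⟨b.val - 1, by have := b.isLt; omega⟩ ≤ a c then
        a c - x ⟨b.val - 1, by have := b.isLt; omega⟩
      else 0

open scoped ENNReal


instance matBorel {N : ℕ} : BorelSpace (Matrix (Fin N) (Fin N) ℝ) :=
  inferInstanceAs (BorelSpace (Fin N → Fin N → ℝ))

instance matSC {N : ℕ} : SecondCountableTopology (Matrix (Fin N) (Fin N) ℝ) :=
  inferInstanceAs (SecondCountableTopology (Fin N → Fin N → ℝ))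

instance ogBorel {N : ℕ} : BorelSpace (OG N) := Subtype.borelSpace _

instance ogSC {N : ℕ} : SecondCountableTopology (OG N) :=
  TopologicalSpace.Subtype.secondCountableTopology _

instance ogCompact {N : ℕ} : CompactSpace (OG N) := by
  apply isCompact_iff_compactSpace.mp
  have hsub : ((Matrix.orthogonalGroup (Fin N) ℝ : Submonoid (Matrix (Fin N) (Fin N) ℝ)) :
      Set (Matrix (Fin N) (Fin N) ℝ)) ⊆
      Set.pi Set.univ (fun _ => Set.pi Set.univ (fun _ => Set.Icc (-1:ℝ) 1)) := by
    intro A hA i _ j _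
    have := entry_norm_bound_of_unitary (𝕜 := ℝ) hA i j
    rw [Real.norm_eq_abs, abs_le] at this
    exact this
  refine IsCompact.of_isClosed_subset (isCompact_univ_pi fun _ => isCompact_univ_pi fun _ => isCompact_Icc) ?_ hsub
  have : ((Matrix.orthogonalGroup (Fin N) ℝ : Submonoid (Matrix (Fin N) (Fin N) ℝ)) :
      Set (Matrix (Fin N) (Fin N) ℝ)) = {A | A * Aᵀ = 1} := by
    ext A; exact mem_orthogonalGroup_iff _ _
  rw [this]
  exact isClosed_eq (by fun_prop) continuous_const

instance ogMul {N : ℕ} : MeasurableMul₂ (OG N) := inferInstance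

lemma og_right {N : ℕ} (μ : Measure (OG N)) [μ.IsHaarMeasure] [IsProbabilityMeasure μ] :
    μ.IsMulRightInvariant := by
  constructor
  intro g
  have : IsProbabilityMeasure (Measure.map (fun x => x * g) μ) :=
    Measure.isProbabilityMeasure_map (by fun_prop)
  exact (Measure.isHaarMeasure_eq_of_isProbabilityMeasure _ _)

lemma og_haar_exists (N : ℕ) : ∃ ν : Measure (OG N), ν.IsHaarMeasure ∧ IsProbabilityMeasure ν := by
  refine ⟨Measure.haarMeasure ⊤, inferInstance, ⟨?_⟩⟩
  have := Measure.haarMeasure_self (G := OG N) (K₀ := ⊤)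
  simpa using this


/-- conjugation -/
def cj {N : ℕ} (k : OG N) (X : Matrix (Fin N) (Fin N) ℝ) : Matrix (Fin N) (Fin N) ℝ :=
  (k : Matrix (Fin N) (Fin N) ℝ) * X * (k : Matrix (Fin N) (Fin N) ℝ)ᵀ

/-- remove the last row and column -/
def crn {N : ℕ} (X : Matrix (Fin (N + 1)) (Fin (N + 1)) ℝ) : Matrix (Fin N) (Fin N) ℝ :=
  X.submatrix Fin.castSucc Fin.castSucc

lemma og_mul_t {N : ℕ} (k : OG N) :
    (k : Matrix (Fin N) (Fin N) ℝ) * (k : Matrix (Fin N) (Fin N) ℝ)ᵀ = 1 :=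
  (mem_orthogonalGroup_iff _ _).1 k.2

lemma og_t_mul {N : ℕ} (k : OG N) :
    (k : Matrix (Fin N) (Fin N) ℝ)ᵀ * (k : Matrix (Fin N) (Fin N) ℝ) = 1 :=
  (mem_orthogonalGroup_iff' _ _).1 k.2

lemma cj_mul {N : ℕ} (k h : OG N) (X : Matrix (Fin N) (Fin N) ℝ) :
    cj (k * h) X = cj k (cj h X) := by
  simp [cj, Matrix.mul_assoc, Matrix.transpose_mul]

lemma continuous_cj {N : ℕ} :
    Continuous (fun p : OG N × Matrix (Fin N) (Fin N) ℝ => cj p.1 p.2) := by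
  unfold cj
  have : Continuous (fun p : OG N × Matrix (Fin N) (Fin N) ℝ => (p.1 : Matrix (Fin N) (Fin N) ℝ)) :=
    continuous_subtype_val.comp continuous_fst
  fun_prop

lemma measurable_cj {N : ℕ} :
    Measurable (fun p : OG N × Matrix (Fin N) (Fin N) ℝ => cj p.1 p.2) :=
  continuous_cj.measurable

lemma continuous_crn {N : ℕ} : Continuous (crn (N := N)) := by
  unfold crn; fun_prop

/-- block matrix `h ⊕ 1` -/
def embM {N : ℕ} (h : Matrix (Fin N) (Fin N) ℝ) : Matrix (Fin (N + 1)) (Fin (N + 1)) ℝ :=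
  Matrix.of (Fin.snoc (fun i => Fin.snoc (h i) 0) (Fin.snoc 0 1))

@[simp] lemma embM_cc {N : ℕ} (h : Matrix (Fin N) (Fin N) ℝ) (i j : Fin N) :
    embM h i.castSucc j.castSucc = h i j := by simp [embM]
@[simp] lemma embM_cl {N : ℕ} (h : Matrix (Fin N) (Fin N) ℝ) (i : Fin N) :
    embM h i.castSucc (Fin.last N) = 0 := by simp [embM]
@[simp] lemma embM_lc {N : ℕ} (h : Matrix (Fin N) (Fin N) ℝ) (j : Fin N) :
    embM h (Fin.last N) j.castSucc = 0 := by simp [embM]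
@[simp] lemma embM_ll {N : ℕ} (h : Matrix (Fin N) (Fin N) ℝ) :
    embM h (Fin.last N) (Fin.last N) = 1 := by simp [embM]

lemma embM_t {N : ℕ} (h : Matrix (Fin N) (Fin N) ℝ) : (embM h)ᵀ = embM hᵀ := by
  ext i j
  induction i using Fin.lastCases <;> induction j using Fin.lastCases <;> simp

lemma embM_mul {N : ℕ} (h g : Matrix (Fin N) (Fin N) ℝ) : embM h * embM g = embM (h * g) := by
  ext i j
  induction i using Fin.lastCases <;> induction j using Fin.lastCases <;>
    simp [Matrix.mul_apply, Fin.sum_univ_castSucc]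

lemma embM_one {N : ℕ} : embM (1 : Matrix (Fin N) (Fin N) ℝ) = 1 := by
  ext i j
  induction i using Fin.lastCases <;> induction j using Fin.lastCases <;>
    simp [Matrix.one_apply, Fin.ext_iff]
  · rename_i i; have := i.2; omega
  · rename_i i; have := i.2; omega

def emb {N : ℕ} (h : OG N) : OG (N + 1) :=
  ⟨embM h, (mem_orthogonalGroup_iff _ _).2 (by rw [embM_t, embM_mul, og_mul_t, embM_one])⟩

lemma crn_cj_emb {N : ℕ} (h : OG N) (X : Matrix (Fin (N + 1)) (Fin (N + 1)) ℝ) :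
    crn (cj (emb h) X) = cj h (crn X) := by
  ext i j
  simp [crn, cj, emb, Matrix.mul_apply, Fin.sum_univ_castSucc]

lemma emb_of_last {N : ℕ} (k : OG (N + 1))
    (hk : (k : Matrix (Fin (N + 1)) (Fin (N + 1)) ℝ) (Fin.last N) = Pi.single (Fin.last N) 1) :
    ∃ h : OG N, k = emb h := by
  set K := (k : Matrix (Fin (N + 1)) (Fin (N + 1)) ℝ) with hK
  have hlc : ∀ j : Fin N, K (Fin.last N) j.castSucc = 0 := by
    intro j; rw [hk]; simp [Pi.single_apply, Fin.ext_iff]; have := j.2; omega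
  have hll : K (Fin.last N) (Fin.last N) = 1 := by rw [hk]; simp
  have hcl : ∀ i : Fin N, K i.castSucc (Fin.last N) = 0 := by
    intro i
    have := congrFun (congrFun (og_mul_t k) i.castSucc) (Fin.last N)
    rw [← hK, Matrix.mul_apply, Fin.sum_univ_castSucc] at this
    simp [hlc, hll] at this
    exact this
  have hE : K = embM (crn K) := by
    ext i j
    induction i using Fin.lastCases <;> induction j using Fin.lastCases <;>
      simp [hlc, hll, hcl, crn]
  have ho : crn K * (crn K)ᵀ = 1 := by
    have h1 := og_mul_t k
    rw [← hK, hE, embM_t, embM_mul] at h1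
    ext i j
    have := congrFun (congrFun h1 i.castSucc) j.castSucc
    simpa [Matrix.one_apply] using this
  exact ⟨⟨crn K, (mem_orthogonalGroup_iff _ _).2 ho⟩, Subtype.ext hE⟩

/-- Householder reflection sending the last basis vector to `v`, for unit `v`. -/
def hhv {N : ℕ} (v : Fin (N + 1) → ℝ) : Fin (N + 1) → ℝ :=
  (Real.sqrt (v ⬝ᵥ v))⁻¹ • v - Pi.single (Fin.last N) 1

def hhM {N : ℕ} (v : Fin (N + 1) → ℝ) : Matrix (Fin (N + 1)) (Fin (N + 1)) ℝ :=
  1 - (2 / (hhv v ⬝ᵥ hhv v)) • vecMulVec (hhv v) (hhv v)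

lemma hhM_t {N : ℕ} (v : Fin (N + 1) → ℝ) : (hhM v)ᵀ = hhM v := by
  simp [hhM, transpose_vecMulVec]

lemma hhM_mul {N : ℕ} (v : Fin (N + 1) → ℝ) : hhM v * (hhM v)ᵀ = 1 := by
  rw [hhM_t]
  unfold hhM
  set w := hhv v
  by_cases hw : w ⬝ᵥ w = 0
  · simp [hw]
  · have : vecMulVec w w * vecMulVec w w = (w ⬝ᵥ w) • vecMulVec w w := by
      rw [vecMulVec_mul_vecMulVec, vecMulVec_smul]
    rw [sub_mul, mul_sub, mul_sub, smul_mul_smul_comm, this]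
    simp only [one_mul, mul_one, smul_smul]
    have : 2 / w ⬝ᵥ w * (2 / w ⬝ᵥ w) * (w ⬝ᵥ w) = 2 / (w ⬝ᵥ w) + 2 / (w ⬝ᵥ w) := by
      field_simp; norm_num
    rw [this, add_smul]; abel

def hh {N : ℕ} (v : Fin (N + 1) → ℝ) : OG (N + 1) :=
  ⟨hhM v, (mem_orthogonalGroup_iff _ _).2 (hhM_mul v)⟩

lemma hh_last {N : ℕ} (v : Fin (N + 1) → ℝ) (hv : v ≠ 0) :
    (hh v : Matrix _ _ ℝ) (Fin.last N) = (Real.sqrt (v ⬝ᵥ v))⁻¹ • v := by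
  have hpos : 0 < v ⬝ᵥ v := by
    refine lt_of_le_of_ne (Finset.sum_nonneg fun i _ => mul_self_nonneg _) (Ne.symm ?_)
    simpa using hv
  set u := (Real.sqrt (v ⬝ᵥ v))⁻¹ • v with hu
  have huu : u ⬝ᵥ u = 1 := by
    rw [hu, smul_dotProduct, dotProduct_smul, smul_eq_mul, smul_eq_mul, ← mul_assoc, ← mul_inv,
      Real.mul_self_sqrt hpos.le]
    field_simp
  have hw : hhv v = u - Pi.single (Fin.last N) 1 := rfl
  have hww : hhv v ⬝ᵥ hhv v = 2 - 2 * u (Fin.last N) := by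
    rw [hw]; simp [huu]; ring
  show hhM v (Fin.last N) = u
  have hrow : hhM v (Fin.last N) = Pi.single (Fin.last N) 1
      - ((2 / (hhv v ⬝ᵥ hhv v)) * (hhv v (Fin.last N))) • hhv v := by
    ext j
    simp [hhM, vecMulVec_apply, Matrix.one_apply, Pi.single_apply, eq_comm, mul_assoc]
  rw [hrow]
  by_cases h0 : u (Fin.last N) = 1
  · have : hhv v ⬝ᵥ hhv v = 0 := by rw [hww, h0]; ring
    have hz : hhv v = 0 := by simpa using this
    rw [hz]; simp
    rw [hz] at hw; exact (sub_eq_zero.1 hw.symm).symm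
  · have h1 : (2 / (hhv v ⬝ᵥ hhv v)) * (hhv v (Fin.last N)) = -1 := by
      rw [hww, hw]
      have : 2 - 2 * u (Fin.last N) ≠ 0 := fun h => h0 (by linarith)
      simp only [Pi.sub_apply, Pi.single_eq_same]
      field_simp; ring
    rw [h1, hw]; simp

lemma hh_smul {N : ℕ} (v : Fin (N + 1) → ℝ) (c : ℝ) (hc : 0 < c) : hh (c • v) = hh v := by
  have : hhv (c • v) = hhv v := by
    unfold hhv
    rw [smul_dotProduct, dotProduct_smul, smul_eq_mul, smul_eq_mul, ← mul_assoc,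
      Real.sqrt_mul (by positivity), Real.sqrt_mul_self hc.le, smul_smul]
    congr 2
    field_simp
  apply Subtype.ext
  show hhM _ = hhM _
  unfold hhM; rw [this]

lemma measurable_hh {N : ℕ} : Measurable (hh (N := N)) := by
  apply Measurable.subtype_mk
  have hv : Measurable (hhv (N := N)) := by
    unfold hhv dotProduct
    fun_prop
  refine measurable_pi_lambda _ fun i => measurable_pi_lambda _ fun j => ?_
  have hvi : ∀ i, Measurable fun v : Fin (N + 1) → ℝ => hhv v i := fun i =>
    (measurable_pi_apply i).comp hv
  simp only [hhM, Matrix.sub_apply, Matrix.smul_apply, vecMulVec_apply, dotProduct]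
  fun_prop


lemma measurable_cj' {α : Type*} [MeasurableSpace α] {N : ℕ} {f : α → OG N}
    {g : α → Matrix (Fin N) (Fin N) ℝ} (hf : Measurable f) (hg : Measurable g) :
    Measurable (fun x => cj (f x) (g x)) :=
  Measurable.comp (g := fun p : OG N × Matrix (Fin N) (Fin N) ℝ => cj p.1 p.2)
    (f := fun x => (f x, g x)) measurable_cj (Measurable.prodMk hf hg)

/-- average over the orthogonal group -/
def avg {N : ℕ} (ν : Measure (OG N)) (φ : Matrix (Fin N) (Fin N) ℝ → ℝ≥0∞)
    (Y : Matrix (Fin N) (Fin N) ℝ) : ℝ≥0∞ := ∫⁻ h, φ (cj h Y) ∂ν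

lemma measurable_avg {N : ℕ} (ν : Measure (OG N)) [IsProbabilityMeasure ν]
    {φ : Matrix (Fin N) (Fin N) ℝ → ℝ≥0∞} (hφ : Measurable φ) : Measurable (avg ν φ) := by
  unfold avg
  have : Measurable (fun p : Matrix (Fin N) (Fin N) ℝ × OG N => φ (cj p.2 p.1)) :=
    hφ.comp (measurable_cj' measurable_snd measurable_fst)
  exact this.lintegral_prod_right'

lemma avg_cj {N : ℕ} (ν : Measure (OG N)) [ν.IsHaarMeasure] [IsProbabilityMeasure ν]
    (φ : Matrix (Fin N) (Fin N) ℝ → ℝ≥0∞) (g : OG N) (Y : Matrix (Fin N) (Fin N) ℝ) :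
    avg ν φ (cj g Y) = avg ν φ Y := by
  unfold avg
  have := og_right ν
  simp_rw [← cj_mul]
  exact lintegral_mul_right_eq_self (fun h => φ (cj h Y)) g

lemma measurable_crn_cj {N : ℕ} (D : Matrix (Fin (N + 1)) (Fin (N + 1)) ℝ) :
    Measurable (fun k : OG (N + 1) => crn (cj k D)) :=
  continuous_crn.measurable.comp (measurable_cj' measurable_id measurable_const)

lemma lemT {N : ℕ} (μ : Measure (OG (N + 1))) [μ.IsHaarMeasure] [IsProbabilityMeasure μ]
    (ν : Measure (OG N)) [IsProbabilityMeasure ν]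
    {φ : Matrix (Fin N) (Fin N) ℝ → ℝ≥0∞} (hφ : Measurable φ)
    (D : Matrix (Fin (N + 1)) (Fin (N + 1)) ℝ) :
    ∫⁻ k, φ (crn (cj k D)) ∂μ = ∫⁻ k, avg ν φ (crn (cj k D)) ∂μ := by
  unfold avg
  rw [lintegral_lintegral_swap]
  · simp_rw [← crn_cj_emb, ← cj_mul]
    have : ∀ h : OG N, ∫⁻ k, φ (crn (cj (emb h * k) D)) ∂μ = ∫⁻ k, φ (crn (cj k D)) ∂μ :=
      fun h => lintegral_mul_left_eq_self (fun k => φ (crn (cj k D))) (emb h)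
    simp_rw [this]
    simp
  · apply Measurable.aemeasurable
    exact hφ.comp (measurable_cj' measurable_snd ((measurable_crn_cj D).comp measurable_fst))

/-- Gaussian weight -/
def gw {N : ℕ} (v : Fin N → ℝ) : ℝ≥0∞ := ENNReal.ofReal (Real.exp (-(v ⬝ᵥ v)))

lemma measurable_gw {N : ℕ} : Measurable (gw (N := N)) := by
  unfold gw dotProduct; fun_prop

lemma measurable_vecMul {N : ℕ} :
    Measurable (fun p : (Fin N → ℝ) × OG N => p.1 ᵥ* (p.2 : Matrix (Fin N) (Fin N) ℝ)) := by
  have : Continuous (fun p : (Fin N → ℝ) × OG N => (p.2 : Matrix (Fin N) (Fin N) ℝ)) :=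
    continuous_subtype_val.comp continuous_snd
  exact (Continuous.matrix_vecMul continuous_fst this).measurable

lemma gw_vecMul {N : ℕ} (v : Fin N → ℝ) (k : OG N) :
    gw (v ᵥ* (k : Matrix (Fin N) (Fin N) ℝ)) = gw v := by
  unfold gw
  congr 3
  rw [← dotProduct_mulVec, ← vecMul_transpose, vecMul_vecMul, og_mul_t, vecMul_one]

lemma lintegral_vecMul {N : ℕ} (k : OG N) {f : (Fin N → ℝ) → ℝ≥0∞} (hf : Measurable f) :
    ∫⁻ v, f (v ᵥ* (k : Matrix (Fin N) (Fin N) ℝ)) = ∫⁻ v, f v := by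
  set M := (k : Matrix (Fin N) (Fin N) ℝ)ᵀ with hM
  have hd : M.det * M.det = 1 := by
    have := congrArg Matrix.det (og_t_mul k)
    rw [det_mul, det_one] at this
    rw [hM, det_transpose] at *
    exact this
  have h0 : M.det ≠ 0 := fun h => by simp [h] at hd
  have habs : |M.det⁻¹| = 1 := by
    rcases mul_self_eq_one_iff.1 hd with h | h <;> simp [h]
  have := Real.map_matrix_volume_pi_eq_smul_volume_pi h0
  rw [habs] at this
  simp only [ENNReal.ofReal_one, one_smul] at this
  conv_rhs => rw [← this]
  rw [lintegral_map hf]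
  · simp [hM, mulVec_transpose]
  · exact (LinearMap.continuous_of_finiteDimensional _).measurable

lemma lemS {N : ℕ} (μ : Measure (OG (N + 1))) [μ.IsHaarMeasure] [IsProbabilityMeasure μ]
    {Φ : Matrix (Fin N) (Fin N) ℝ → ℝ≥0∞} (hΦ : Measurable Φ)
    (hinv : ∀ (h : OG N) Y, Φ (cj h Y) = Φ Y)
    (D : Matrix (Fin (N + 1)) (Fin (N + 1)) ℝ) :
    (∫⁻ v : Fin (N + 1) → ℝ, gw v) * ∫⁻ k, Φ (crn (cj k D)) ∂μ
      = ∫⁻ v : Fin (N + 1) → ℝ, gw v * Φ (crn (cj (hh v) D)) := by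
  set f : (Fin (N + 1) → ℝ) → ℝ≥0∞ := fun v => Φ (crn (cj (hh v) D)) with hf
  have hfm : Measurable f := hΦ.comp ((measurable_crn_cj D).comp measurable_hh)
  have key : ∀ k : OG (N + 1), f ((k : Matrix (Fin (N + 1)) (Fin (N + 1)) ℝ) (Fin.last N)) = Φ (crn (cj k D)) := by
    intro k
    set u := (k : Matrix (Fin (N + 1)) (Fin (N + 1)) ℝ) (Fin.last N) with hu
    have huu : u ⬝ᵥ u = 1 := by
      have := congrFun (congrFun (og_mul_t k) (Fin.last N)) (Fin.last N)
      rw [Matrix.mul_apply] at this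
      simpa [dotProduct] using this
    have hu0 : u ≠ 0 := by rintro h; rw [h] at huu; simp at huu
    have hlast := hh_last u hu0
    rw [huu] at hlast
    simp only [Real.sqrt_one, inv_one, one_smul] at hlast
    obtain ⟨h, hh'⟩ := emb_of_last (k * (hh u)⁻¹) (by
      have : ((hh u)⁻¹ : OG (N + 1)) = hh u := by
        apply inv_eq_of_mul_eq_one_left
        apply Subtype.ext
        have := og_mul_t (hh u)
        have h2 : ((hh u : OG (N + 1)) : Matrix (Fin (N + 1)) (Fin (N + 1)) ℝ)ᵀ = hh u := hhM_t u
        rw [h2] at this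
        exact this
      rw [this]
      have h1 : (k * hh u : OG (N + 1)).1 (Fin.last N) = u ᵥ* (hh u : Matrix (Fin (N + 1)) (Fin (N + 1)) ℝ) := by
        ext j; simp [Matrix.mul_apply, vecMul, dotProduct, hu]
      rw [h1]
      nth_rewrite 1 [← hlast]
      have h3 : ((hh u : OG (N + 1)) : Matrix (Fin (N + 1)) (Fin (N + 1)) ℝ) * (hh u : Matrix (Fin (N + 1)) (Fin (N + 1)) ℝ) = 1 := by
        have := og_mul_t (hh u)
        have h2 : ((hh u : OG (N + 1)) : Matrix (Fin (N + 1)) (Fin (N + 1)) ℝ)ᵀ = hh u := hhM_t u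
        rwa [h2] at this
      ext j
      have := congrFun (congrFun h3 (Fin.last N)) j
      rw [Matrix.mul_apply] at this
      simp only [vecMul, dotProduct]
      rw [this, Matrix.one_apply, Pi.single_apply]
      simp [eq_comm])
    have hk : k = emb h * hh u := by rw [← hh']; simp
    rw [hf]
    simp only
    rw [hk, cj_mul, crn_cj_emb, hinv]
  have scale : ∀ (c : ℝ) (v), 0 < c → f (c • v) = f v := by
    intro c v hc; simp only [hf, hh_smul v c hc]
  have main : ∀ v : Fin (N + 1) → ℝ, v ≠ 0 →
      ∫⁻ k : OG (N + 1), f (v ᵥ* (k : Matrix (Fin (N + 1)) (Fin (N + 1)) ℝ)) ∂μ = ∫⁻ k, Φ (crn (cj k D)) ∂μ := by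
    intro v hv
    have hpos : 0 < v ⬝ᵥ v := by
      refine lt_of_le_of_ne (Finset.sum_nonneg fun i _ => mul_self_nonneg _) (Ne.symm ?_)
      simpa using hv
    have : ∀ k : OG (N + 1), f (v ᵥ* (k : Matrix (Fin (N + 1)) (Fin (N + 1)) ℝ)) = Φ (crn (cj (hh v * k) D)) := by
      intro k
      rw [← key]
      rw [← scale (Real.sqrt (v ⬝ᵥ v))⁻¹ _ (by positivity), ← smul_vecMul, ← hh_last v hv]
      congr 1
    simp_rw [this]
    exact lintegral_mul_left_eq_self (fun k => Φ (crn (cj k D))) (hh v)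
  have hone : ∀ k : OG (N + 1), ∫⁻ v : Fin (N + 1) → ℝ, gw v * f (v ᵥ* (k : Matrix (Fin (N + 1)) (Fin (N + 1)) ℝ))
      = ∫⁻ v, gw v * f v := by
    intro k
    rw [← lintegral_vecMul k (f := fun v => gw v * f v) (measurable_gw.mul hfm)]
    simp_rw [gw_vecMul]
  calc (∫⁻ v : Fin (N + 1) → ℝ, gw v) * ∫⁻ k, Φ (crn (cj k D)) ∂μ
      = ∫⁻ v : Fin (N + 1) → ℝ, gw v * ∫⁻ k, Φ (crn (cj k D)) ∂μ := by
        rw [lintegral_mul_const _ measurable_gw]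
    _ = ∫⁻ v : Fin (N + 1) → ℝ, gw v * ∫⁻ k : OG (N + 1), f (v ᵥ* (k : Matrix (Fin (N + 1)) (Fin (N + 1)) ℝ)) ∂μ := by
        apply lintegral_congr_ae
        have : ∀ᵐ v : Fin (N + 1) → ℝ, v ≠ 0 := by
          simp [ae_iff]
        filter_upwards [this] with v hv
        rw [main v hv]
    _ = ∫⁻ v : Fin (N + 1) → ℝ, ∫⁻ k : OG (N + 1), gw v * f (v ᵥ* (k : Matrix (Fin (N + 1)) (Fin (N + 1)) ℝ)) ∂μ := by
        congr 1; ext v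
        rw [lintegral_const_mul]
        exact hfm.comp (measurable_vecMul.comp (measurable_const.prodMk measurable_id))
    _ = ∫⁻ k : OG (N + 1), (∫⁻ v : Fin (N + 1) → ℝ, gw v * f (v ᵥ* (k : Matrix (Fin (N + 1)) (Fin (N + 1)) ℝ))) ∂μ := by
        apply lintegral_lintegral_swap
        apply Measurable.aemeasurable
        exact (measurable_gw.comp measurable_fst).mul (hfm.comp measurable_vecMul)
    _ = ∫⁻ v, gw v * f v := by
        simp_rw [hone]; simp


def blk {m : ℕ} (i : Fin (2 * m)) : Fin m := ⟨i.val / 2, by have := i.isLt; omega⟩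

def ptn {m : ℕ} (i : Fin (2 * m)) : Fin (2 * m) :=
  ⟨if i.val % 2 = 0 then i.val + 1 else i.val - 1, by have := i.isLt; split_ifs <;> omega⟩

lemma blk_ptn {m : ℕ} (i : Fin (2 * m)) : blk (ptn i) = blk i := by
  simp only [blk, ptn, Fin.mk.injEq]; split_ifs <;> omega

lemma ptn_ptn {m : ℕ} (i : Fin (2 * m)) : ptn (ptn i) = i := by
  simp only [ptn, Fin.ext_iff]; split_ifs <;> omega

lemma Dmat_eq {m : ℕ} (b : Fin m → ℝ) (l j : Fin (2 * m)) :
    Dmat b l j = if l = ptn j then (if j.val % 2 = 0 then -b (blk j) else b (blk j)) else 0 := by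
  have hl := l.isLt
  have hj := j.isLt
  by_cases h : l = ptn j
  · rw [if_pos h]
    have h1 : l.val / 2 = j.val / 2 := congrArg Fin.val ((congrArg blk h).trans (blk_ptn j))
    have h2 : l.val = if j.val % 2 = 0 then j.val + 1 else j.val - 1 := congrArg Fin.val h
    simp only [Dmat, of_apply, if_pos h1, blk, h1]
    by_cases h3 : j.val % 2 = 0
    · rw [if_pos h3] at h2
      have : l.val % 2 = 1 := by omega
      simp [h3, this]
    · rw [if_neg h3] at h2
      have h4 : l.val % 2 = 0 := by omega
      have h5 : j.val % 2 = 1 := by omega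
      simp [h4, h5]
  · rw [if_neg h]
    simp only [Dmat, of_apply]
    by_cases h1 : l.val / 2 = j.val / 2
    · rw [if_pos h1]
      have h2 : l.val ≠ if j.val % 2 = 0 then j.val + 1 else j.val - 1 := fun h' => h (Fin.ext h')
      by_cases h3 : j.val % 2 = 0
      · rw [if_pos h3] at h2
        have : l.val % 2 = 0 := by omega
        simp [h3, this]
      · rw [if_neg h3] at h2
        have h4 : l.val % 2 = 1 := by omega
        have h5 : j.val % 2 = 1 := by omega
        simp [h4, h5]
    · rw [if_neg h1]

lemma Dmat_t {m : ℕ} (b : Fin m → ℝ) : (Dmat b)ᵀ = -Dmat b := by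
  ext i j
  rw [transpose_apply, neg_apply, Dmat_eq, Dmat_eq]
  by_cases h : j = ptn i
  · subst h
    rw [if_pos rfl, if_pos (ptn_ptn i).symm, blk_ptn]
    by_cases h3 : i.val % 2 = 0
    · have : (ptn i).val % 2 ≠ 0 := by simp only [ptn, h3, if_true]; omega
      simp [h3, this]
    · have : (ptn i).val % 2 = 0 := by simp only [ptn, h3, if_false]; omega
      simp [h3, this]
  · have : i ≠ ptn j := fun h' => h (by rw [h', ptn_ptn])
    simp [h, this]

lemma Dmat_sq {m : ℕ} (b : Fin m → ℝ) :
    Dmat b * Dmat b = -diagonal (fun i => b (blk i) ^ 2) := by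
  ext i j
  rw [Matrix.mul_apply]
  simp_rw [Dmat_eq b _ j]
  simp only [mul_ite, mul_zero, Finset.sum_ite_eq', Finset.mem_univ, if_true]
  rw [Dmat_eq, ptn_ptn, blk_ptn, neg_apply, diagonal_apply]
  by_cases h : i = j
  · subst h
    by_cases h3 : i.val % 2 = 0
    · have : (ptn i).val % 2 ≠ 0 := by simp only [ptn, h3, if_true]; omega
      simp [h3, this, sq]
    · have : (ptn i).val % 2 = 0 := by simp only [ptn, h3, if_false]; omega
      simp [h3, this, sq]
  · simp [h]

lemma skew_dot {N : ℕ} {C : Matrix (Fin N) (Fin N) ℝ} (hC : Cᵀ = -C) (v w : Fin N → ℝ) :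
    v ⬝ᵥ (C *ᵥ w) = -((C *ᵥ v) ⬝ᵥ w) := by
  rw [dotProduct_mulVec, ← mulVec_transpose, hC, neg_mulVec, neg_dotProduct]

lemma nf_cols {N m : ℕ} (C : Matrix (Fin N) (Fin N) ℝ) (hC : Cᵀ = -C) (b : Fin m → ℝ)
    (hb : ∀ j, 0 < b j) (hinj : Function.Injective b)
    (hev : ∀ j, ∃ v : Fin N → ℝ, v ≠ 0 ∧ C *ᵥ (C *ᵥ v) = (-(b j ^ 2)) • v) :
    ∃ H : Matrix (Fin N) (Fin (2 * m)) ℝ, Hᵀ * H = 1 ∧ C * H = H * Dmat b := by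
  have hev' : ∀ j, ∃ v : Fin N → ℝ, v ⬝ᵥ v = 1 ∧ C *ᵥ (C *ᵥ v) = (-(b j ^ 2)) • v := by
    intro j
    obtain ⟨v, hv, h⟩ := hev j
    have hpos : 0 < v ⬝ᵥ v := by
      refine lt_of_le_of_ne (Finset.sum_nonneg fun i _ => mul_self_nonneg _) (Ne.symm ?_)
      simpa using hv
    refine ⟨(Real.sqrt (v ⬝ᵥ v))⁻¹ • v, ?_, ?_⟩
    · rw [smul_dotProduct, dotProduct_smul, smul_eq_mul, smul_eq_mul, ← mul_assoc, ← mul_inv,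
        Real.mul_self_sqrt hpos.le]
      field_simp
    · rw [mulVec_smul, mulVec_smul, h, smul_comm]
  choose v hv1 hv2 using hev'
  set w : Fin m → Fin N → ℝ := fun j => (-(b j)⁻¹) • (C *ᵥ v j) with hw
  have hb0 : ∀ j, b j ≠ 0 := fun j => (hb j).ne'
  have hsq : ∀ i j, i ≠ j → b i ^ 2 ≠ b j ^ 2 := by
    intro i j hij h
    exact hij (hinj ((pow_left_inj₀ (hb i).le (hb j).le two_ne_zero).1 h))
  have hvv : ∀ i j, v i ⬝ᵥ v j = if i = j then 1 else 0 := by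
    intro i j
    split_ifs with h
    · rw [h, hv1]
    · have h1 : v i ⬝ᵥ (C *ᵥ (C *ᵥ v j)) = (C *ᵥ (C *ᵥ v i)) ⬝ᵥ v j := by
        rw [skew_dot hC, skew_dot hC, neg_neg]
      rw [hv2, hv2, dotProduct_smul, smul_dotProduct, smul_eq_mul, smul_eq_mul] at h1
      have : (b i ^ 2 - b j ^ 2) * (v i ⬝ᵥ v j) = 0 := by linarith
      rcases mul_eq_zero.1 this with h2 | h2
      · exact absurd (sub_eq_zero.1 h2) (hsq i j h)
      · exact h2
  have hvC : ∀ i j, v i ⬝ᵥ (C *ᵥ v j) = 0 := by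
    intro i j
    by_cases h : i = j
    · subst h
      have := skew_dot hC (v i) (v i)
      rw [dotProduct_comm (C *ᵥ v i)] at this
      linarith
    · have h1 : v i ⬝ᵥ (C *ᵥ (C *ᵥ (C *ᵥ v j))) = (C *ᵥ (C *ᵥ v i)) ⬝ᵥ (C *ᵥ v j) := by
        rw [skew_dot hC, skew_dot hC, neg_neg]
      rw [hv2, hv2, mulVec_smul, dotProduct_smul, smul_dotProduct, smul_eq_mul, smul_eq_mul] at h1
      have : (b i ^ 2 - b j ^ 2) * (v i ⬝ᵥ (C *ᵥ v j)) = 0 := by linarith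
      rcases mul_eq_zero.1 this with h2 | h2
      · exact absurd (sub_eq_zero.1 h2) (hsq i j h)
      · exact h2
  have hvw : ∀ i j, v i ⬝ᵥ w j = 0 := by
    intro i j; simp [hw, dotProduct_smul, hvC]
  have hww : ∀ i j, w i ⬝ᵥ w j = if i = j then 1 else 0 := by
    intro i j
    simp only [hw]
    rw [smul_dotProduct, dotProduct_smul, skew_dot hC, hv2, smul_dotProduct, hvv]
    by_cases h : i = j
    · subst h; simp only [if_true, smul_eq_mul]; have := hb0 i; field_simp
    · simp [h]
  have hCv : ∀ j, C *ᵥ v j = (-b j) • w j := by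
    intro j; simp only [hw]; rw [smul_smul]; have := hb0 j; field_simp; simp
  have hCw : ∀ j, C *ᵥ w j = b j • v j := by
    intro j; simp only [hw]; rw [mulVec_smul, hv2, smul_smul]; have := hb0 j
    congr 1; field_simp
  refine ⟨Matrix.of fun i j => if j.val % 2 = 0 then v (blk j) i else w (blk j) i, ?_, ?_⟩
  · ext i j
    have : ((Matrix.of fun i (j : Fin (2 * m)) =>
        if j.val % 2 = 0 then v (blk j) i else w (blk j) i)ᵀ *
        (Matrix.of fun i (j : Fin (2 * m)) =>
        if j.val % 2 = 0 then v (blk j) i else w (blk j) i)) i j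
        = (if i.val % 2 = 0 then v (blk i) else w (blk i)) ⬝ᵥ
          (if j.val % 2 = 0 then v (blk j) else w (blk j)) := by
      simp only [Matrix.mul_apply, transpose_apply, of_apply, dotProduct]
      apply Finset.sum_congr rfl
      intro l _
      split_ifs <;> rfl
    rw [this, Matrix.one_apply]
    by_cases hi : i.val % 2 = 0 <;> by_cases hj : j.val % 2 = 0
    · have : i = j ↔ blk i = blk j := by simp only [blk, Fin.ext_iff]; omega
      simp only [hi, hj, if_true, hvv, this]
    · have : ¬ (i = j) := by rw [Fin.ext_iff]; omega
      simp only [hi, hj, if_true, if_false, hvw, this]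
    · have : ¬ (i = j) := by rw [Fin.ext_iff]; omega
      simp only [hi, hj, if_true, if_false, this]
      rw [dotProduct_comm, hvw]
    · have : i = j ↔ blk i = blk j := by simp only [blk, Fin.ext_iff]; omega
      simp only [hi, hj, if_false, hww, this]
  · ext i j
    have hL : (C * (Matrix.of fun i (j : Fin (2 * m)) =>
        if j.val % 2 = 0 then v (blk j) i else w (blk j) i)) i j =
        (C *ᵥ (if j.val % 2 = 0 then v (blk j) else w (blk j))) i := by
      simp only [Matrix.mul_apply, of_apply, mulVec, dotProduct]
      apply Finset.sum_congr rfl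
      intro l _
      split_ifs <;> rfl
    rw [hL, Matrix.mul_apply]
    simp_rw [Dmat_eq b _ j]
    simp only [mul_ite, mul_zero, Finset.sum_ite_eq', Finset.mem_univ, if_true, of_apply, blk_ptn]
    by_cases h3 : j.val % 2 = 0
    · have : (ptn j).val % 2 ≠ 0 := by simp only [ptn, h3, if_true]; omega
      simp only [h3, this, if_true, if_false, hCv, Pi.smul_apply, smul_eq_mul]
      ring
    · have : (ptn j).val % 2 = 0 := by simp only [ptn, h3, if_false]; omega
      simp only [h3, this, if_true, if_false, hCw, Pi.smul_apply, smul_eq_mul]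
      ring

lemma nf_even {m : ℕ} (C : Matrix (Fin (2 * m)) (Fin (2 * m)) ℝ) (hC : Cᵀ = -C) (b : Fin m → ℝ)
    (hb : ∀ j, 0 < b j) (hinj : Function.Injective b)
    (hev : ∀ j, ∃ v : Fin (2 * m) → ℝ, v ≠ 0 ∧ C *ᵥ (C *ᵥ v) = (-(b j ^ 2)) • v) :
    ∃ h : OG (2 * m), C = cj h (Dmat b) := by
  obtain ⟨H, h1, h2⟩ := nf_cols C hC b hb hinj hev
  refine ⟨⟨H, (mem_orthogonalGroup_iff' _ _).2 h1⟩, ?_⟩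
  have h3 : H * Hᵀ = 1 := mul_eq_one_comm.1 h1
  show C = H * Dmat b * Hᵀ
  rw [← h2, Matrix.mul_assoc, h3, Matrix.mul_one]

/-- odd normal form -/
def Dodd {m : ℕ} (b : Fin m → ℝ) : Matrix (Fin (2 * m + 1)) (Fin (2 * m + 1)) ℝ :=
  Matrix.of (Fin.cons 0 (fun i => Fin.cons 0 (Dmat b i)))

@[simp] lemma Dodd_ss {m : ℕ} (b : Fin m → ℝ) (i j : Fin (2 * m)) :
    Dodd b i.succ j.succ = Dmat b i j := by simp [Dodd]
@[simp] lemma Dodd_s0 {m : ℕ} (b : Fin m → ℝ) (i : Fin (2 * m)) :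
    Dodd b i.succ 0 = 0 := by simp [Dodd]
@[simp] lemma Dodd_0 {m : ℕ} (b : Fin m → ℝ) (i : Fin (2 * m + 1)) :
    Dodd b 0 i = 0 := by simp [Dodd]

lemma Dodd_t {m : ℕ} (b : Fin m → ℝ) : (Dodd b)ᵀ = -Dodd b := by
  ext i j
  induction i using Fin.cases <;> induction j using Fin.cases <;> simp
  rename_i i j
  exact congrFun (congrFun (Dmat_t b) i) j

lemma Dodd_sq {m : ℕ} (b : Fin m → ℝ) :
    Dodd b * Dodd b = -diagonal (Fin.cons 0 (fun i : Fin (2 * m) => b (blk i) ^ 2)) := by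
  ext i j
  rw [Matrix.mul_apply, Fin.sum_univ_succ]
  induction i using Fin.cases <;> induction j using Fin.cases
  · simp
  · simp [diagonal_apply, (Fin.succ_ne_zero _).symm]
  · simp [diagonal_apply]
  · rename_i i j
    have := congrFun (congrFun (Dmat_sq b) i) j
    rw [Matrix.mul_apply] at this
    simp [diagonal_apply] at this ⊢
    exact this

lemma nf_odd {m : ℕ} (C : Matrix (Fin (2 * m + 1)) (Fin (2 * m + 1)) ℝ) (hC : Cᵀ = -C)
    (b : Fin m → ℝ) (hb : ∀ j, 0 < b j) (hinj : Function.Injective b)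
    (hev : ∀ j, ∃ v : Fin (2 * m + 1) → ℝ, v ≠ 0 ∧ C *ᵥ (C *ᵥ v) = (-(b j ^ 2)) • v) :
    ∃ h : OG (2 * m + 1), C = cj h (Dodd b) := by
  obtain ⟨H, h1, h2⟩ := nf_cols C hC b hb hinj hev
  have hdet : C.det = 0 := by
    have := congrArg Matrix.det hC
    rw [det_transpose, det_neg] at this
    simp [pow_add, pow_mul] at this
    linarith
  obtain ⟨z, hz0, hz⟩ := exists_mulVec_eq_zero_iff.2 hdet
  have hpos : 0 < z ⬝ᵥ z := by
    refine lt_of_le_of_ne (Finset.sum_nonneg fun i _ => mul_self_nonneg _) (Ne.symm ?_)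
    simpa using hz0
  set e := (Real.sqrt (z ⬝ᵥ z))⁻¹ • z with he
  have hee : e ⬝ᵥ e = 1 := by
    rw [he, smul_dotProduct, dotProduct_smul, smul_eq_mul, smul_eq_mul, ← mul_assoc, ← mul_inv,
      Real.mul_self_sqrt hpos.le]
    field_simp
  have hCe : C *ᵥ e = 0 := by rw [he, mulVec_smul, hz, smul_zero]
  -- orthogonality
  have hort : e ᵥ* H = 0 := by
    have h3 : e ᵥ* (C * H) = 0 := by
      have h5 : e ᵥ* C = 0 := by rw [← mulVec_transpose, hC, neg_mulVec, hCe]; simp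
      rw [← vecMul_vecMul, h5]; simp
    rw [h2, ← vecMul_vecMul] at h3
    have h4 : (e ᵥ* H ᵥ* Dmat b) ᵥ* Dmat b = 0 := by rw [h3]; simp
    rw [vecMul_vecMul, Dmat_sq] at h4
    ext i
    have := congrFun h4 i
    rw [vecMul_neg, Pi.neg_apply, vecMul_diagonal] at this
    simp at this
    rcases this with h | h
    · exact h
    · exact absurd h (hb _).ne'
  set K : Matrix (Fin (2 * m + 1)) (Fin (2 * m + 1)) ℝ :=
    Matrix.of (fun i => Fin.cons (e i) (H i)) with hK
  have hKK : Kᵀ * K = 1 := by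
    ext i j
    rw [Matrix.mul_apply]
    induction i using Fin.cases <;> induction j using Fin.cases
    · simpa [hK, dotProduct] using hee
    · rename_i j
      have := congrFun hort j
      simpa [hK, vecMul, dotProduct, Matrix.one_apply, (Fin.succ_ne_zero _).symm] using this
    · rename_i j
      have := congrFun hort j
      simpa [hK, vecMul, dotProduct, Matrix.one_apply, mul_comm] using this
    · rename_i i j
      have := congrFun (congrFun h1 i) j
      rw [Matrix.mul_apply] at this
      simpa [hK, Matrix.one_apply] using this
  have hCK : C * K = K * Dodd b := by
    ext i j
    rw [Matrix.mul_apply, Matrix.mul_apply]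
    induction j using Fin.cases
    · have := congrFun hCe i
      rw [Fin.sum_univ_succ (n := 2 * m) (f := fun l => K i l * Dodd b l 0)]
      simpa [hK, mulVec, dotProduct] using this
    · rename_i j
      have := congrFun (congrFun h2 i) j
      rw [Matrix.mul_apply, Matrix.mul_apply] at this
      rw [Fin.sum_univ_succ (n := 2 * m) (f := fun l => K i l * Dodd b l j.succ)]
      simpa [hK] using this
  refine ⟨⟨K, (mem_orthogonalGroup_iff' _ _).2 hKK⟩, ?_⟩
  have h3 : K * Kᵀ = 1 := mul_eq_one_comm.1 hKK
  show C = K * Dodd b * Kᵀ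
  rw [← hCK, Matrix.mul_assoc, h3, Matrix.mul_one]

/-- eigenvector of the corner from the secular equation -/
lemma crn_ev {N : ℕ} (k : OG (N + 1)) (D : Matrix (Fin (N + 1)) (Fin (N + 1)) ℝ) (hD : Dᵀ = -D)
    (d : Fin (N + 1) → ℝ) (hD2 : D * D = -diagonal d) (t : ℝ) (ht : ∀ i, t - d i ≠ 0)
    (hsec : ∑ i, ((k : Matrix (Fin (N + 1)) (Fin (N + 1)) ℝ) (Fin.last N) i) ^ 2 / (t - d i) = 0) :
    ∃ v : Fin N → ℝ, v ≠ 0 ∧ crn (cj k D) *ᵥ (crn (cj k D) *ᵥ v) = (-t) • v := by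
  set K := (k : Matrix (Fin (N + 1)) (Fin (N + 1)) ℝ) with hK
  set u := K (Fin.last N) with hu
  set X := K * D * Kᵀ with hX
  have hXc : cj k D = X := rfl
  have hXt : Xᵀ = -X := by
    rw [hX, transpose_mul, transpose_mul, transpose_transpose, hD]
    simp [Matrix.mul_assoc]
  set q : Fin (N + 1) → ℝ := fun i => u i / (t - d i) with hq
  set g : Fin (N + 1) → ℝ := K *ᵥ q with hg
  have hKtK : Kᵀ * K = 1 := og_t_mul k
  have hKKt : K * Kᵀ = 1 := og_mul_t k
  have hXX : X * X = K * (D * D) * Kᵀ := by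
    have : X * X = K * D * (Kᵀ * K) * D * Kᵀ := by rw [hX]; simp only [Matrix.mul_assoc]
    rw [this, hKtK]; simp only [Matrix.mul_assoc, Matrix.one_mul]
  have hXg : X *ᵥ (X *ᵥ g) = Pi.single (Fin.last N) 1 - t • g := by
    rw [mulVec_mulVec, hXX, hg, mulVec_mulVec, Matrix.mul_assoc, hKtK, Matrix.mul_one, hD2,
      ← mulVec_mulVec]
    have h1 : (-diagonal d) *ᵥ q = u - t • q := by
      ext i
      rw [neg_mulVec, Pi.neg_apply, mulVec_diagonal]
      simp only [hq, Pi.sub_apply, Pi.smul_apply, smul_eq_mul]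
      have := ht i
      field_simp; ring
    rw [h1, mulVec_sub, mulVec_smul]
    congr 1
    ext i
    have := congrFun (congrFun hKKt i) (Fin.last N)
    rw [Matrix.mul_apply] at this
    simp only [mulVec, dotProduct, hu]
    simp only [transpose_apply] at this
    rw [this, Matrix.one_apply, Pi.single_apply]
  have hgl : g (Fin.last N) = 0 := by
    rw [← hsec, hg]
    simp only [mulVec, dotProduct, hq]
    apply Finset.sum_congr rfl
    intro i _
    rw [← hu]; ring
  have hg0 : g ≠ 0 := by
    intro h
    rw [h] at hXg
    have := congrFun hXg (Fin.last N)
    simp at this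
  have hXgl : (X *ᵥ g) (Fin.last N) = 0 := by
    have h1 : g ⬝ᵥ (X *ᵥ (X *ᵥ (X *ᵥ g))) = 0 := by
      rw [skew_dot hXt, skew_dot hXt, neg_neg]
      have := skew_dot hXt (X *ᵥ g) (X *ᵥ g)
      rw [dotProduct_comm (X *ᵥ (X *ᵥ g))] at this
      rw [dotProduct_comm]
      linarith
    have h2 : g ⬝ᵥ (X *ᵥ g) = 0 := by
      have := skew_dot hXt g g
      rw [dotProduct_comm (X *ᵥ g)] at this
      linarith
    rw [hXg, mulVec_sub, dotProduct_sub, mulVec_smul, dotProduct_smul, h2] at h1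
    rw [skew_dot hXt] at h1
    simpa using h1
  have hc : ∀ y : Fin (N + 1) → ℝ, y (Fin.last N) = 0 →
      crn X *ᵥ (fun i => y i.castSucc) = fun i => (X *ᵥ y) i.castSucc := by
    intro y hy
    ext i
    simp only [mulVec, dotProduct, crn, submatrix_apply]
    rw [Fin.sum_univ_castSucc (n := N), hy]
    simp
  refine ⟨fun i => g i.castSucc, ?_, ?_⟩
  · intro h
    apply hg0
    ext i
    induction i using Fin.lastCases
    · exact hgl
    · exact congrFun h _
  · rw [hXc, hc g hgl, hc (X *ᵥ g) hXgl, hXg]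
    ext i
    simp [Pi.single_apply, Fin.ext_iff]
    intro h; have := i.2; omega

lemma crn_skew {N : ℕ} (k : OG (N + 1)) (D : Matrix (Fin (N + 1)) (Fin (N + 1)) ℝ) (hD : Dᵀ = -D) :
    (crn (cj k D))ᵀ = -crn (cj k D) := by
  have : (cj k D)ᵀ = - cj k D := by
    unfold cj
    rw [transpose_mul, transpose_mul, transpose_transpose, hD]
    simp [Matrix.mul_assoc]
  ext i j
  exact congrFun (congrFun this i.castSucc) j.castSucc


/-- Lagrange denominators -/
def Wd {m : ℕ} (α : Fin (m + 1) → ℝ) (j : Fin (m + 1)) : ℝ :=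
  ∏ i : Fin m, (α j - α (j.succAbove i))

lemma Wd_erase {m : ℕ} (α : Fin (m + 1) → ℝ) (j : Fin (m + 1)) :
    ∏ i ∈ Finset.univ.erase j, (α j - α i) = Wd α j := by
  have : (Finset.univ.erase j : Finset (Fin (m + 1))) = Finset.univ.image j.succAbove := by
    rw [Fin.image_succAbove_univ]; ext; simp
  rw [this, Finset.prod_image (fun _ _ _ _ h => Fin.succAbove_right_injective h)]
  rfl

lemma Wd_ne {m : ℕ} {α : Fin (m + 1) → ℝ} (hα : Function.Injective α) (j : Fin (m + 1)) :
    Wd α j ≠ 0 := by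
  refine Finset.prod_ne_zero_iff.2 fun i _ => sub_ne_zero.2 fun h => ?_
  exact Fin.succAbove_ne j i (hα h).symm

lemma lag_sum {m : ℕ} {α : Fin (m + 1) → ℝ} (hα : Function.Injective α) (P : Polynomial ℝ)
    (hP : P.degree < (m + 1 : ℕ)) : ∑ j, P.eval (α j) / Wd α j = P.coeff m := by
  have := Lagrange.coeff_eq_sum (s := Finset.univ) (v := α) hα.injOn (P := P) (by simpa using hP)
  simp only [Finset.card_univ, Fintype.card_fin, Nat.add_sub_cancel] at this
  rw [this]
  simp_rw [Wd_erase]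

/-- the monic polynomial with roots β -/
def Pp {m : ℕ} (β : Fin m → ℝ) : Polynomial ℝ := ∏ i, (Polynomial.X - Polynomial.C (β i))
def Pe {m : ℕ} (β : Fin m → ℝ) (l : Fin m) : Polynomial ℝ :=
  ∏ i ∈ Finset.univ.erase l, (Polynomial.X - Polynomial.C (β i))

lemma Pp_eval {m : ℕ} (β : Fin m → ℝ) (t : ℝ) : (Pp β).eval t = ∏ i, (t - β i) := by
  simp [Pp, Polynomial.eval_prod]
lemma Pe_eval {m : ℕ} (β : Fin m → ℝ) (l : Fin m) (t : ℝ) :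
    (Pe β l).eval t = ∏ i ∈ Finset.univ.erase l, (t - β i) := by
  simp [Pe, Polynomial.eval_prod]
lemma Pp_deg {m : ℕ} (β : Fin m → ℝ) : (Pp β).degree = m := by
  simp [Pp, Polynomial.degree_prod]
lemma Pp_monic {m : ℕ} (β : Fin m → ℝ) : (Pp β).Monic := Polynomial.monic_prod_X_sub_C _ _
lemma Pp_coeff {m : ℕ} (β : Fin m → ℝ) : (Pp β).coeff m = 1 := by
  have h := Pp_monic β
  rw [Polynomial.Monic, Polynomial.leadingCoeff, Polynomial.natDegree_eq_of_degree_eq_some (Pp_deg β)] at h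
  exact h
lemma Pe_deg {m : ℕ} (β : Fin m → ℝ) (l : Fin m) : (Pe β l).degree < m := by
  simp only [Pe, Polynomial.degree_prod, Polynomial.degree_X_sub_C, Finset.sum_const,
    Finset.card_erase_of_mem (Finset.mem_univ l), Finset.card_univ, Fintype.card_fin]
  have := l.pos
  simp only [nsmul_eq_mul, mul_one]
  exact_mod_cast Nat.sub_lt this one_pos

/-- the parametrisation of weights -/
def Fm {m : ℕ} (α : Fin (m + 1) → ℝ) (y : Fin (m + 1) → ℝ) (j : Fin (m + 1)) : ℝ :=
  y 0 * (∏ i : Fin m, (α j - y i.succ ^ 2)) / Wd α j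

lemma Fm_sum {m : ℕ} {α : Fin (m + 1) → ℝ} (hα : Function.Injective α) (y : Fin (m + 1) → ℝ) :
    ∑ j, Fm α y j = y 0 := by
  have := lag_sum hα (Pp fun i : Fin m => y i.succ ^ 2)
    (by rw [Pp_deg]; exact_mod_cast Nat.lt_succ_self m)
  rw [Pp_coeff] at this
  simp only [Pp_eval] at this
  simp only [Fm, mul_div_assoc]
  rw [← Finset.mul_sum, this, mul_one]

lemma Fm_sec {m : ℕ} {α : Fin (m + 1) → ℝ} (hα : Function.Injective α) (y : Fin (m + 1) → ℝ)
    (l : Fin m) (hl : ∀ j, y l.succ ^ 2 - α j ≠ 0) :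
    ∑ j, Fm α y j / (y l.succ ^ 2 - α j) = 0 := by
  have := lag_sum hα (Pe (fun i : Fin m => y i.succ ^ 2) l)
    ((Pe_deg _ l).trans (by exact_mod_cast Nat.lt_succ_self m))
  rw [Polynomial.coeff_eq_zero_of_degree_lt (Pe_deg _ l)] at this
  simp only [Pe_eval] at this
  have h2 : ∀ j, Fm α y j / (y l.succ ^ 2 - α j) = -(y 0) *
      ((∏ i ∈ Finset.univ.erase l, (α j - y i.succ ^ 2)) / Wd α j) := by
    intro j
    rw [Fm, ← Finset.mul_prod_erase _ _ (Finset.mem_univ l)]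
    have h1 := hl j
    have h3 := Wd_ne hα j
    field_simp
    ring
  simp_rw [h2]
  rw [← Finset.mul_sum, this, mul_zero]

/-- strictly interlacing parameters -/
def Sd {m : ℕ} (a : Fin (m + 1) → ℝ) : Set (Fin (m + 1) → ℝ) :=
  {y | 0 < y 0 ∧ ∀ i : Fin m, a i.castSucc < y i.succ ∧ y i.succ < a i.succ}


lemma a_nn {m : ℕ} {a : Fin (m + 1) → ℝ} (ha : StrictMono a) (h0 : 0 ≤ a 0)
    (j : Fin (m + 1)) : 0 ≤ a j := h0.trans (ha.monotone (Fin.zero_le j))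

lemma sq_mono {m : ℕ} {a : Fin (m + 1) → ℝ} (ha : StrictMono a) (h0 : 0 ≤ a 0)
    : StrictMono (fun j => a j ^ 2) := fun i j h =>
  pow_lt_pow_left₀ (ha h) (a_nn ha h0 i) two_ne_zero

lemma Sd_pos {m : ℕ} {a : Fin (m + 1) → ℝ} (ha : StrictMono a) (h0 : 0 ≤ a 0)
    {y : Fin (m + 1) → ℝ} (hy : y ∈ Sd a) (i : Fin m) : 0 < y i.succ :=
  (a_nn ha h0 _).trans_lt (hy.2 i).1

lemma Sd_sq {m : ℕ} {a : Fin (m + 1) → ℝ} (ha : StrictMono a) (h0 : 0 ≤ a 0)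
    {y : Fin (m + 1) → ℝ} (hy : y ∈ Sd a) (i : Fin m) :
    a i.castSucc ^ 2 < y i.succ ^ 2 ∧ y i.succ ^ 2 < a i.succ ^ 2 :=
  ⟨pow_lt_pow_left₀ (hy.2 i).1 (a_nn ha h0 _) two_ne_zero,
    pow_lt_pow_left₀ (hy.2 i).2 (Sd_pos ha h0 hy i).le two_ne_zero⟩

lemma Sd_ne {m : ℕ} {a : Fin (m + 1) → ℝ} (ha : StrictMono a) (h0 : 0 ≤ a 0)
    {y : Fin (m + 1) → ℝ} (hy : y ∈ Sd a) (i : Fin m) (j : Fin (m + 1)) :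
    y i.succ ^ 2 - a j ^ 2 ≠ 0 := by
  have h := Sd_sq ha h0 hy i
  have hm := (sq_mono ha h0).monotone
  rcases le_or_gt j i.castSucc with h1 | h1
  · have := hm h1; simp only at this; intro h; linarith
  · have := hm (Fin.castSucc_lt_iff_succ_le.1 h1); simp only at this; intro h; linarith

lemma Fm_pos {m : ℕ} {a : Fin (m + 1) → ℝ} (ha : StrictMono a) (h0 : 0 ≤ a 0)
    {y : Fin (m + 1) → ℝ} (hy : y ∈ Sd a) (j : Fin (m + 1)) :
    0 < Fm (fun j => a j ^ 2) y j := by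
  rw [Fm, mul_div_assoc, Wd, ← Finset.prod_div_distrib]
  refine mul_pos hy.1 (Finset.prod_pos fun i _ => ?_)
  have h := Sd_sq ha h0 hy i
  have hm := (sq_mono ha h0).monotone
  have hs := (sq_mono ha h0)
  rcases lt_or_ge i.castSucc j with h1 | h1
  · rw [Fin.succAbove_of_castSucc_lt _ _ h1]
    have h2 := hm (Fin.castSucc_lt_iff_succ_le.1 h1)
    have h3 := hs h1
    simp only at h2 h3
    exact div_pos (by linarith) (by linarith)
  · rw [Fin.succAbove_of_le_castSucc _ _ h1]
    have h2 := hm h1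
    have h3 := hs (h1.trans_lt (Fin.castSucc_lt_succ (i := i)))
    simp only at h2 h3
    exact div_pos_of_neg_of_neg (by linarith) (by linarith)

lemma Sd_strict {m : ℕ} {a : Fin (m + 1) → ℝ} (ha : StrictMono a) (h0 : 0 ≤ a 0)
    {y : Fin (m + 1) → ℝ} (hy : y ∈ Sd a) : StrictMono (fun i : Fin m => y i.succ) := by
  intro i j hij
  have h1 : a i.succ ≤ a j.castSucc := ha.monotone (by
    rw [Fin.le_def]; simp; exact hij)
  have := (hy.2 i).2; have := (hy.2 j).1
  simp only; linarith

lemma Fm_inj {m : ℕ} {a : Fin (m + 1) → ℝ} (ha : StrictMono a) (h0 : 0 ≤ a 0)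
    : Set.InjOn (Fm (fun j => a j ^ 2)) (Sd a) := by
  intro y hy y' hy' h
  have hα := (sq_mono ha h0).injective
  have e0 : y 0 = y' 0 := by rw [← Fm_sum hα y, ← Fm_sum hα y', h]
  have hP : Pp (fun i : Fin m => y i.succ ^ 2) = Pp (fun i : Fin m => y' i.succ ^ 2) := by
    refine Polynomial.eq_of_degrees_lt_of_eval_index_eq (v := fun j => a j ^ 2) Finset.univ hα.injOn
      ?_ ?_ ?_
    · rw [Pp_deg]; simp; exact_mod_cast Nat.lt_succ_self m
    · rw [Pp_deg]; simp; exact_mod_cast Nat.lt_succ_self m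
    · intro j _
      have := congrFun h j
      rw [Fm, Fm, ← e0, div_left_inj' (Wd_ne hα j)] at this
      rw [Pp_eval, Pp_eval]
      exact mul_left_cancel₀ hy.1.ne' this
  have key : ∀ i : Fin m, y i.succ = y' i.succ := by
    intro i
    have h1 : (Pp (fun i : Fin m => y' i.succ ^ 2)).eval (y i.succ ^ 2) = 0 := by
      rw [← hP, Pp_eval]
      exact Finset.prod_eq_zero (Finset.mem_univ i) (sub_self _)
    rw [Pp_eval] at h1
    obtain ⟨l, _, hl⟩ := Finset.prod_eq_zero_iff.1 h1
    have hl : y i.succ = y' l.succ :=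
      (pow_left_inj₀ (Sd_pos ha h0 hy i).le (Sd_pos ha h0 hy' l).le two_ne_zero).1 (sub_eq_zero.1 hl)
    have : i = l := by
      rcases lt_trichotomy i l with h | h | h
      · have h1 : a i.succ ≤ a l.castSucc := ha.monotone (by rw [Fin.le_def]; simp; exact h)
        have := (hy.2 i).2; have := (hy'.2 l).1
        linarith
      · exact h
      · have h1 : a l.succ ≤ a i.castSucc := ha.monotone (by rw [Fin.le_def]; simp; exact h)
        have := (hy.2 i).1; have := (hy'.2 l).2
        linarith
    rw [hl, this]
  ext i
  induction i using Fin.cases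
  · exact e0
  · exact key _

lemma Wd_alt {m : ℕ} {α : Fin (m + 1) → ℝ} (hα : StrictMono α) (l : Fin m) :
    Wd α l.castSucc * Wd α l.succ < 0 := by
  rw [Wd, Wd, ← Finset.prod_mul_distrib, ← Finset.mul_prod_erase _ _ (Finset.mem_univ l)]
  refine mul_neg_of_neg_of_pos ?_ (Finset.prod_pos fun i hi => ?_)
  · have := hα (Fin.castSucc_lt_succ (i := l))
    simp
    exact mul_neg_of_neg_of_pos (by linarith) (by linarith)
  · rcases lt_or_gt_of_ne (Finset.ne_of_mem_erase hi) with h | h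
    · rw [Fin.succAbove_of_castSucc_lt _ _ (by simpa using h),
        Fin.succAbove_of_castSucc_lt _ _ (by rw [Fin.lt_def]; simp; exact h.le)]
      have h1 : α i.castSucc < α l.castSucc := hα (by simpa using h)
      have h2 : α i.castSucc < α l.succ := h1.trans (hα (Fin.castSucc_lt_succ (i := l)))
      exact mul_pos (by linarith) (by linarith)
    · rw [Fin.succAbove_of_le_castSucc _ _ (by simpa using h.le),
        Fin.succAbove_of_le_castSucc _ _ (by rw [Fin.le_def]; simp; exact h)]
      have h1 : α l.succ < α i.succ := hα (by simpa using h)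
      have h2 : α l.castSucc < α i.succ := (hα (Fin.castSucc_lt_succ (i := l))).trans h1
      exact mul_pos_of_neg_of_neg (by linarith) (by linarith)

lemma Fm_image {m : ℕ} {a : Fin (m + 1) → ℝ} (ha : StrictMono a) (h0 : 0 ≤ a 0)
    : Fm (fun j => a j ^ 2) '' (Sd a) = {r | ∀ j, 0 < r j} := by
  apply Set.Subset.antisymm
  · rintro _ ⟨y, hy, rfl⟩
    exact fun j => Fm_pos ha h0 hy j
  intro r hr
  set α : Fin (m + 1) → ℝ := fun j => a j ^ 2 with hαd
  have hs : StrictMono α := sq_mono ha h0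
  have hα := hs.injective
  have hσ : 0 < ∑ j, r j := Finset.sum_pos (fun j _ => hr j) ⟨0, Finset.mem_univ _⟩
  set σ := ∑ j, r j with hσd
  set P := Lagrange.interpolate Finset.univ α (fun j => r j / σ * Wd α j) with hP
  have hPe : ∀ j, P.eval (α j) = r j / σ * Wd α j := fun j =>
    Lagrange.eval_interpolate_at_node _ hα.injOn (Finset.mem_univ j)
  have hPd : P.degree < (m + 1 : ℕ) := by
    have h := Lagrange.degree_interpolate_lt (s := Finset.univ) (fun j => r j / σ * Wd α j) hα.injOn
    rwa [Finset.card_univ, Fintype.card_fin] at h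
  have hPc : P.coeff m = 1 := by
    rw [← lag_sum hα P hPd]
    simp_rw [hPe]
    have : ∀ j, r j / σ * Wd α j / Wd α j = r j / σ := fun j => by
      rw [mul_div_assoc, div_self (Wd_ne hα j), mul_one]
    simp_rw [this]
    rw [← Finset.sum_div, div_self hσ.ne']
  have hroot : ∀ l : Fin m, ∃ β, (α l.castSucc < β ∧ β < α l.succ) ∧ P.eval β = 0 := by
    intro l
    have h1 : P.eval (α l.castSucc) * P.eval (α l.succ) < 0 := by
      rw [hPe, hPe]
      have : r l.castSucc / σ * Wd α l.castSucc * (r l.succ / σ * Wd α l.succ) =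
        (r l.castSucc / σ * (r l.succ / σ)) * (Wd α l.castSucc * Wd α l.succ) := by ring
      rw [this]
      exact mul_neg_of_pos_of_neg (mul_pos (div_pos (hr _) hσ) (div_pos (hr _) hσ)) (Wd_alt hs l)
    have h2 : α l.castSucc ≤ α l.succ := (hs (Fin.castSucc_lt_succ (i := l))).le
    rcases mul_neg_iff.1 h1 with ⟨h3, h4⟩ | ⟨h3, h4⟩
    · obtain ⟨β, hβ, h⟩ := intermediate_value_Ioo' h2 (f := fun t => P.eval t)
        P.continuous.continuousOn ⟨h4, h3⟩
      exact ⟨β, hβ, h⟩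
    · obtain ⟨β, hβ, h⟩ := intermediate_value_Ioo h2 (f := fun t => P.eval t)
        P.continuous.continuousOn ⟨h3, h4⟩
      exact ⟨β, hβ, h⟩
  choose β hβ hβ0 using hroot
  have hβs : StrictMono β := by
    intro i j hij
    have h1 : α i.succ ≤ α j.castSucc := hs.monotone (by rw [Fin.le_def]; simp; exact hij)
    have := (hβ i).2; have := (hβ j).1
    linarith
  have hPP : P = Pp β := by
    refine Polynomial.eq_of_degree_sub_lt_of_eval_index_eq (v := β) Finset.univ hβs.injective.injOn
      ?_ ?_
    · rw [Finset.card_univ, Fintype.card_fin, Polynomial.degree_lt_iff_coeff_zero]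
      intro k hk
      rcases hk.eq_or_lt with h | h
      · rw [← h, Polynomial.coeff_sub, hPc, Pp_coeff, sub_self]
      · rw [Polynomial.coeff_sub, Polynomial.coeff_eq_zero_of_degree_lt (p := P) (hPd.trans_le (by exact_mod_cast h)),
          Polynomial.coeff_eq_zero_of_degree_lt (p := Pp β) (by rw [Pp_deg]; exact_mod_cast h), sub_self]
    · intro i _
      rw [hβ0, Pp_eval]
      exact (Finset.prod_eq_zero (Finset.mem_univ i) (sub_self _)).symm
  have hβp : ∀ i, 0 < β i := fun i => (sq_nonneg _).trans_lt (hβ i).1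
  refine ⟨Fin.cons σ (fun i => Real.sqrt (β i)), ⟨by simpa using hσ, fun i => ?_⟩, ?_⟩
  · simp only [Fin.cons_succ]
    exact ⟨Real.lt_sqrt_of_sq_lt (hβ i).1, (Real.sqrt_lt' ((a_nn ha h0 _).trans_lt
      (ha (Fin.castSucc_lt_succ (i := i))))).2 (hβ i).2⟩
  · ext j
    simp only [Fm, Fin.cons_zero, Fin.cons_succ]
    simp_rw [Real.sq_sqrt (hβp _).le]
    rw [← Pp_eval, ← hPP, hPe]
    have := Wd_ne hα j
    field_simp


lemma vdm_eq {m : ℕ} (x : Fin m → ℝ) : vdm x = (vandermonde x).det := by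
  rw [det_vandermonde, vdm, Finset.prod_filter, ← Finset.univ_product_univ, Finset.prod_product]
  refine Finset.prod_congr rfl fun i _ => ?_
  rw [← Finset.prod_filter]
  refine Finset.prod_congr ?_ fun _ _ => rfl
  ext j; simp

lemma vdm_pos {m : ℕ} {x : Fin m → ℝ} (h : StrictMono x) : 0 < vdm x :=
  Finset.prod_pos fun p hp => sub_pos.2 (h (by simpa using hp))

lemma abs_prod_erase {m : ℕ} (x : Fin m → ℝ) :
    |∏ j, ∏ i ∈ Finset.univ.erase j, (x j - x i)| = |vdm x| ^ 2 := by
  have h := Finset.prod_prod_Ioi_mul_eq_prod_prod_off_diag (fun i j : Fin m => |x i - x j|)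
  rw [vdm_eq, det_vandermonde, Finset.abs_prod, Finset.abs_prod]
  simp_rw [Finset.abs_prod]
  have e : ∀ i : Fin m, Finset.univ.erase i = ({i}ᶜ : Finset (Fin m)) := fun i => by ext; simp
  calc ∏ j, ∏ i ∈ Finset.univ.erase j, |x j - x i| = ∏ j, ∏ i ∈ {j}ᶜ, |x i - x j| := by
        simp_rw [e, abs_sub_comm]
    _ = _ := by
        rw [← h, ← Finset.prod_pow]
        refine Finset.prod_congr rfl fun i _ => ?_
        rw [← Finset.prod_pow]
        refine Finset.prod_congr rfl fun j _ => ?_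
        rw [abs_sub_comm (x i), sq]

def pol {m : ℕ} (β : Fin m → ℝ) : Fin (m + 1) → Polynomial ℝ := Fin.cons (Pp β) (Pe β)

lemma pol_deg {m : ℕ} (β : Fin m → ℝ) (c : Fin (m + 1)) : (pol β c).natDegree < m + 1 := by
  have : (pol β c).degree < (m + 1 : ℕ) := by
    induction c using Fin.cases
    · simp only [pol, Fin.cons_zero, Pp_deg]; exact_mod_cast Nat.lt_succ_self m
    · simp only [pol, Fin.cons_succ]
      exact (Pe_deg _ _).trans (by exact_mod_cast Nat.lt_succ_self m)
  by_cases h : pol β c = 0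
  · rw [h]; simp
  · exact (Polynomial.natDegree_lt_iff_degree_lt h).2 this

lemma pol_det_fac {m : ℕ} (β : Fin m → ℝ) (γ : Fin (m + 1) → ℝ) :
    (Matrix.of fun j c => (pol β c).eval (γ j)).det =
      vdm γ * (Matrix.of fun (l : Fin (m + 1)) c => (pol β c).coeff l).det := by
  rw [vdm_eq, ← det_mul]
  congr 1
  ext j c
  rw [of_apply, Matrix.mul_apply, Polynomial.eval_eq_sum_range' (pol_deg β c),
    ← Fin.sum_univ_eq_sum_range (fun i => (pol β c).coeff i * γ j ^ i)]
  refine Finset.sum_congr rfl fun l _ => ?_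
  rw [vandermonde_apply, of_apply, mul_comm]

lemma vdm_cons {m : ℕ} (τ : ℝ) (β : Fin m → ℝ) :
    vdm (Fin.cons τ β : Fin (m + 1) → ℝ) = (∏ i, (β i - τ)) * vdm β := by
  rw [vdm_eq, vdm_eq, det_vandermonde, det_vandermonde, Fin.prod_univ_succ]
  congr 1
  · rw [Fin.prod_Ioi_zero]; simp
  · refine Finset.prod_congr rfl fun i _ => ?_
    rw [Fin.prod_Ioi_succ]; simp

lemma pol_coeff_det {m : ℕ} (β : Fin m → ℝ) (hβ : Function.Injective β) :
    |(Matrix.of fun (l : Fin (m + 1)) c => (pol β c).coeff l).det| = |vdm β| := by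
  obtain ⟨τ, hτ⟩ := Infinite.exists_notMem_finset (Finset.univ.image β)
  have hτ' : ∀ i, τ - β i ≠ 0 := fun i h => hτ (by
    rw [sub_eq_zero.1 h]; exact Finset.mem_image_of_mem _ (Finset.mem_univ i))
  have h1 := pol_det_fac β (Fin.cons τ β)
  have hv : vdm β ≠ 0 := by rw [vdm_eq]; exact det_vandermonde_ne_zero_iff.2 hβ
  rw [det_of_isUpperTriangular, Fin.prod_univ_succ] at h1
  · simp only [of_apply, pol, Fin.cons_zero, Fin.cons_succ, Pp_eval, Pe_eval, vdm_cons] at h1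
    have h2 := congrArg abs h1
    rw [abs_mul, abs_mul, abs_mul, abs_prod_erase] at h2
    have h3 : |∏ i, (β i - τ)| = |∏ i, (τ - β i)| := by
      rw [Finset.abs_prod, Finset.abs_prod]; simp_rw [abs_sub_comm]
    have h4 : |∏ i, (τ - β i)| ≠ 0 := abs_ne_zero.2 (Finset.prod_ne_zero_iff.2 fun i _ => hτ' i)
    rw [h3] at h2
    have h5 : |vdm β| ≠ 0 := abs_ne_zero.2 hv
    have h6 : |∏ i, (τ - β i)| * |vdm β| * |vdm β| = |∏ i, (τ - β i)| * |vdm β| *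
      |(Matrix.of fun (l : Fin (m + 1)) c => (pol β c).coeff l).det| := by
      rw [mul_assoc, ← sq]; exact h2
    exact (mul_left_cancel₀ (mul_ne_zero h4 h5) h6).symm
  · intro i j hij
    simp only [id] at hij
    rw [of_apply]
    induction i using Fin.cases with
    | zero => exact absurd hij (Fin.not_lt_zero _)
    | succ i =>
      induction j using Fin.cases with
      | zero =>
        simp only [pol, Fin.cons_zero, Fin.cons_succ, Pp_eval]
        exact Finset.prod_eq_zero (Finset.mem_univ i) (sub_self _)
      | succ j =>
        simp only [pol, Fin.cons_succ, Pe_eval]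
        refine Finset.prod_eq_zero (i := i) ?_ (sub_self _)
        simp only [Fin.succ_lt_succ_iff] at hij
        simp [hij.ne']

/-- derivative of Fm -/
def Fd {m : ℕ} (α : Fin (m + 1) → ℝ) (y : Fin (m + 1) → ℝ) :
    (Fin (m + 1) → ℝ) →L[ℝ] (Fin (m + 1) → ℝ) :=
  LinearMap.toContinuousLinearMap (Matrix.toLin' (Matrix.of fun j c =>
    (Wd α j)⁻¹ * ((Fin.cons 1 (fun i : Fin m => -(2 * y 0 * y i.succ)) : Fin (m + 1) → ℝ) c *
      (pol (fun i : Fin m => y i.succ ^ 2) c).eval (α j))))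

lemma Fd_det {m : ℕ} {α : Fin (m + 1) → ℝ} (hα : StrictMono α) (y : Fin (m + 1) → ℝ) (h0 : 0 < y 0)
    (hy : ∀ i : Fin m, 0 < y i.succ) (hs : StrictMono fun i : Fin m => y i.succ ^ 2) :
    |(Fd α y).det| = y 0 ^ m * (∏ i : Fin m, 2 * y i.succ) *
      (vdm (fun i : Fin m => y i.succ ^ 2) / vdm α) := by
  have hd : (Fd α y).det = (∏ j, (Wd α j)⁻¹) *
      ((∏ c, (Fin.cons 1 (fun i : Fin m => -(2 * y 0 * y i.succ)) : Fin (m + 1) → ℝ) c) *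
      (Matrix.of (fun j c => (pol (fun i : Fin m => y i.succ ^ 2) c).eval (α j))).det) := by
    rw [Fd, LinearMap.det_toContinuousLinearMap, LinearMap.det_toLin', ← det_mul_row, ← det_mul_column]
    rfl
  rw [hd, pol_det_fac, abs_mul, abs_mul, abs_mul, pol_coeff_det _ hs.injective,
    Finset.prod_inv_distrib, abs_inv]
  have h1 : |∏ j, Wd α j| = vdm α ^ 2 := by
    simp_rw [← Wd_erase]
    rw [abs_prod_erase, abs_of_pos (vdm_pos hα)]
  rw [h1, abs_of_pos (vdm_pos hα), abs_of_pos (vdm_pos hs), Fin.prod_univ_succ]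
  simp only [Fin.cons_zero, Fin.cons_succ, one_mul]
  have h2 : |∏ i : Fin m, -(2 * y 0 * y i.succ)| = y 0 ^ m * ∏ i : Fin m, 2 * y i.succ := by
    rw [Finset.abs_prod]
    have : ∀ i : Fin m, |-(2 * y 0 * y i.succ)| = y 0 * (2 * y i.succ) := fun i => by
      rw [abs_neg, abs_of_pos (mul_pos (mul_pos two_pos h0) (hy i))]; ring
    simp_rw [this]
    rw [Finset.prod_mul_distrib]; simp
  rw [h2]
  have := (vdm_pos hα).ne'
  field_simp

lemma Fm_deriv {m : ℕ} (α : Fin (m + 1) → ℝ) (y : Fin (m + 1) → ℝ) :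
    HasFDerivAt (Fm α) (Fd α y) y := by
  rw [hasFDerivAt_pi']
  intro j
  have h1 : ∀ i ∈ (Finset.univ : Finset (Fin m)), HasFDerivAt
      (fun y : Fin (m + 1) → ℝ => α j - y i.succ ^ 2)
      (-((2 * y i.succ) • ContinuousLinearMap.proj (R := ℝ) (φ := fun _ : Fin (m + 1) => ℝ) i.succ)) y := by
    intro i _
    have := ((hasFDerivAt_apply (𝕜 := ℝ) (F' := fun _ : Fin (m + 1) => ℝ) i.succ y).pow 2).const_sub (α j)
    refine this.congr_fderiv ?_
    ext v
    simp
  have h2 := HasFDerivAt.finsetProd h1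
  have h3 := ((hasFDerivAt_apply (𝕜 := ℝ) (F' := fun _ : Fin (m + 1) => ℝ) 0 y).mul h2).mul_const (Wd α j)⁻¹
  refine HasFDerivAt.congr_fderiv (f := fun y => Fm α y j) h3 ?_
  ext v
  simp only [Fd, ContinuousLinearMap.coe_comp, Function.comp, ContinuousLinearMap.proj_apply,
    LinearMap.coe_toContinuousLinearMap', toLin'_apply, mulVec, dotProduct, of_apply]
  rw [Fin.sum_univ_succ]
  simp [pol, Pp_eval, Pe_eval, Finset.mul_sum]
  rw [add_comm]
  congr 1
  · ring
  · rw [neg_inj]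
    refine Finset.sum_congr rfl fun i _ => ?_
    ring

lemma Sd_meas {m : ℕ} (a : Fin (m + 1) → ℝ) : MeasurableSet (Sd a) := by
  have : Sd a = {y | 0 < y 0} ∩ ⋂ i : Fin m, ({y | a i.castSucc < y i.succ} ∩ {y | y i.succ < a i.succ}) := by
    ext y; simp [Sd]
  rw [this]
  refine (measurableSet_lt measurable_const (measurable_pi_apply 0)).inter
    (MeasurableSet.iInter fun i => ?_)
  exact (measurableSet_lt measurable_const (measurable_pi_apply i.succ)).inter
    (measurableSet_lt (measurable_pi_apply i.succ) measurable_const)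

lemma lemR {m : ℕ} {a : Fin (m + 1) → ℝ} (ha : StrictMono a) (h0 : 0 ≤ a 0)
    (f : (Fin (m + 1) → ℝ) → ℝ≥0∞) :
    ∫⁻ r in {r : Fin (m + 1) → ℝ | ∀ j, 0 < r j}, f r =
      ∫⁻ y in Sd a, ENNReal.ofReal (y 0 ^ m * (∏ i : Fin m, 2 * y i.succ) *
        (vdm (fun i : Fin m => y i.succ ^ 2) / vdm (fun j => a j ^ 2))) *
          f (Fm (fun j => a j ^ 2) y) := by
  rw [← Fm_image ha h0, lintegral_image_eq_lintegral_abs_det_fderiv_mul volume (Sd_meas a)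
    (fun y _ => (Fm_deriv _ y).hasFDerivWithinAt) (Fm_inj ha h0)]
  refine setLIntegral_congr_fun (Sd_meas a) fun y hy => ?_
  rw [Fd_det (sq_mono ha h0) y hy.1 (Sd_pos ha h0 hy)]
  intro i j hij
  exact pow_lt_pow_left₀ (Sd_strict ha h0 hy hij) (Sd_pos ha h0 hy i).le two_ne_zero


def orth (m : ℕ) : Set (Fin m → ℝ) := {r | ∀ j, 0 < r j}

lemma orth_meas (m : ℕ) : MeasurableSet (orth m) := by
  have : orth m = ⋂ j, {r | 0 < r j} := by ext; simp [orth]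
  rw [this]
  exact MeasurableSet.iInter fun j => measurableSet_lt measurable_const (measurable_pi_apply j)

lemma measurable_cons {n : ℕ} :
    Measurable (fun p : ℝ × (Fin n → ℝ) => (Fin.cons p.1 p.2 : Fin (n + 1) → ℝ)) := by
  refine measurable_pi_lambda _ fun i => ?_
  induction i using Fin.cases
  · simpa using measurable_fst
  · rename_i i
    simp only [Fin.cons_succ]
    exact (measurable_pi_apply i).comp measurable_snd

lemma measurable_cons2 {n : ℕ} (x : ℝ) :
    Measurable (fun w : (Fin n → ℝ) => (Fin.cons x w : Fin (n + 1) → ℝ)) :=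
  measurable_cons.comp (measurable_const.prodMk measurable_id)

lemma lint_cons {n : ℕ} (g : (Fin (n + 1) → ℝ) → ℝ≥0∞) (hg : Measurable g) :
    ∫⁻ v, g v = ∫⁻ x : ℝ, ∫⁻ w : Fin n → ℝ, g (Fin.cons x w) := by
  have h := (volume_preserving_piFinSuccAbove (fun _ : Fin (n + 1) => ℝ) 0).symm
  rw [← h.lintegral_comp hg, Measure.volume_eq_prod, lintegral_prod]
  · simp [MeasurableEquiv.piFinSuccAbove, Fin.insertNthEquiv]
  · exact (hg.comp (MeasurableEquiv.measurable _)).aemeasurable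

lemma lint_orth_cons {n : ℕ} (g : (Fin (n + 1) → ℝ) → ℝ≥0∞) (hg : Measurable g) :
    ∫⁻ v in orth (n + 1), g v =
      ∫⁻ x in Set.Ioi (0:ℝ), ∫⁻ w in orth n, g (Fin.cons x w) := by
  rw [← lintegral_indicator (orth_meas _), lint_cons _ (hg.indicator (orth_meas _)),
    ← lintegral_indicator measurableSet_Ioi]
  refine lintegral_congr fun x => ?_
  by_cases hx : x ∈ Set.Ioi (0:ℝ)
  · rw [Set.indicator_of_mem hx, ← lintegral_indicator (orth_meas _)]
    refine lintegral_congr fun w => ?_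
    by_cases hw : w ∈ orth n
    · rw [Set.indicator_of_mem hw, Set.indicator_of_mem]
      intro j
      induction j using Fin.cases
      · exact hx
      · simpa using hw _
    · rw [Set.indicator_of_notMem hw, Set.indicator_of_notMem]
      exact fun h => hw fun j => by simpa using h j.succ
  · rw [Set.indicator_of_notMem hx]
    rw [lintegral_eq_zero_iff' ]
    · refine Filter.Eventually.of_forall fun w => ?_
      exact Set.indicator_of_notMem (fun h => hx (by simpa using h 0)) _
    · exact ((hg.indicator (orth_meas _)).comp (measurable_cons2 x)).aemeasurable

lemma sq1 (g : ℝ → ℝ≥0∞) :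
    ∫⁻ t in Set.Ioi (0:ℝ), g t = ∫⁻ r in Set.Ioi (0:ℝ), ENNReal.ofReal (2 * r) * g (r ^ 2) := by
  have him : (fun r : ℝ => r ^ 2) '' Set.Ioi 0 = Set.Ioi 0 := by
    ext t; constructor
    · rintro ⟨r, hr, rfl⟩; exact pow_pos (Set.mem_Ioi.1 hr) 2
    · intro ht; exact ⟨Real.sqrt t, Real.sqrt_pos.2 ht, Real.sq_sqrt (le_of_lt ht)⟩
  conv_lhs => rw [← him]
  rw [lintegral_image_eq_lintegral_abs_deriv_mul (f' := fun r => 2 * r) measurableSet_Ioi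
    (fun r _ => by simpa using (hasDerivAt_pow 2 r).hasDerivWithinAt)]
  · refine setLIntegral_congr_fun measurableSet_Ioi fun r hr => ?_
    rw [abs_of_pos (mul_pos two_pos (Set.mem_Ioi.1 hr))]
  · intro x hx y hy h
    exact (pow_left_inj₀ (le_of_lt hx) (le_of_lt hy) two_ne_zero).1 h

lemma rad1 (g : ℝ → ℝ≥0∞) (hg : Measurable g) :
    ∫⁻ x : ℝ, g (x ^ 2) = ∫⁻ t in Set.Ioi (0:ℝ), ENNReal.ofReal (Real.sqrt t)⁻¹ * g t := by
  rw [sq1]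
  have h1 : ∫⁻ x : ℝ, g (x ^ 2) = 2 * ∫⁻ x in Set.Ioi (0:ℝ), g (x ^ 2) := by
    have hI : ∫⁻ x in Set.Iic (0:ℝ), g (x ^ 2) = ∫⁻ x in Set.Ioi (0:ℝ), g (x ^ 2) := by
      rw [setLIntegral_congr Iio_ae_eq_Iic.symm]
      have := (Measure.measurePreserving_neg (volume : Measure ℝ)).setLIntegral_comp_preimage
        (s := Set.Ioi 0) measurableSet_Ioi (f := fun x => g (x ^ 2)) (hg.comp (measurable_id.pow_const 2))
      rw [← this]
      simp
    rw [← lintegral_add_compl _ (measurableSet_Ioi (a := (0:ℝ))), Set.compl_Ioi, hI, two_mul]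
  have hg2 : Measurable fun x : ℝ => g (x ^ 2) := hg.comp (measurable_id.pow_const 2)
  rw [h1, ← lintegral_const_mul _ hg2]
  refine setLIntegral_congr_fun measurableSet_Ioi fun r hr => ?_
  have hr : 0 < r := hr
  rw [Real.sqrt_sq hr.le, ← mul_assoc, ← ENNReal.ofReal_mul (by positivity)]
  rw [mul_assoc, mul_inv_cancel₀ hr.ne']
  simp

lemma rad2 (g : ℝ → ℝ≥0∞) (hg : Measurable g) :
    ∫⁻ x : ℝ, ∫⁻ y : ℝ, g (x ^ 2 + y ^ 2) = ENNReal.ofReal Real.pi * ∫⁻ t in Set.Ioi (0:ℝ), g t := by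
  have hm : Measurable (fun p : ℝ × ℝ => g (p.1 ^ 2 + p.2 ^ 2)) :=
    hg.comp ((measurable_fst.pow_const 2).add (measurable_snd.pow_const 2))
  have h := lintegral_comp_polarCoord_symm (fun p : ℝ × ℝ => g (p.1 ^ 2 + p.2 ^ 2))
  rw [Measure.volume_eq_prod, lintegral_prod _ hm.aemeasurable] at h
  rw [← h, sq1]
  simp only [polarCoord_target, polarCoord_symm_apply, smul_eq_mul]
  rw [← Measure.prod_restrict, lintegral_prod]
  · have : ∀ r θ : ℝ, (r * Real.cos θ) ^ 2 + (r * Real.sin θ) ^ 2 = r ^ 2 := fun r θ => by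
      have := Real.sin_sq_add_cos_sq θ
      linear_combination r ^ 2 * this
    simp only [this, lintegral_const, Measure.restrict_apply_univ, Real.volume_Ioo]
    rw [← lintegral_const_mul]
    · refine setLIntegral_congr_fun measurableSet_Ioi fun r hr => ?_
      have hr : 0 < r := hr
      rw [← mul_assoc, ← ENNReal.ofReal_mul Real.pi_pos.le, mul_right_comm, ← ENNReal.ofReal_mul hr.le]
      congr 2; ring
    · exact (ENNReal.measurable_ofReal.comp (measurable_id.const_mul 2)).mul
        (hg.comp (measurable_id.pow_const 2))
  · refine AEMeasurable.mul (by fun_prop) ?_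
    exact (hg.comp (by fun_prop)).aemeasurable

def qf {m : ℕ} (v : Fin (2 * m) → ℝ) (j : Fin m) : ℝ :=
  v ⟨2 * j.val, by have := j.isLt; omega⟩ ^ 2 + v ⟨2 * j.val + 1, by have := j.isLt; omega⟩ ^ 2

lemma measurable_qf {m : ℕ} : Measurable (qf (m := m)) := by
  refine measurable_pi_lambda _ fun j => ?_
  exact ((measurable_pi_apply _).pow_const 2).add ((measurable_pi_apply _).pow_const 2)

lemma qf_cons {m : ℕ} (x y : ℝ) (w : Fin (2 * m) → ℝ) :
    qf (m := m + 1) (Fin.cons x (Fin.cons y w : Fin (2 * m + 1) → ℝ) : Fin (2 * m + 1 + 1) → ℝ) =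
      Fin.cons (x ^ 2 + y ^ 2) (qf w) := by
  ext j
  induction j using Fin.cases
  · rfl
  · rfl

lemma radE (m : ℕ) (f : (Fin m → ℝ) → ℝ≥0∞) (hf : Measurable f) :
    ∫⁻ v : Fin (2 * m) → ℝ, f (qf v) = ENNReal.ofReal Real.pi ^ m * ∫⁻ r in orth m, f r := by
  induction m with
  | zero =>
    have : orth 0 = Set.univ := by ext; simp [orth]
    rw [this, Measure.restrict_univ]
    have e : ∀ r : Fin 0 → ℝ, r = ![] := fun r => Subsingleton.elim _ _
    simp only [pow_zero, one_mul]
    have h1 : ∀ v : Fin (2 * 0) → ℝ, f (qf v) = f ![] := fun v => by rw [e (qf v)]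
    have h2 : ∀ v : Fin 0 → ℝ, f v = f ![] := fun v => by rw [e v]
    simp_rw [h1, h2]
  | succ m ih =>
    have h1 : Measurable fun v : Fin (2 * m + 1 + 1) → ℝ => f (qf (m := m + 1) v) :=
      hf.comp measurable_qf
    have h2 := lint_cons (n := 2 * m + 1) (fun v => f (qf (m := m + 1) v)) h1
    refine Eq.trans h2 ?_
    have h3 : ∀ x : ℝ, ∫⁻ w : Fin (2 * m + 1) → ℝ, f (qf (m := m + 1) (Fin.cons x w : Fin (2 * m + 1 + 1) → ℝ)) =
        ∫⁻ y : ℝ, ENNReal.ofReal Real.pi ^ m * ∫⁻ r in orth m, f (Fin.cons (x ^ 2 + y ^ 2) r) := by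
      intro x
      rw [lint_cons (fun w : Fin (2 * m + 1) → ℝ => f (qf (m := m + 1) (Fin.cons x w : Fin (2 * m + 1 + 1) → ℝ))) (h1.comp (measurable_cons2 x))]
      refine lintegral_congr fun y => ?_
      rw [← ih (fun r => f (Fin.cons (x ^ 2 + y ^ 2) r)) (hf.comp (measurable_cons2 _))]
      refine lintegral_congr fun w => ?_
      rw [qf_cons]
    simp_rw [h3]
    have h4 : Measurable fun t : ℝ => ∫⁻ r in orth m, f (Fin.cons t r) :=
      (hf.comp measurable_cons).lintegral_prod_right'
    rw [rad2 (fun t => ENNReal.ofReal Real.pi ^ m * ∫⁻ r in orth m, f (Fin.cons t r)) (h4.const_mul _),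
      lintegral_const_mul _ h4, ← lint_orth_cons _ hf, pow_succ]
    ring

lemma radO (m : ℕ) (f : (Fin (m + 1) → ℝ) → ℝ≥0∞) (hf : Measurable f) :
    ∫⁻ v : Fin (2 * m + 1) → ℝ, f (Fin.cons (v 0 ^ 2) (qf (fun i : Fin (2 * m) => v i.succ))) =
      ENNReal.ofReal Real.pi ^ m *
        ∫⁻ r in orth (m + 1), ENNReal.ofReal (Real.sqrt (r 0))⁻¹ * f r := by
  have hm : Measurable fun v : Fin (2 * m + 1) → ℝ =>
      f (Fin.cons (v 0 ^ 2) (qf (fun i : Fin (2 * m) => v i.succ))) := by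
    have h1 : Measurable fun v : Fin (2 * m + 1) → ℝ =>
        (v 0 ^ 2, qf (fun i : Fin (2 * m) => v i.succ)) := by
      refine ((measurable_pi_apply 0).pow_const 2).prodMk (measurable_qf.comp ?_)
      exact measurable_pi_lambda _ fun i => measurable_pi_apply _
    exact hf.comp (measurable_cons.comp h1)
  rw [lint_cons _ hm]
  have h3 : ∀ x : ℝ, ∫⁻ w : Fin (2 * m) → ℝ,
      f (Fin.cons ((Fin.cons x w : Fin (2 * m + 1) → ℝ) 0 ^ 2)
        (qf (fun i : Fin (2 * m) => (Fin.cons x w : Fin (2 * m + 1) → ℝ) i.succ))) =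
      ENNReal.ofReal Real.pi ^ m * ∫⁻ r in orth m, f (Fin.cons (x ^ 2) r) := by
    intro x
    simp only [Fin.cons_zero, Fin.cons_succ]
    exact radE m (fun r => f (Fin.cons (x ^ 2) r)) (hf.comp (measurable_cons2 _))
  simp_rw [h3]
  have h4 : Measurable fun t : ℝ => ∫⁻ r in orth m, f (Fin.cons t r) :=
    (hf.comp measurable_cons).lintegral_prod_right'
  have h5 : Measurable fun r : Fin (m + 1) → ℝ => ENNReal.ofReal (Real.sqrt (r 0))⁻¹ * f r := by
    refine Measurable.mul ?_ hf
    exact ENNReal.measurable_ofReal.comp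
      ((Real.continuous_sqrt.measurable.comp (measurable_pi_apply 0)).inv)
  have h6 : Measurable fun t : ℝ => ENNReal.ofReal (Real.sqrt t)⁻¹ :=
    ENNReal.measurable_ofReal.comp (Real.continuous_sqrt.measurable.inv)
  rw [rad1 (fun t => ENNReal.ofReal Real.pi ^ m * ∫⁻ r in orth m, f (Fin.cons t r)) (h4.const_mul _),
    lint_orth_cons _ h5, ← lintegral_const_mul]
  · refine lintegral_congr fun t => ?_
    simp only [Fin.cons_zero]
    have h7 : Measurable fun w : Fin m → ℝ => f (Fin.cons t w) := hf.comp (measurable_cons2 t)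
    rw [lintegral_const_mul _ h7]
    ring
  · exact ((h5.comp measurable_cons).lintegral_prod_right')


lemma sum_blk {n : ℕ} (g : Fin (2 * n) → ℝ) :
    ∑ i, g i = ∑ j : Fin n, (g ⟨2 * j.val, by have := j.isLt; omega⟩ +
      g ⟨2 * j.val + 1, by have := j.isLt; omega⟩) := by
  induction n with
  | zero => rfl
  | succ n ih =>
    rw [Fin.sum_univ_succ (n := n)]
    have h := Fin.sum_univ_succ (n := 2 * n + 1) g
    refine h.trans ?_
    rw [Fin.sum_univ_succ, ← add_assoc]
    congr 1
    exact ih (fun i => g i.succ.succ)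

lemma gauss_norm (N : ℕ) : ∫⁻ v : Fin N → ℝ, gw v = ENNReal.ofReal (Real.sqrt Real.pi) ^ N := by
  induction N with
  | zero =>
    have : ∀ v : Fin 0 → ℝ, gw v = 1 := fun v => by simp [gw]
    simp [this, volume_pi]
  | succ N ih =>
    rw [lint_cons _ measurable_gw]
    have h1 : ∀ (x : ℝ) (w : Fin N → ℝ), gw (Fin.cons x w : Fin (N + 1) → ℝ) =
        ENNReal.ofReal (Real.exp (-x ^ 2)) * gw w := by
      intro x w
      rw [gw, gw, ← ENNReal.ofReal_mul (Real.exp_nonneg _), ← Real.exp_add]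
      congr 2
      simp only [dotProduct]
      rw [Fin.sum_univ_succ]
      simp; ring
    simp_rw [h1]
    have h2 : ∀ x : ℝ, ∫⁻ w : Fin N → ℝ, ENNReal.ofReal (Real.exp (-x ^ 2)) * gw w =
        ENNReal.ofReal (Real.exp (-x ^ 2)) * ENNReal.ofReal (Real.sqrt Real.pi) ^ N := by
      intro x
      rw [lintegral_const_mul _ measurable_gw, ih]
    simp_rw [h2]
    rw [lintegral_mul_const _ (by fun_prop), pow_succ, mul_comm]
    congr 1
    have h3 := integral_gaussian 1
    have h4 := integrable_exp_neg_mul_sq (b := 1) one_pos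
    rw [← ofReal_integral_eq_lintegral_ofReal]
    · congr 1
      simpa using h3
    · simpa using h4
    · exact Filter.Eventually.of_forall fun x => (Real.exp_nonneg _)

/-- generic rank one step -/
lemma stepG {N m : ℕ} {a : Fin (m + 1) → ℝ} (ha : StrictMono a) (h0 : 0 ≤ a 0)
    (D : Matrix (Fin (N + 1)) (Fin (N + 1)) ℝ) (hD : Dᵀ = -D) (d : Fin (N + 1) → ℝ)
    (hD2 : D * D = -diagonal d) (hd : ∀ i, ∃ j, d i = a j ^ 2)
    (ρ : (Fin (N + 1) → ℝ) → Fin (m + 1) → ℝ) (hsum : ∀ v, v ⬝ᵥ v = ∑ j, ρ v j)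
    (hsec : ∀ v t, ∑ i, v i ^ 2 / (t - d i) = ∑ j, ρ v j / (t - a j ^ 2))
    (sec : (Fin (m + 1) → ℝ) → Fin (N + 1) → ℝ) (hsm : Measurable sec)
    (hrs : ∀ r ∈ orth (m + 1), ρ (sec r) = r)
    (hae : ∀ᵐ v, ρ v ∈ orth (m + 1))
    (c : ℝ≥0∞) (wt : (Fin (m + 1) → ℝ) → ℝ≥0∞)
    (hrad : ∀ f : (Fin (m + 1) → ℝ) → ℝ≥0∞, Measurable f →
      ∫⁻ v, f (ρ v) = c * ∫⁻ r in orth (m + 1), wt r * f r)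
    (T : (Fin m → ℝ) → Matrix (Fin N) (Fin N) ℝ)
    (nf : ∀ (C : Matrix (Fin N) (Fin N) ℝ), Cᵀ = -C → ∀ b : Fin m → ℝ, (∀ j, 0 < b j) →
      Function.Injective b → (∀ j, ∃ v : Fin N → ℝ, v ≠ 0 ∧ C *ᵥ (C *ᵥ v) = (-(b j ^ 2)) • v) →
      ∃ h : OG N, C = cj h (T b))
    {Φ : Matrix (Fin N) (Fin N) ℝ → ℝ≥0∞} (hΦ : Measurable Φ)
    (hinv : ∀ (h : OG N) (Y : Matrix (Fin N) (Fin N) ℝ), Φ (cj h Y) = Φ Y) :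
    ∫⁻ v : Fin (N + 1) → ℝ, gw v * Φ (crn (cj (hh v) D)) =
      c * ∫⁻ y in Sd a, ENNReal.ofReal (y 0 ^ m * (∏ i : Fin m, 2 * y i.succ) *
        (vdm (fun i : Fin m => y i.succ ^ 2) / vdm (fun j => a j ^ 2))) *
          (wt (Fm (fun j => a j ^ 2) y) *
            (ENNReal.ofReal (Real.exp (-y 0)) * Φ (T fun i => y i.succ))) := by
  have K : ∀ v, ∀ y ∈ Sd a, ρ v = Fm (fun j => a j ^ 2) y →
      Φ (crn (cj (hh v) D)) = Φ (T fun i => y i.succ) := by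
    intro v y hy hv
    have hα := (sq_mono ha h0).injective
    have hv0 : v ≠ 0 := by
      rintro rfl
      have := hsum 0
      rw [hv, Fm_sum hα] at this
      simp at this
      exact hy.1.ne this
    obtain ⟨h, hh'⟩ := nf (crn (cj (hh v) D)) (crn_skew _ _ hD) (fun i => y i.succ)
      (Sd_pos ha h0 hy) (Sd_strict ha h0 hy).injective (by
        intro l
        refine crn_ev (hh v) D hD d hD2 (y l.succ ^ 2) ?_ ?_
        · intro i
          obtain ⟨j, hj⟩ := hd i
          rw [hj]; exact Sd_ne ha h0 hy l j
        · rw [hh_last v hv0]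
          simp only [Pi.smul_apply, smul_eq_mul, mul_pow, mul_div_assoc]
          rw [← Finset.mul_sum, hsec, hv, Fm_sec hα y l (Sd_ne ha h0 hy l), mul_zero])
    rw [hh', hinv]
  have hm : Measurable fun r => ENNReal.ofReal (Real.exp (-∑ j, r j)) *
      Φ (crn (cj (hh (sec r)) D)) := by
    refine Measurable.mul ?_ ?_
    · exact ENNReal.measurable_ofReal.comp (Real.measurable_exp.comp
        (Finset.measurable_sum _ fun j _ => measurable_pi_apply j).neg)
    · exact hΦ.comp ((measurable_crn_cj D).comp (measurable_hh.comp hsm))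
  have h1 : ∫⁻ v : Fin (N + 1) → ℝ, gw v * Φ (crn (cj (hh v) D)) =
      ∫⁻ v : Fin (N + 1) → ℝ, (fun r => ENNReal.ofReal (Real.exp (-∑ j, r j)) *
      Φ (crn (cj (hh (sec r)) D))) (ρ v) := by
    apply lintegral_congr_ae
    filter_upwards [hae] with v hv
    obtain ⟨y, hy, hyv⟩ : ρ v ∈ Fm (fun j => a j ^ 2) '' (Sd a) := by
      rw [Fm_image ha h0]; exact hv
    rw [K v y hy hyv.symm, K (sec (ρ v)) y hy (by rw [hrs _ hv, hyv]), gw, hsum]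
  rw [h1, hrad _ hm]
  congr 1
  refine (lemR ha h0 _).trans ?_
  refine setLIntegral_congr_fun (Sd_meas a) fun y hy => ?_
  have hr : Fm (fun j => a j ^ 2) y ∈ orth (m + 1) := Fm_pos ha h0 hy
  rw [K _ y hy (hrs _ hr), Fm_sum (sq_mono ha h0).injective]

/-- interlacing box -/
def Il {m : ℕ} (a : Fin (m + 1) → ℝ) : Set (Fin m → ℝ) :=
  {b | ∀ i : Fin m, a i.castSucc < b i ∧ b i < a i.succ}

lemma Il_meas {m : ℕ} (a : Fin (m + 1) → ℝ) : MeasurableSet (Il a) := by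
  have : Il a = ⋂ i : Fin m, ({y | a i.castSucc < y i} ∩ {y | y i < a i.succ}) := by
    ext y; simp [Il]
  rw [this]
  refine (MeasurableSet.iInter fun i => ?_)
  exact (measurableSet_lt measurable_const (measurable_pi_apply i)).inter
    (measurableSet_lt (measurable_pi_apply i) measurable_const)

lemma Sd_split {m : ℕ} (a : Fin (m + 1) → ℝ) (G : ℝ → ℝ≥0∞) (H : (Fin m → ℝ) → ℝ≥0∞)
    (hG : Measurable G) (hH : Measurable H) :
    ∫⁻ y in Sd a, G (y 0) * H (fun i => y i.succ) =
      (∫⁻ t in Set.Ioi (0:ℝ), G t) * ∫⁻ b in Il a, H b := by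
  have hm : Measurable fun y : Fin (m + 1) → ℝ => G (y 0) * H (fun i => y i.succ) :=
    (hG.comp (measurable_pi_apply 0)).mul
      (hH.comp (measurable_pi_lambda _ fun i => measurable_pi_apply _))
  rw [← lintegral_indicator (Sd_meas a), lint_cons _ (hm.indicator (Sd_meas a)),
    ← lintegral_mul_const _ hG, ← lintegral_indicator measurableSet_Ioi]
  refine lintegral_congr fun t => ?_
  have e : ∀ w : Fin m → ℝ, (Sd a).indicator (fun y : Fin (m + 1) → ℝ => G (y 0) * H (fun i => y i.succ))
      (Fin.cons t w) = (Set.Ioi (0:ℝ)).indicator G t * (Il a).indicator H w := by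
    intro w
    by_cases ht : t ∈ Set.Ioi (0:ℝ)
    · by_cases hw : w ∈ Il a
      · rw [Set.indicator_of_mem, Set.indicator_of_mem ht, Set.indicator_of_mem hw]
        · simp
        · exact ⟨by simpa using ht, fun i => by simpa using hw i⟩
      · rw [Set.indicator_of_notMem, Set.indicator_of_notMem hw, mul_zero]
        exact fun h => hw (fun i => by simpa using h.2 i)
    · rw [Set.indicator_of_notMem, Set.indicator_of_notMem ht, zero_mul]
      exact fun h => ht (by simpa using h.1)
  simp_rw [e]
  rw [lintegral_const_mul _ (hH.indicator (Il_meas a)), lintegral_indicator (Il_meas a)]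
  by_cases ht : t ∈ Set.Ioi (0:ℝ)
  · rw [Set.indicator_of_mem ht, Set.indicator_of_mem ht]
  · rw [Set.indicator_of_notMem ht, Set.indicator_of_notMem ht, zero_mul]

lemma gamma_l (s : ℝ) (hs : 0 < s) :
    ∫⁻ t in Set.Ioi (0:ℝ), ENNReal.ofReal (Real.exp (-t) * t ^ (s - 1)) =
      ENNReal.ofReal (Real.Gamma s) := by
  rw [Real.Gamma_eq_integral hs, ofReal_integral_eq_lintegral_ofReal (Real.GammaIntegral_convergent hs)]
  rw [Filter.EventuallyLE, ae_restrict_iff' measurableSet_Ioi]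
  refine Filter.Eventually.of_forall fun t ht => ?_
  have : 0 < t := ht
  simp only [Pi.zero_apply]
  positivity


lemma measurable_mat {α : Type*} [MeasurableSpace α] {N : ℕ} {f : α → Matrix (Fin N) (Fin N) ℝ}
    (h : ∀ i j, Measurable fun x => f x i j) : Measurable f :=
  measurable_pi_lambda _ fun i => measurable_pi_lambda _ fun j => h i j

lemma measurable_Dmat {m : ℕ} : Measurable (Dmat (n := m)) := by
  refine measurable_mat fun i j => ?_
  simp_rw [Dmat_eq]
  split_ifs
  · exact (measurable_pi_apply _).neg
  · exact (measurable_pi_apply _)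
  · exact measurable_const

lemma measurable_Dodd {m : ℕ} : Measurable (Dodd (m := m)) := by
  refine measurable_mat fun i j => ?_
  induction i using Fin.cases
  · simp
  · induction j using Fin.cases
    · simp
    · rename_i i j
      simp only [Dodd_ss]
      exact (measurable_pi_apply j).comp ((measurable_pi_apply i).comp measurable_Dmat)

lemma measurable_vdm {m : ℕ} : Measurable fun b : Fin m → ℝ => vdm (fun i => b i ^ 2) := by
  unfold vdm
  fun_prop

def secE {m : ℕ} (r : Fin m → ℝ) (i : Fin (2 * m)) : ℝ :=
  if i.val % 2 = 0 then Real.sqrt (r (blk i)) else 0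

lemma measurable_secE {m : ℕ} : Measurable (secE (m := m)) := by
  refine measurable_pi_lambda _ fun i => ?_
  unfold secE
  split_ifs
  · exact Real.continuous_sqrt.measurable.comp (measurable_pi_apply _)
  · exact measurable_const

lemma blk_even {m : ℕ} (j : Fin m) (h : 2 * j.val < 2 * m) : blk (⟨2 * j.val, h⟩ : Fin (2 * m)) = j := by
  simp [blk]
lemma blk_odd {m : ℕ} (j : Fin m) (h : 2 * j.val + 1 < 2 * m) :
    blk (⟨2 * j.val + 1, h⟩ : Fin (2 * m)) = j := by
  simp only [blk, Fin.ext_iff]; omega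

lemma qf_secE {m : ℕ} (r : Fin m → ℝ) (hr : ∀ j, 0 < r j) : qf (secE r) = r := by
  ext j
  have h2 : (2 * j.val + 1) % 2 = 1 := by omega
  simp [qf, secE, blk_even, h2, Real.sq_sqrt (hr j).le]

lemma ae_ne (N : ℕ) : ∀ᵐ v : Fin N → ℝ, ∀ i, v i ≠ 0 := by
  rw [ae_all_iff]
  exact fun i => Measure.ae_eval_ne (fun _ => volume) i 0

lemma qf_pos {m : ℕ} (v : Fin (2 * m) → ℝ) (h : ∀ i, v i ≠ 0) (j : Fin m) : 0 < qf v j := by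
  have := h ⟨2 * j.val, by have := j.isLt; omega⟩
  unfold qf
  positivity

lemma pi_pow (m : ℕ) : ENNReal.ofReal (Real.sqrt Real.pi) ^ (2 * m) = ENNReal.ofReal Real.pi ^ m := by
  rw [pow_mul, ← ENNReal.ofReal_pow (Real.sqrt_nonneg _), Real.sq_sqrt Real.pi_pos.le]

lemma step1 {m : ℕ} {a : Fin (m + 1) → ℝ} (ha : StrictMono a) (h0 : 0 ≤ a 0)
    (μ : Measure (OG (2 * m + 1 + 1))) [μ.IsHaarMeasure] [IsProbabilityMeasure μ]
    {Φ : Matrix (Fin (2 * m + 1)) (Fin (2 * m + 1)) ℝ → ℝ≥0∞} (hΦ : Measurable Φ)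
    (hinv : ∀ (h : OG (2 * m + 1)) Y, Φ (cj h Y) = Φ Y) :
    ∫⁻ k, Φ (crn (cj k (Dmat a : Matrix (Fin (2 * (m + 1))) (Fin (2 * (m + 1))) ℝ))) ∂μ =
      ENNReal.ofReal (m.factorial) * ∫⁻ b in Il a, ENNReal.ofReal ((∏ i, 2 * b i) *
        (vdm (fun i => b i ^ 2) / vdm (fun j => a j ^ 2))) * Φ (Dodd b) := by
  have hS := lemS μ hΦ hinv (Dmat a : Matrix (Fin (2 * (m + 1))) (Fin (2 * (m + 1))) ℝ)
  have hG := stepG (N := 2 * m + 1) ha h0 (Dmat a : Matrix (Fin (2 * (m + 1))) (Fin (2 * (m + 1))) ℝ)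
    (Dmat_t a) (fun i : Fin (2 * (m + 1)) => a (blk i) ^ 2) (Dmat_sq a) (fun i => ⟨_, rfl⟩)
    (fun v => qf (m := m + 1) v)
    (fun v => by
      refine (sum_blk (n := m + 1) (fun i => v i * v i)).trans ?_
      simp [qf, sq])
    (fun v t => by
      refine (sum_blk (n := m + 1) (fun i => v i ^ 2 / (t - a (blk i) ^ 2))).trans ?_
      refine Finset.sum_congr rfl fun j _ => ?_
      simp only [blk_even, blk_odd, qf]
      rw [add_div])
    (secE (m := m + 1)) (measurable_secE (m := m + 1))
    (fun r hr => qf_secE (m := m + 1) r hr)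
    (by
      filter_upwards [ae_ne (2 * m + 1 + 1)] with v hv
      exact fun j => qf_pos (m := m + 1) v hv j)
    (ENNReal.ofReal Real.pi ^ (m + 1)) 1
    (fun f hf => by
      have h := radE (m + 1) f hf
      simp only [Pi.one_apply, one_mul]
      exact h)
    Dodd nf_odd hΦ hinv
  rw [hG, gauss_norm] at hS
  have hp := pi_pow (m + 1)
  have hp' : ENNReal.ofReal (Real.sqrt Real.pi) ^ (2 * m + 1 + 1) = ENNReal.ofReal Real.pi ^ (m + 1) := hp
  rw [hp', ENNReal.mul_right_inj (by simp [Real.pi_pos]) (by simp)] at hS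
  rw [hS]
  have hH : Measurable fun b : Fin m → ℝ => ENNReal.ofReal ((∏ i, 2 * b i) *
        (vdm (fun i => b i ^ 2) / vdm (fun j => a j ^ 2))) * Φ (Dodd b) := by
    refine Measurable.mul ?_ (hΦ.comp measurable_Dodd)
    refine ENNReal.measurable_ofReal.comp (Measurable.mul ?_ (measurable_vdm.div_const _))
    fun_prop
  have hGm : Measurable fun t : ℝ => ENNReal.ofReal (Real.exp (-t) * t ^ ((m + 1 : ℝ) - 1)) := by
    fun_prop
  rw [← Real.Gamma_nat_eq_factorial, ← gamma_l _ (by positivity), ← Sd_split a _ _ hGm hH]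
  refine setLIntegral_congr_fun (Sd_meas a) fun y hy => ?_
  have hy0 := hy.1
  simp only [Pi.one_apply, one_mul, add_sub_cancel_right, Real.rpow_natCast]
  rw [mul_assoc (y 0 ^ m), ENNReal.ofReal_mul (p := y 0 ^ m) (by positivity),
    ENNReal.ofReal_mul (p := Real.exp (-y 0)) (by positivity)]
  ring

lemma step2 {m : ℕ} {b : Fin m → ℝ} (hb : StrictMono b) (hb0 : ∀ i, 0 < b i)
    (μ : Measure (OG (2 * m + 1))) [μ.IsHaarMeasure] [IsProbabilityMeasure μ]
    {Φ : Matrix (Fin (2 * m)) (Fin (2 * m)) ℝ → ℝ≥0∞} (hΦ : Measurable Φ)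
    (hinv : ∀ (h : OG (2 * m)) Y, Φ (cj h Y) = Φ Y) :
    ∫⁻ k, Φ (crn (cj k (Dodd b))) ∂μ =
      ENNReal.ofReal (Real.Gamma (m + 1 / 2) / Real.sqrt Real.pi) *
        ∫⁻ x in Il (Fin.cons 0 b), ENNReal.ofReal (2 ^ m *
        (vdm (fun i => x i ^ 2) / (vdm (fun j => b j ^ 2) * ∏ i, b i))) * Φ (Dmat x) := by
  have ha : StrictMono (Fin.cons 0 b : Fin (m + 1) → ℝ) := by
    intro i j hij
    induction j using Fin.cases
    · exact absurd hij (Fin.not_lt_zero _)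
    · induction i using Fin.cases
      · simpa using hb0 _
      · simpa using hb (by simpa using hij)
  have h0 : 0 ≤ (Fin.cons 0 b : Fin (m + 1) → ℝ) 0 := by simp
  set a : Fin (m + 1) → ℝ := Fin.cons 0 b with had
  have hS := lemS μ hΦ hinv (Dodd b)
  have hG := stepG ha h0 (Dodd b)
    (Dodd_t b) _ (Dodd_sq b) (fun i => by
      induction i using Fin.cases
      · exact ⟨0, by simp [had]⟩
      · rename_i i
        exact ⟨(blk i).succ, by simp [had]⟩)
    (fun v => Fin.cons (v 0 ^ 2) (qf (fun i : Fin (2 * m) => v i.succ)))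
    (fun v => by
      simp only [dotProduct]
      rw [Fin.sum_univ_succ, Fin.sum_univ_succ, sum_blk]
      simp [qf, sq])
    (fun v t => by
      rw [Fin.sum_univ_succ, Fin.sum_univ_succ, sum_blk]
      simp only [Fin.cons_zero, Fin.cons_succ, had]
      congr 1
      · simp
      refine Finset.sum_congr rfl fun j _ => ?_
      simp only [blk_even, blk_odd, qf]
      rw [add_div])
    (fun r => Fin.cons (Real.sqrt (r 0)) (secE (fun i => r i.succ)))
    (by
      have h1 : Measurable fun r : Fin (m + 1) → ℝ =>
          (Real.sqrt (r 0), secE (fun i : Fin m => r i.succ)) := by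
        refine (Real.continuous_sqrt.measurable.comp (measurable_pi_apply 0)).prodMk
          (measurable_secE.comp ?_)
        exact measurable_pi_lambda _ fun i => measurable_pi_apply _
      exact measurable_cons.comp h1)
    (fun r hr => by
      simp only [Fin.cons_zero, Fin.cons_succ]
      rw [qf_secE _ (fun j => hr j.succ), Real.sq_sqrt (hr 0).le]
      ext j
      induction j using Fin.cases <;> simp)
    (by
      filter_upwards [ae_ne (2 * m + 1)] with v hv
      intro j
      induction j using Fin.cases
      · have := hv 0
        simp only [Fin.cons_zero]; positivity
      · simp only [Fin.cons_succ]
        exact qf_pos _ (fun i => hv _) _)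
    (ENNReal.ofReal Real.pi ^ m) (fun r => ENNReal.ofReal (Real.sqrt (r 0))⁻¹)
    (fun f hf => radO m f hf)
    Dmat nf_even hΦ hinv
  rw [hG, gauss_norm, pow_succ, pi_pow, mul_assoc,
    ENNReal.mul_right_inj (by simp [Real.pi_pos]) (by simp)] at hS
  have hsp : 0 < Real.sqrt Real.pi := Real.sqrt_pos.2 Real.pi_pos
  have hne : ENNReal.ofReal (Real.sqrt Real.pi) ≠ 0 := by simp [Real.pi_pos]
  rw [← ENNReal.mul_right_inj hne (by simp), hS, ← mul_assoc, ← ENNReal.ofReal_mul hsp.le,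
    mul_div_cancel₀ _ hsp.ne']
  have hH : Measurable fun x : Fin m → ℝ => ENNReal.ofReal (2 ^ m *
        (vdm (fun i => x i ^ 2) / (vdm (fun j => b j ^ 2) * ∏ i, b i))) * Φ (Dmat x) := by
    refine Measurable.mul ?_ (hΦ.comp measurable_Dmat)
    exact ENNReal.measurable_ofReal.comp (Measurable.const_mul (measurable_vdm.div_const _) _)
  have hGm : Measurable fun t : ℝ => ENNReal.ofReal (Real.exp (-t) * t ^ ((m + 1 / 2 : ℝ) - 1)) := by
    fun_prop
  rw [← gamma_l _ (by positivity), ← Sd_split a _ _ hGm hH]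
  refine setLIntegral_congr_fun (Sd_meas a) fun y hy => ?_
  have hy0 := hy.1
  have hyp := Sd_pos ha h0 hy
  have hF : Fm (fun j => a j ^ 2) y 0 = y 0 * ((∏ i : Fin m, y i.succ) / ∏ i, b i) ^ 2 := by
    simp only [Fm, Wd, had, Fin.cons_zero, Fin.succAbove_zero, Fin.cons_succ]
    rw [mul_div_assoc, ← Finset.prod_div_distrib, ← Finset.prod_div_distrib, ← Finset.prod_pow]
    congr 1
    refine Finset.prod_congr rfl fun i _ => ?_
    have := (hb0 i).ne'
    field_simp
    ring
  have hv : vdm (fun j => a j ^ 2) = (∏ i, b i) ^ 2 * vdm (fun j => b j ^ 2) := by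
    have : (fun j => a j ^ 2) = Fin.cons 0 (fun i => b i ^ 2) := by
      ext j; induction j using Fin.cases <;> simp [had]
    rw [this, vdm_cons, ← Finset.prod_pow]; simp
  have hbp : 0 < ∏ i, b i := Finset.prod_pos fun i _ => hb0 i
  have hxp : 0 < ∏ i : Fin m, y i.succ := Finset.prod_pos fun i _ => hyp i
  have hvb : 0 < vdm (fun j => b j ^ 2) := vdm_pos fun i j hij =>
    pow_lt_pow_left₀ (hb hij) (hb0 i).le two_ne_zero
  have hvx : 0 < vdm (fun i : Fin m => y i.succ ^ 2) := vdm_pos fun i j hij =>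
    pow_lt_pow_left₀ (Sd_strict ha h0 hy hij) (hyp i).le two_ne_zero
  simp only
  rw [hF, hv, Real.sqrt_mul hy0.le, Real.sqrt_sq (div_pos hxp hbp).le, Finset.prod_mul_distrib]
  simp only [Finset.prod_const, Finset.card_univ, Fintype.card_fin]
  have hrp : y 0 ^ ((m + 1 / 2 : ℝ) - 1) = y 0 ^ m * (Real.sqrt (y 0))⁻¹ := by
    rw [show ((m + 1 / 2 : ℝ) - 1) = m + (-(1/2)) by ring, Real.rpow_add hy0, Real.rpow_natCast,
      Real.rpow_neg hy0.le, Real.sqrt_eq_rpow]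
  rw [hrp]
  have hs0 : 0 < Real.sqrt (y 0) := Real.sqrt_pos.2 hy0
  rw [← mul_assoc, ← mul_assoc, ← mul_assoc, ← ENNReal.ofReal_mul (by positivity),
    ← ENNReal.ofReal_mul (by positivity)]
  rw [← mul_assoc (ENNReal.ofReal (Real.exp (-y 0) * _)), ← ENNReal.ofReal_mul (by positivity)]
  congr 2
  field_simp


def Mx {m : ℕ} (x : Fin m → ℝ) (a : Fin (m + 1) → ℝ) : Matrix (Fin (m + 1)) (Fin (m + 1)) ℝ :=
  Matrix.of fun b c => (Fin.cons 1 (fun j : Fin m => max (a c - x j) 0) : Fin (m + 1) → ℝ) b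

lemma Mxa_eq {m : ℕ} (x : Fin m → ℝ) (a : Fin (m + 1) → ℝ) (hn : 2 ≤ m + 1) :
    Mxa (n := m + 1) x a hn = Mx x a := by
  ext b c
  induction b using Fin.cases with
  | zero => simp [Mxa, Mx]
  | succ j =>
    simp only [Mxa, Mx, Matrix.of_apply, Fin.cons_succ, Fin.val_succ, Nat.add_eq_zero_iff,
      one_ne_zero, and_false, dite_false, Nat.add_sub_cancel]
    split_ifs with h
    · rw [max_eq_left (by linarith!)]; rfl
    · rw [max_eq_right]
      have : a c < x j := not_le.1 h
      linarith

/-- row-difference functions -/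
def gfun {m : ℕ} (x : Fin m → ℝ) (j : Fin m) (t : ℝ) : ℝ :=
  max (t - x j) 0 - if h : j.val + 1 < m then max (t - x ⟨j.val + 1, h⟩) 0 else 0

def Lmat {m : ℕ} (x : Fin m → ℝ) (a : Fin (m + 1) → ℝ) : Matrix (Fin m) (Fin m) ℝ :=
  Matrix.of fun j k => gfun x j (a k.succ) - gfun x j (a k.castSucc)

lemma det_Mx1 {m : ℕ} (x : Fin m → ℝ) (a : Fin (m + 1) → ℝ) :
    (Mx x a).det = (Matrix.of fun j k : Fin m =>
      max (a k.succ - x j) 0 - max (a k.castSucc - x j) 0).det := by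
  have h := Matrix.det_eq_of_forall_col_eq_smul_add_pred (A := Mx x a)
    (B := Matrix.of fun b c => (Fin.cons (Mx x a b 0)
      (fun k : Fin m => Mx x a b k.succ - Mx x a b k.castSucc) : Fin (m + 1) → ℝ) c)
    (fun _ => 1) (by intro i; simp) (by intro i j; simp)
  rw [h, Matrix.det_succ_row_zero, Fin.sum_univ_succ]
  simp only [Mx, Matrix.of_apply, Fin.cons_zero, Fin.cons_succ, sub_self, mul_zero, zero_mul,
    Finset.sum_const_zero, add_zero, Fin.val_zero, pow_zero, one_mul]
  congr 1

lemma det_Mx2 {m : ℕ} (x : Fin m → ℝ) (a : Fin (m + 1) → ℝ) :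
    (Mx x a).det = (Lmat x a).det := by
  rw [det_Mx1]
  set N : Matrix (Fin m) (Fin m) ℝ := Matrix.of fun j k : Fin m =>
      max (a k.succ - x j) 0 - max (a k.castSucc - x j) 0 with hN
  let W : Matrix (Fin m) (Fin m) ℝ := Matrix.of fun j i =>
    (if i = j then 1 else 0) - (if i.val = j.val + 1 then 1 else 0)
  have hW : W.det = 1 := by
    rw [Matrix.det_of_isUpperTriangular]
    · simp [W]
    · intro i j hij
      have : j < i := hij
      simp only [W, Matrix.of_apply]
      rw [if_neg this.ne, if_neg (by have : j.val < i.val := this; omega), sub_zero]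
  have hL : Lmat x a = W * N := by
    ext j k
    rw [Matrix.mul_apply]
    simp only [W, Matrix.of_apply, sub_mul, Finset.sum_sub_distrib, ite_mul, one_mul, zero_mul,
      Finset.sum_ite_eq', Finset.mem_univ, if_true, Lmat, gfun]
    by_cases h : j.val + 1 < m
    · have : ∀ i : Fin m, (i.val = j.val + 1) ↔ i = ⟨j.val + 1, h⟩ := fun i => by
        simp [Fin.ext_iff]
      simp only [this, Finset.sum_ite_eq', Finset.mem_univ, if_true, hN, Matrix.of_apply, h, dite_true]
      ring
    · have : ∀ i : Fin m, ¬ (i.val = j.val + 1) := fun i => by have := i.isLt; omega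
      simp only [this, if_false, Finset.sum_const_zero, hN, Matrix.of_apply, h, dite_false, sub_zero]
  rw [hL, Matrix.det_mul, hW, one_mul]

lemma perm_inv {m : ℕ} (σ : Equiv.Perm (Fin m)) (h : σ ≠ 1) : ∃ i j, i < j ∧ σ j < σ i := by
  by_contra hc
  push Not at hc
  apply h
  have hm : StrictMono σ := fun i j hij =>
    lt_of_le_of_ne (hc i j hij) (fun e => hij.ne (σ.injective e))
  have := (StrictMono.range_inj hm (strictMono_id (α := Fin m))).1 (by simp)
  ext i; simp [this]

lemma L_low {m : ℕ} {x : Fin m → ℝ} (hx : StrictMono x) {a : Fin (m + 1) → ℝ} (ha : StrictMono a)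
    (j k : Fin m) (h : a k.succ ≤ x j) : Lmat x a j k = 0 := by
  have h1 : a k.castSucc < a k.succ := ha k.castSucc_lt_succ
  simp only [Lmat, Matrix.of_apply, gfun]
  rw [max_eq_right (by linarith), max_eq_right (by linarith)]
  split_ifs with hh
  · have : x j < x ⟨j.val + 1, hh⟩ := hx (by simp [Fin.lt_def])
    rw [max_eq_right (by linarith), max_eq_right (by linarith)]; simp
  · simp

lemma L_high {m : ℕ} {x : Fin m → ℝ} (hx : StrictMono x) {a : Fin (m + 1) → ℝ} (ha : StrictMono a)
    (j k : Fin m) (hh : j.val + 1 < m) (h : x ⟨j.val + 1, hh⟩ ≤ a k.castSucc) :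
    Lmat x a j k = 0 := by
  have h1 : a k.castSucc < a k.succ := ha k.castSucc_lt_succ
  have : x j < x ⟨j.val + 1, hh⟩ := hx (by simp [Fin.lt_def])
  simp only [Lmat, Matrix.of_apply, gfun, hh, dite_true]
  rw [max_eq_left (by linarith), max_eq_left (by linarith), max_eq_left (by linarith),
    max_eq_left (by linarith)]
  ring

lemma det_L {m : ℕ} {x : Fin m → ℝ} (hx : StrictMono x) {a : Fin (m + 1) → ℝ} (ha : StrictMono a) :
    (Lmat x a).det = ∏ j, Lmat x a j j := by
  rw [Matrix.det_apply, Finset.sum_eq_single 1]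
  · simp
  · intro σ _ hσ
    obtain ⟨i, j, hij, hs⟩ := perm_inv σ hσ
    have hs' : (σ j).val < (σ i).val := hs
    have hh : (σ j).val + 1 < m := by have := (σ i).isLt; omega
    have : Lmat x a (σ i) i = 0 ∨ Lmat x a (σ j) j = 0 := by
      rcases le_or_gt (a i.succ) (x (σ i)) with h | h
      · left; exact L_low hx ha _ _ h
      · right
        refine L_high hx ha _ _ hh ?_
        have h1 : a i.succ ≤ a j.castSucc := ha.monotone (by
          rw [Fin.le_def]; simp; exact hij)
        have h2 : x ⟨(σ j).val + 1, hh⟩ ≤ x (σ i) := hx.monotone (by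
          rw [Fin.le_def]; simp; omega)
        linarith
    have : ∏ i, Lmat x a (σ i) i = 0 := by
      rcases this with h | h
      · exact Finset.prod_eq_zero (Finset.mem_univ i) h
      · exact Finset.prod_eq_zero (Finset.mem_univ j) h
    rw [this, smul_zero]
  · simp

def hiB {m : ℕ} (x : Fin m → ℝ) (a : Fin (m + 1) → ℝ) (i : Fin m) : ℝ :=
  if h : i.val + 1 < m then min (a i.succ) (x ⟨i.val + 1, h⟩) else a i.succ

lemma L_diag {m : ℕ} {x : Fin m → ℝ} (hx : StrictMono x) {a : Fin (m + 1) → ℝ} (ha : StrictMono a)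
    (j : Fin m) : Lmat x a j j = max (hiB x a j - max (a j.castSucc) (x j)) 0 := by
  have h1 : a j.castSucc < a j.succ := ha j.castSucc_lt_succ
  simp only [Lmat, Matrix.of_apply, gfun, hiB]
  split_ifs with hh
  · have : x j < x ⟨j.val + 1, hh⟩ := hx (by simp [Fin.lt_def])
    generalize x ⟨j.val + 1, hh⟩ = z at *
    simp only [max_def, min_def]
    split_ifs <;> linarith
  · simp only [max_def]
    split_ifs <;> linarith

lemma det_Mx {m : ℕ} {x : Fin m → ℝ} (hx : StrictMono x) {a : Fin (m + 1) → ℝ} (ha : StrictMono a) :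
    (Mx x a).det = ∏ j, max (hiB x a j - max (a j.castSucc) (x j)) 0 := by
  rw [det_Mx2, det_L hx ha]
  exact Finset.prod_congr rfl fun j _ => L_diag hx ha j

lemma det_Mx_nn {m : ℕ} {x : Fin m → ℝ} (hx : StrictMono x) {a : Fin (m + 1) → ℝ}
    (ha : StrictMono a) : 0 ≤ (Mx x a).det := by
  rw [det_Mx hx ha]
  exact Finset.prod_nonneg fun j _ => le_max_right _ _

def Srt (m : ℕ) : Set (Fin m → ℝ) := {x | StrictMono x ∧ ∀ i, 0 < x i}

lemma Srt_meas (m : ℕ) : MeasurableSet (Srt m) := by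
  have : Srt m = (⋂ i : Fin m, ⋂ j : Fin m, {x | i < j → x i < x j}) ∩ ⋂ i, {x : Fin m → ℝ | 0 < x i} := by
    ext y; simp [Srt, StrictMono]
  rw [this]
  refine MeasurableSet.inter (MeasurableSet.iInter fun i => MeasurableSet.iInter fun j => ?_)
    (MeasurableSet.iInter fun i => measurableSet_lt measurable_const (measurable_pi_apply i))
  by_cases h : i < j
  · simp only [h, true_imp_iff]
    exact measurableSet_lt (measurable_pi_apply i) (measurable_pi_apply j)
  · simp [h]

lemma Il_strict {m : ℕ} {a : Fin (m + 1) → ℝ} (ha : StrictMono a) {b : Fin m → ℝ} (hb : b ∈ Il a) :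
    StrictMono b := by
  intro i j hij
  have h1 : a i.succ ≤ a j.castSucc := ha.monotone (by
          rw [Fin.le_def]; simp; exact hij)
  exact (hb i).2.trans_le (h1.trans (hb j).1.le)

lemma Il_pos {m : ℕ} {a : Fin (m + 1) → ℝ} (ha : StrictMono a) (h0 : 0 ≤ a 0) {b : Fin m → ℝ}
    (hb : b ∈ Il a) (i : Fin m) : 0 < b i :=
  (h0.trans (ha.monotone (Fin.zero_le _))).trans_lt (hb i).1

lemma cons_strict {m : ℕ} {b : Fin m → ℝ} (hb : StrictMono b) (hb0 : ∀ i, 0 < b i) :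
    StrictMono (Fin.cons 0 b : Fin (m + 1) → ℝ) := by
  intro i j hij
  induction j using Fin.cases with
  | zero => exact absurd hij (Fin.not_lt_zero _)
  | succ j =>
    induction i using Fin.cases with
    | zero => simpa using hb0 j
    | succ i => simpa using hb (by simpa using hij)

lemma sec_vol {m : ℕ} {a : Fin (m + 1) → ℝ} (ha : StrictMono a) (h0 : 0 ≤ a 0) (x : Fin m → ℝ) :
    volume {b | b ∈ Il a ∧ x ∈ Il (Fin.cons 0 b : Fin (m + 1) → ℝ)} =
      (Srt m).indicator (fun x => ENNReal.ofReal (Mx x a).det) x := by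
  by_cases hx : x ∈ Srt m
  · rw [Set.indicator_of_mem hx, det_Mx hx.1 ha]
    have : {b | b ∈ Il a ∧ x ∈ Il (Fin.cons 0 b : Fin (m + 1) → ℝ)} =
        Set.univ.pi fun i => Set.Ioo (max (a i.castSucc) (x i)) (hiB x a i) := by
      ext b
      simp only [Set.mem_ofPred_eq, Il, Set.mem_pi, Set.mem_univ, true_imp_iff, Set.mem_Ioo, max_lt_iff,
        Fin.cons_succ, hiB]
      constructor
      · rintro ⟨h1, h2⟩ i
        refine ⟨⟨(h1 i).1, (h2 i).2⟩, ?_⟩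
        split_ifs with hh
        · refine lt_min (h1 i).2 ?_
          have := (h2 ⟨i.val + 1, hh⟩).1
          have e : Fin.castSucc (⟨i.val + 1, hh⟩ : Fin m) = i.succ := by ext; simp
          rwa [e, Fin.cons_succ] at this
        · exact (h1 i).2
      · intro h
        refine ⟨fun i => ⟨(h i).1.1, ?_⟩, fun i => ⟨?_, (h i).1.2⟩⟩
        · have := (h i).2
          split_ifs at this
          · exact this.trans_le (min_le_left _ _)
          · exact this
        · rcases Nat.eq_zero_or_pos i.val with hi | hi
          · have e : i.castSucc = 0 := by ext; simpa using hi
            rw [e, Fin.cons_zero]; exact hx.2 i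
          · have hl : i.val - 1 < m := by have := i.isLt; omega
            have e : i.castSucc = Fin.succ ⟨i.val - 1, hl⟩ := by ext; simp; omega
            rw [e, Fin.cons_succ]
            have := (h ⟨i.val - 1, hl⟩).2
            rw [dif_pos (show i.val - 1 + 1 < m by have := i.isLt; omega)] at this
            refine (this.trans_le (min_le_right _ _)).trans_le (le_of_eq ?_)
            congr 1; ext; simp; omega
    rw [this, Real.volume_pi_Ioo, ENNReal.ofReal_prod_of_nonneg (fun i _ => le_max_right _ _)]
    refine Finset.prod_congr rfl fun i _ => ?_
    rcases le_total (hiB x a i - max (a i.castSucc) (x i)) 0 with h | h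
    · rw [max_eq_right h, ENNReal.ofReal_of_nonpos h, ENNReal.ofReal_zero]
    · rw [max_eq_left h]
  · rw [Set.indicator_of_notMem hx]
    have : {b | b ∈ Il a ∧ x ∈ Il (Fin.cons 0 b : Fin (m + 1) → ℝ)} = ∅ := by
      ext b
      simp only [Set.mem_ofPred_eq, Set.mem_empty_iff_false, iff_false]
      rintro ⟨h1, h2⟩
      have hc := cons_strict (Il_strict ha h1) (Il_pos ha h0 h1)
      exact hx ⟨Il_strict hc h2, Il_pos hc (by simp) h2⟩
    rw [this, measure_empty]

lemma tonelli {m : ℕ} {a : Fin (m + 1) → ℝ} (ha : StrictMono a) (h0 : 0 ≤ a 0)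
    {H : (Fin m → ℝ) → ℝ≥0∞} (hH : Measurable H) :
    ∫⁻ b in Il a, ∫⁻ x in Il (Fin.cons 0 b : Fin (m + 1) → ℝ), H x =
      ∫⁻ x in Srt m, H x * ENNReal.ofReal (Mx x a).det := by
  have hS : MeasurableSet {p : (Fin m → ℝ) × (Fin m → ℝ) |
      p.1 ∈ Il a ∧ p.2 ∈ Il (Fin.cons 0 p.1 : Fin (m + 1) → ℝ)} := by
    refine (measurable_fst (Il_meas a)).inter ?_
    have : {p : (Fin m → ℝ) × (Fin m → ℝ) | p.2 ∈ Il (Fin.cons 0 p.1 : Fin (m + 1) → ℝ)} =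
        ⋂ i : Fin m, {p : (Fin m → ℝ) × (Fin m → ℝ) |
          (Fin.cons 0 p.1 : Fin (m + 1) → ℝ) i.castSucc < p.2 i} ∩ {p | p.1 i < p.2 i}ᶜ ∩
          {p | p.2 i < p.1 i} := by
      ext p
      simp only [Il, Set.mem_ofPred_eq, Set.mem_iInter, Set.mem_inter_iff, Fin.cons_succ,
        Set.mem_compl_iff, not_lt]
      exact forall_congr' fun i => ⟨fun h => ⟨⟨h.1, h.2.le⟩, h.2⟩, fun h => ⟨h.1.1, h.2⟩⟩
    show MeasurableSet {p : (Fin m → ℝ) × (Fin m → ℝ) | p.2 ∈ Il (Fin.cons 0 p.1 : Fin (m + 1) → ℝ)}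
    rw [this]
    refine MeasurableSet.iInter fun i => ?_
    have hc : Measurable fun p : (Fin m → ℝ) × (Fin m → ℝ) => (Fin.cons 0 p.1 : Fin (m + 1) → ℝ) i.castSucc := by
      have : Measurable fun p : (Fin m → ℝ) × (Fin m → ℝ) => (Fin.cons 0 p.1 : Fin (m + 1) → ℝ) := by
        refine measurable_pi_lambda _ fun j => ?_
        induction j using Fin.cases with
        | zero => simp
        | succ j => simp only [Fin.cons_succ]; fun_prop
      exact (measurable_pi_apply _).comp this
    have h1 : Measurable fun p : (Fin m → ℝ) × (Fin m → ℝ) => p.1 i := by fun_prop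
    have h2 : Measurable fun p : (Fin m → ℝ) × (Fin m → ℝ) => p.2 i := by fun_prop
    exact ((measurableSet_lt hc h2).inter (measurableSet_lt h1 h2).compl).inter (measurableSet_lt h2 h1)
  set S := {p : (Fin m → ℝ) × (Fin m → ℝ) |
      p.1 ∈ Il a ∧ p.2 ∈ Il (Fin.cons 0 p.1 : Fin (m + 1) → ℝ)} with hSd
  have e1 : ∫⁻ b in Il a, ∫⁻ x in Il (Fin.cons 0 b : Fin (m + 1) → ℝ), H x =
      ∫⁻ b, ∫⁻ x, S.indicator (fun p => H p.2) (b, x) := by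
    rw [← lintegral_indicator (Il_meas a)]
    refine lintegral_congr fun b => ?_
    by_cases hb : b ∈ Il a
    · rw [Set.indicator_of_mem hb, ← lintegral_indicator (Il_meas _)]
      refine lintegral_congr fun x => ?_
      have : (b, x) ∈ S ↔ x ∈ Il (Fin.cons 0 b : Fin (m + 1) → ℝ) :=
        ⟨fun h => h.2, fun h => ⟨hb, h⟩⟩
      by_cases hx : x ∈ Il (Fin.cons 0 b : Fin (m + 1) → ℝ)
      · rw [Set.indicator_of_mem hx, Set.indicator_of_mem (this.2 hx)]
      · rw [Set.indicator_of_notMem hx, Set.indicator_of_notMem (fun h => hx (this.1 h))]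
    · rw [Set.indicator_of_notMem hb]
      have : ∀ x, (b, x) ∉ S := fun x h => hb h.1
      simp [Set.indicator, this]
  rw [e1, lintegral_lintegral_swap (f := fun b x => S.indicator (fun p => H p.2) (b, x))
    ((hH.comp measurable_snd).indicator hS).aemeasurable,
    ← lintegral_indicator (Srt_meas m)]
  refine lintegral_congr fun x => ?_
  have e2 : (fun b => S.indicator (fun p => H p.2) (b, x)) =
      fun b => ({b | b ∈ Il a ∧ x ∈ Il (Fin.cons 0 b : Fin (m + 1) → ℝ)}).indicator (fun _ => H x) b := by
    ext b
    by_cases h : (b, x) ∈ S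
    · rw [Set.indicator_of_mem h, Set.indicator_of_mem (by exact h)]
    · rw [Set.indicator_of_notMem h, Set.indicator_of_notMem (by exact h)]
  rw [e2, lintegral_indicator_const, sec_vol ha h0]
  · simp only [Set.indicator]; split_ifs <;> simp
  · exact (measurable_id.prodMk measurable_const) hS

lemma const_id (m : ℕ) : (m.factorial : ℝ) * 2 ^ m * 2 ^ m *
    (Real.Gamma (m + 1 / 2) / Real.sqrt Real.pi) = ((2 * m).factorial : ℝ) := by
  have hsp : 0 < Real.sqrt Real.pi := Real.sqrt_pos.2 Real.pi_pos
  rw [Real.Gamma_nat_add_half]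
  have : (2 * m).factorial = (2 * m - 1).doubleFactorial * (2 ^ m * m.factorial) := by
    rcases m with _ | m
    · simp
    · have := Nat.factorial_eq_mul_doubleFactorial (2 * m + 1)
      rw [show 2 * m + 1 + 1 = 2 * (m + 1) by ring, Nat.doubleFactorial_two_mul] at this
      rw [this, show 2 * (m + 1) - 1 = 2 * m + 1 by omega]; ring
  rw [this]; push_cast
  field_simp

/-- sorted identity -/
lemma comb {m : ℕ} {a : Fin (m + 1) → ℝ} (ha : StrictMono a) (h0 : 0 ≤ a 0)
    (μ : Measure (OG (2 * m + 1 + 1))) [μ.IsHaarMeasure] [IsProbabilityMeasure μ]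
    (μ' : Measure (OG (2 * m))) [μ'.IsHaarMeasure] [IsProbabilityMeasure μ']
    {φ : Matrix (Fin (2 * m)) (Fin (2 * m)) ℝ → ℝ≥0∞} (hφ : Measurable φ) :
    ∫⁻ k, φ (crn (crn (cj k (Dmat a : Matrix (Fin (2 * (m + 1))) (Fin (2 * (m + 1))) ℝ)))) ∂μ =
      ENNReal.ofReal ((2 * m).factorial) * ∫⁻ x in Srt m, ENNReal.ofReal
        (vdm (fun i => x i ^ 2) / vdm (fun j => a j ^ 2) * (Mx x a).det) * avg μ' φ (Dmat x) := by
  obtain ⟨ν, hν, hν1⟩ := og_haar_exists (2 * m + 1)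
  have hc : Measurable (fun Y => φ (crn (N := 2 * m) Y)) := hφ.comp continuous_crn.measurable
  have hva : 0 < vdm (fun j => a j ^ 2) := vdm_pos fun i j hij =>
    pow_lt_pow_left₀ (ha hij) (h0.trans (ha.monotone (Fin.zero_le _))) two_ne_zero
  have hG0 : 0 ≤ Real.Gamma (m + 1 / 2) / Real.sqrt Real.pi :=
    div_nonneg (Real.Gamma_pos_of_pos (by positivity)).le (Real.sqrt_nonneg _)
  rw [lemT μ ν hc, step1 ha h0 μ (measurable_avg ν hc) (fun h Y => avg_cj ν _ h Y)]
  have key : ∀ b ∈ Il a, ENNReal.ofReal ((∏ i, 2 * b i) *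
        (vdm (fun i => b i ^ 2) / vdm (fun j => a j ^ 2))) *
          avg ν (fun Y => φ (crn (N := 2 * m) Y)) (Dodd b) =
      ∫⁻ x in Il (Fin.cons 0 b : Fin (m + 1) → ℝ),
        ENNReal.ofReal (2 ^ m * 2 ^ m * (Real.Gamma (m + 1 / 2) / Real.sqrt Real.pi)) *
         (ENNReal.ofReal (vdm (fun i => x i ^ 2) / vdm (fun j => a j ^ 2)) * avg μ' φ (Dmat x)) := by
    intro b hb
    have hbs := Il_strict ha hb
    have hb0 := Il_pos ha h0 hb
    have hbp : 0 < ∏ i, b i := Finset.prod_pos fun i _ => hb0 i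
    have hvb : 0 < vdm (fun j => b j ^ 2) := vdm_pos fun i j hij =>
      pow_lt_pow_left₀ (hbs hij) (hb0 i).le two_ne_zero
    have e : avg ν (fun Y => φ (crn (N := 2 * m) Y)) (Dodd b) = ∫⁻ h, φ (crn (cj h (Dodd b))) ∂ν := rfl
    rw [e, lemT ν μ' hφ, step2 hbs hb0 ν (measurable_avg μ' hφ) (fun h Y => avg_cj μ' _ h Y),
      ← mul_assoc, ← ENNReal.ofReal_mul (by rw [Finset.prod_mul_distrib]; positivity),
      ← lintegral_const_mul' _ _ ENNReal.ofReal_ne_top]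
    refine lintegral_congr fun x => ?_
    rw [← mul_assoc, ← mul_assoc, ← ENNReal.ofReal_mul (by rw [Finset.prod_mul_distrib]; positivity),
      ← ENNReal.ofReal_mul (by positivity), Finset.prod_mul_distrib]
    congr 2
    simp only [Finset.prod_const, Finset.card_univ, Fintype.card_fin]
    field_simp
  rw [setLIntegral_congr_fun (Il_meas a) key, tonelli ha h0]
  · have hc0 : 0 ≤ (2 ^ m * 2 ^ m * (Real.Gamma (m + 1 / 2) / Real.sqrt Real.pi)) :=
      mul_nonneg (by positivity) hG0
    have hcc : ((2 * m).factorial : ℝ) = (m.factorial : ℝ) *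
        (2 ^ m * 2 ^ m * (Real.Gamma (m + 1 / 2) / Real.sqrt Real.pi)) := by
      rw [← const_id]; ring
    rw [hcc]
    generalize (2 ^ m * 2 ^ m * (Real.Gamma (m + 1 / 2) / Real.sqrt Real.pi)) = c at hc0 ⊢
    rw [ENNReal.ofReal_mul (by positivity), mul_assoc (ENNReal.ofReal _) (ENNReal.ofReal _),
      ← lintegral_const_mul' (ENNReal.ofReal c) _ ENNReal.ofReal_ne_top]
    congr 1
    refine setLIntegral_congr_fun (Srt_meas m) fun x hx => ?_
    rw [ENNReal.ofReal_mul (p := _ / _)]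
    · ring
    · refine (div_pos (vdm_pos fun i j hij => ?_) hva).le
      exact pow_lt_pow_left₀ (hx.1 hij) (hx.2 i).le two_ne_zero
  · refine Measurable.const_mul (Measurable.mul ?_ ((measurable_avg μ' hφ).comp measurable_Dmat)) _
    exact ENNReal.measurable_ofReal.comp (measurable_vdm.div_const _)


lemma ae_inj (m : ℕ) : ∀ᵐ x : Fin m → ℝ, Function.Injective x := by
  have : ∀ i j : Fin m, i ≠ j → ∀ᵐ x : Fin m → ℝ, x i ≠ x j := by
    intro i j hij
    let L : (Fin m → ℝ) →ₗ[ℝ] ℝ :=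
      LinearMap.proj (R := ℝ) (φ := fun _ : Fin m => ℝ) i - LinearMap.proj (R := ℝ) (φ := fun _ : Fin m => ℝ) j
    have hL : LinearMap.ker L ≠ ⊤ := by
      intro h
      have : (Pi.single i 1 : Fin m → ℝ) ∈ LinearMap.ker L := h ▸ Submodule.mem_top
      simp [L, hij] at this
    have := Measure.addHaar_submodule (volume : Measure (Fin m → ℝ)) _ hL
    rw [ae_iff]
    convert this using 2
    ext x
    simp [L, sub_eq_zero]
  have h2 : ∀ᵐ x : Fin m → ℝ, ∀ i j : Fin m, i ≠ j → x i ≠ x j := by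
    rw [ae_all_iff]; intro i
    rw [ae_all_iff]; intro j
    by_cases h : i = j
    · simp [h]
    · simpa [h] using this i j h
  filter_upwards [h2] with x hx i j hij
  by_contra h
  exact hx i j h hij

lemma sort_strict {m : ℕ} {x : Fin m → ℝ} (hx : Function.Injective x) :
    StrictMono (x ∘ Tuple.sort x) :=
  (Tuple.monotone_sort x).strictMono_of_injective (hx.comp (Tuple.sort x).injective)

lemma mp_perm {m : ℕ} (σ : Equiv.Perm (Fin m)) :
    MeasurePreserving (fun x : Fin m → ℝ => x ∘ σ) := by
  have h := volume_measurePreserving_piCongrLeft (fun _ : Fin m => ℝ) σ.symm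
  have e : (fun x : Fin m → ℝ => x ∘ σ) = MeasurableEquiv.piCongrLeft (fun _ : Fin m => ℝ) σ.symm := by
    ext x i
    have := MeasurableEquiv.piCongrLeft_apply_apply (β := fun _ : Fin m => ℝ) (e := σ.symm) x (σ i)
    simpa using this.symm
  rw [e]; exact h

lemma lint_symm {m : ℕ} {G : (Fin m → ℝ) → ℝ≥0∞} (hG : Measurable G)
    (hs : ∀ σ : Equiv.Perm (Fin m), ∀ x ∈ Srt m, G (x ∘ σ) = G x) :
    ∫⁻ x in orth m, G x = (m.factorial : ℝ≥0∞) * ∫⁻ x in Srt m, G x := by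
  let T : Equiv.Perm (Fin m) → Set (Fin m → ℝ) := fun σ => (fun x => x ∘ σ) ⁻¹' Srt m
  have hT : ∀ σ, MeasurableSet (T σ) := fun σ => (mp_perm σ).measurable (Srt_meas m)
  have hU : orth m =ᵐ[volume] ⋃ σ, T σ := by
    filter_upwards [ae_inj m] with x hx
    apply propext
    show x ∈ orth m ↔ x ∈ ⋃ σ, T σ
    rw [Set.mem_iUnion]
    constructor
    · intro h
      exact ⟨Tuple.sort x, sort_strict hx, fun i => h _⟩
    · rintro ⟨σ, _, h⟩ j
      have := h (σ.symm j)
      simpa using this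
  have hD : Pairwise (Function.onFun Disjoint T) := by
    intro σ τ hst
    rw [Function.onFun, Set.disjoint_left]
    rintro x ⟨h1, _⟩ ⟨h2, _⟩
    apply hst
    have := (StrictMono.range_inj h1 h2).1 (by
      rw [Set.range_comp, Set.range_comp]; simp)
    have hx : Function.Injective x := by
      intro i j hij
      have := h1.injective (a₁ := σ.symm i) (a₂ := σ.symm j) (by simpa using hij)
      simpa using this
    ext i
    have := hx (congrFun this i)
    simp [this]
  have hI : ∀ σ, ∫⁻ x in T σ, G x = ∫⁻ x in Srt m, G x := by
    intro σ
    have h1 : ∫⁻ x in T σ, G (x ∘ σ) = ∫⁻ x in Srt m, G x :=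
      (mp_perm σ).setLIntegral_comp_preimage (Srt_meas m) hG
    rw [← h1]
    refine setLIntegral_congr_fun (hT σ) fun x hx => ?_
    have := hs σ⁻¹ (x ∘ σ) hx
    rw [← this]
    congr 1
    ext i; simp
  rw [setLIntegral_congr hU, lintegral_iUnion hT hD]
  simp_rw [hI]
  rw [tsum_fintype]
  simp [Fintype.card_perm]

lemma vdm_perm {m : ℕ} (x : Fin m → ℝ) (σ : Equiv.Perm (Fin m)) :
    vdm (fun i => (x ∘ σ) i ^ 2) = ((Equiv.Perm.sign σ : ℤ) : ℝ) * vdm (fun i => x i ^ 2) := by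
  rw [vdm_eq, vdm_eq, ← Matrix.det_permute]
  rfl

lemma Mx_perm {m : ℕ} (x : Fin m → ℝ) (a : Fin (m + 1) → ℝ) (σ : Equiv.Perm (Fin m)) :
    (Mx (x ∘ σ) a).det = ((Equiv.Perm.sign σ : ℤ) : ℝ) * (Mx x a).det := by
  rw [det_Mx1, det_Mx1, ← Matrix.det_permute]
  rfl

lemma Mx_perm' {m : ℕ} (x : Fin m → ℝ) (a : Fin (m + 1) → ℝ) (σ : Equiv.Perm (Fin (m + 1))) :
    (Mx x (a ∘ σ)).det = ((Equiv.Perm.sign σ : ℤ) : ℝ) * (Mx x a).det := by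
  rw [← Matrix.det_permute']
  rfl

lemma sgn_sq {m : ℕ} (σ : Equiv.Perm (Fin m)) :
    ((Equiv.Perm.sign σ : ℤ) : ℝ) * ((Equiv.Perm.sign σ : ℤ) : ℝ) = 1 := by
  rcases Int.units_eq_one_or (Equiv.Perm.sign σ) with h | h <;> simp [h]

def rho {m : ℕ} (a : Fin (m + 1) → ℝ) (x : Fin m → ℝ) : ℝ :=
  vdm (fun i => x i ^ 2) / vdm (fun j => a j ^ 2) * (Mx x a).det

lemma rho_perm {m : ℕ} (a : Fin (m + 1) → ℝ) (x : Fin m → ℝ) (σ : Equiv.Perm (Fin m)) :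
    rho a (x ∘ σ) = rho a x := by
  unfold rho
  rw [vdm_perm, Mx_perm]
  calc _ = (((Equiv.Perm.sign σ : ℤ) : ℝ) * ((Equiv.Perm.sign σ : ℤ) : ℝ)) *
    (vdm (fun i => x i ^ 2) / vdm (fun j => a j ^ 2) * (Mx x a).det) := by ring
    _ = _ := by rw [sgn_sq, one_mul]

lemma rho_perm' {m : ℕ} (a : Fin (m + 1) → ℝ) (x : Fin m → ℝ) (σ : Equiv.Perm (Fin (m + 1))) :
    rho (a ∘ σ) x = rho a x := by
  unfold rho
  rw [vdm_perm, Mx_perm']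
  have h := sgn_sq σ
  have h0 : ((Equiv.Perm.sign σ : ℤ) : ℝ) ≠ 0 := fun h' => by simp [h'] at h
  rw [div_mul_eq_mul_div, div_mul_eq_mul_div, mul_left_comm, mul_div_mul_left _ _ h0]

lemma rho_nn {m : ℕ} {a : Fin (m + 1) → ℝ} (ha : ∀ j, 0 < a j) (ha' : Function.Injective a)
    {x : Fin m → ℝ} (hx : x ∈ orth m) : 0 ≤ rho a x := by
  by_cases hi : Function.Injective x
  · rw [← rho_perm' a x (Tuple.sort a), ← rho_perm _ x (Tuple.sort x)]
    have h1 := sort_strict ha'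
    have h2 := sort_strict hi
    refine mul_nonneg (div_nonneg (vdm_pos fun i j hij => ?_).le (vdm_pos fun i j hij => ?_).le)
      (det_Mx_nn h2 h1)
    · exact pow_lt_pow_left₀ (h2 hij) (hx _).le two_ne_zero
    · exact pow_lt_pow_left₀ (h1 hij) (ha _).le two_ne_zero
  · simp only [Function.Injective, not_forall] at hi
    obtain ⟨i, j, h, hij⟩ := hi
    have : vdm (fun i => x i ^ 2) = 0 := by
      rw [vdm_eq]
      exact Matrix.det_zero_of_row_eq hij (by ext k; simp [vandermonde, h])
    simp [rho, this]

lemma measurable_rho {m : ℕ} (a : Fin (m + 1) → ℝ) : Measurable (rho a) := by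
  refine Measurable.mul (measurable_vdm.div_const _) ?_
  have : Measurable fun x : Fin m → ℝ => (Matrix.of fun j k : Fin m =>
      max (a k.succ - x j) 0 - max (a k.castSucc - x j) 0).det := by
    refine Continuous.measurable (Continuous.matrix_det ?_)
    refine continuous_matrix fun i j => ?_
    simp only [Matrix.of_apply]
    fun_prop
  simpa only [← det_Mx1] using this

lemma Dmat_perm {m : ℕ} {x : Fin m → ℝ} (hx : ∀ j, 0 < x j) (hi : Function.Injective x)
    (σ : Equiv.Perm (Fin m)) : ∃ h : OG (2 * m), Dmat (x ∘ σ) = cj h (Dmat x) := by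
  refine nf_even _ (Dmat_t _) x hx hi fun j => ?_
  have hl : 2 * (σ.symm j).val < 2 * m := by have := (σ.symm j).isLt; omega
  refine ⟨Pi.single ⟨2 * (σ.symm j).val, hl⟩ 1, by simp, ?_⟩
  rw [Matrix.mulVec_mulVec, Dmat_sq, Matrix.neg_mulVec, Matrix.diagonal_mulVec_single, blk_even,
    neg_smul, ← Pi.single_smul]
  simp

lemma lint_Dmat_perm {m : ℕ} {x : Fin m → ℝ} (hx : ∀ j, 0 < x j) (hi : Function.Injective x)
    (σ : Equiv.Perm (Fin m)) (μ : Measure (OG (2 * m))) [μ.IsHaarMeasure] [IsProbabilityMeasure μ]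
    (φ : Matrix (Fin (2 * m)) (Fin (2 * m)) ℝ → ℝ≥0∞) :
    avg μ φ (Dmat (x ∘ σ)) = avg μ φ (Dmat x) := by
  obtain ⟨h, hh⟩ := Dmat_perm hx hi σ
  rw [hh, avg_cj]

/-- The main identity, for nonnegative test functions. -/
lemma main_l {m : ℕ} {a : Fin (m + 1) → ℝ} (ha : ∀ j, 0 < a j) (ha' : Function.Injective a)
    (μ : Measure (OG (2 * m + 1 + 1))) [μ.IsHaarMeasure] [IsProbabilityMeasure μ]
    (μ' : Measure (OG (2 * m))) [μ'.IsHaarMeasure] [IsProbabilityMeasure μ']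
    {φ : Matrix (Fin (2 * m)) (Fin (2 * m)) ℝ → ℝ≥0∞} (hφ : Measurable φ) :
    ∫⁻ k, φ (crn (crn (cj k (Dmat a : Matrix (Fin (2 * (m + 1))) (Fin (2 * (m + 1))) ℝ)))) ∂μ =
      ∫⁻ x in orth m, ENNReal.ofReal (((2 * m).factorial / m.factorial : ℝ) * rho a x) *
        avg μ' φ (Dmat x) := by
  have h1 : ∫⁻ k, φ (crn (crn (cj k (Dmat a : Matrix (Fin (2 * (m + 1))) (Fin (2 * (m + 1))) ℝ)))) ∂μ
    = ∫⁻ k, φ (crn (crn (cj k (Dmat (a ∘ Tuple.sort a) :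
        Matrix (Fin (2 * (m + 1))) (Fin (2 * (m + 1))) ℝ)))) ∂μ :=
    (lint_Dmat_perm (m := m + 1) ha ha' (Tuple.sort a) μ
      (fun Y => φ (crn (N := 2 * m) (crn (N := 2 * m + 1) Y)))).symm
  rw [h1, comb (sort_strict ha') (ha _).le μ μ' hφ]
  have h2 : ∫⁻ x in Srt m, ENNReal.ofReal
        (vdm (fun i => x i ^ 2) / vdm (fun j => (a ∘ Tuple.sort a) j ^ 2) *
          (Mx x (a ∘ Tuple.sort a)).det) * avg μ' φ (Dmat x) =
      ∫⁻ x in Srt m, ENNReal.ofReal (rho a x) * avg μ' φ (Dmat x) :=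
    lintegral_congr fun x => by rw [← rho_perm' a x (Tuple.sort a)]; rfl
  rw [h2]
  have hm : Measurable fun x : Fin m → ℝ => ENNReal.ofReal (rho a x) * avg μ' φ (Dmat x) :=
    (ENNReal.measurable_ofReal.comp (measurable_rho a)).mul
      ((measurable_avg μ' hφ).comp measurable_Dmat)
  have h3 := lint_symm hm (fun σ x hx => by
    rw [rho_perm, lint_Dmat_perm hx.2 hx.1.injective])
  have hf : (0 : ℝ) < m.factorial := by exact_mod_cast m.factorial_pos
  have hf2 : ENNReal.ofReal ((2 * m).factorial) =
      ENNReal.ofReal ((2 * m).factorial / m.factorial : ℝ) * (m.factorial : ℝ≥0∞) := by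
    rw [← ENNReal.ofReal_natCast m.factorial, ← ENNReal.ofReal_mul (by positivity)]
    congr 1; field_simp
  rw [hf2, mul_assoc, ← h3, ← lintegral_const_mul' _ _ ENNReal.ofReal_ne_top]
  refine lintegral_congr fun x => ?_
  rw [← mul_assoc, ← ENNReal.ofReal_mul (by positivity)]


lemma measurable_cpw (w : ℂ) : Measurable fun t : ℝ => cpw t w := by
  unfold cpw
  refine Measurable.ite (measurableSet_singleton 0) measurable_const ?_
  have : Measurable fun t : ℝ => ((Real.log t : ℝ) : ℂ) :=
    Complex.measurable_ofReal.comp Real.measurable_log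
  exact Complex.measurable_exp.comp (this.const_mul w)

lemma cpw_bound {w : ℂ} (hw : 0 ≤ w.re) {t C : ℝ} (ht : |t| ≤ C) :
    ‖cpw t w‖ ≤ Real.exp (w.re * Real.log C) := by
  unfold cpw
  split_ifs with h
  · simpa using (Real.exp_pos _).le
  · rw [Complex.norm_exp]
    have : (w * (Real.log t : ℂ)).re = w.re * Real.log t := by simp
    rw [this]
    refine Real.exp_le_exp.2 (mul_le_mul_of_nonneg_left ?_ hw)
    rw [← Real.log_abs]
    exact Real.log_le_log (abs_pos.2 h) ht

def Fs (m : ℕ) (s : Fin m → ℂ) (Y : Matrix (Fin (2 * m)) (Fin (2 * m)) ℝ) : ℂ :=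
  ∏ j : Fin m, cpw ((Y.submatrix
          (Fin.castLE (by have := j.isLt; omega : 2 * (j.val + 1) ≤ 2 * m))
          (Fin.castLE (by have := j.isLt; omega : 2 * (j.val + 1) ≤ 2 * m))).det) (expo m s j)

lemma measurable_Fs (m : ℕ) (s : Fin m → ℂ) : Measurable (Fs m s) := by
  unfold Fs
  refine Finset.measurable_prod _ fun j _ => ?_
  refine (measurable_cpw _).comp (Continuous.measurable ?_)
  exact Continuous.matrix_det (continuous_id.matrix_submatrix _ _)

lemma Fs_bound (m : ℕ) (s : Fin m → ℂ) (hs : ∀ j, 0 ≤ (expo m s j).re)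
    {N : ℕ} (T : OG N → Matrix (Fin (2 * m)) (Fin (2 * m)) ℝ) (hT : Continuous T) :
    ∃ C, ∀ k, ‖Fs m s (T k)‖ ≤ C := by
  have : ∀ j : Fin m, ∃ C, ∀ k, ‖cpw (((T k).submatrix
          (Fin.castLE (by have := j.isLt; omega : 2 * (j.val + 1) ≤ 2 * m))
          (Fin.castLE (by have := j.isLt; omega : 2 * (j.val + 1) ≤ 2 * m))).det) (expo m s j)‖ ≤ C := by
    intro j
    have hc : Continuous fun k => (((T k).submatrix
          (Fin.castLE (by have := j.isLt; omega : 2 * (j.val + 1) ≤ 2 * m))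
          (Fin.castLE (by have := j.isLt; omega : 2 * (j.val + 1) ≤ 2 * m))).det) :=
      Continuous.matrix_det (hT.matrix_submatrix _ _)
    obtain ⟨C, hC⟩ := (isCompact_univ (X := OG N)).exists_bound_of_continuousOn hc.continuousOn
    exact ⟨_, fun k => cpw_bound (hs j) (hC k (Set.mem_univ _))⟩
  choose C hC using this
  refine ⟨∏ j, C j, fun k => ?_⟩
  rw [Fs, norm_prod]
  exact Finset.prod_le_prod (fun _ _ => norm_nonneg _) fun j _ => hC j k

lemma main_c {m : ℕ} {a : Fin (m + 1) → ℝ} (ha : ∀ j, 0 < a j) (ha' : Function.Injective a)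
    (μ : Measure (OG (2 * m + 1 + 1))) [μ.IsHaarMeasure] [IsProbabilityMeasure μ]
    (μ' : Measure (OG (2 * m))) [μ'.IsHaarMeasure] [IsProbabilityMeasure μ']
    {F : Matrix (Fin (2 * m)) (Fin (2 * m)) ℝ → ℂ} (hF : Measurable F)
    (hb : ∃ C, ∀ k : OG (2 * m + 1 + 1),
      ‖F (crn (crn (cj k (Dmat a : Matrix (Fin (2 * (m + 1))) (Fin (2 * (m + 1))) ℝ))))‖ ≤ C) :
    ∫ k, F (crn (crn (cj k (Dmat a : Matrix (Fin (2 * (m + 1))) (Fin (2 * (m + 1))) ℝ)))) ∂μ =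
      ∫ x in orth m, (((2 * m).factorial / m.factorial : ℝ) * rho a x : ℝ) •
        ∫ k, F (cj k (Dmat x)) ∂μ' := by
  let T1 : OG (2 * m + 1 + 1) → Matrix (Fin (2 * m)) (Fin (2 * m)) ℝ := fun k =>
    crn (crn (cj k (Dmat a : Matrix (Fin (2 * (m + 1))) (Fin (2 * (m + 1))) ℝ)))
  have hT1 : Measurable T1 := continuous_crn.measurable.comp (measurable_crn_cj _)
  let T2 : (Fin m → ℝ) × OG (2 * m) → Matrix (Fin (2 * m)) (Fin (2 * m)) ℝ := fun p =>
    cj p.2 (Dmat p.1)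
  have hT2 : Measurable T2 := measurable_cj' measurable_snd (measurable_Dmat.comp measurable_fst)
  let c : ℝ := (2 * m).factorial / m.factorial
  have hc : 0 ≤ c := by positivity
  let d : (Fin m → ℝ) → ℝ≥0∞ := fun x => ENNReal.ofReal (c * rho a x)
  have hd : Measurable d := ENNReal.measurable_ofReal.comp ((measurable_rho a).const_mul c)
  let P : Measure (Fin m → ℝ) := (volume.restrict (orth m)).withDensity d
  have hmeas : μ.map T1 = (P.prod μ').map T2 := by
    refine Measure.ext_of_lintegral _ fun φ hφ => ?_
    rw [lintegral_map hφ hT1, lintegral_map hφ hT2, lintegral_prod (fun p => φ (T2 p)) (hφ.comp hT2).aemeasurable]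
    have hm : Measurable fun x : Fin m → ℝ => ∫⁻ k, φ (T2 (x, k)) ∂μ' :=
      (hφ.comp hT2).lintegral_prod_right'
    rw [lintegral_withDensity_eq_lintegral_mul _ hd hm]
    exact main_l ha ha' μ μ' hφ
  have hint : Integrable (fun k => F (T1 k)) μ := by
    obtain ⟨C, hC⟩ := hb
    exact Integrable.of_bound (hF.comp hT1).aestronglyMeasurable C (ae_of_all _ hC)
  have hint2 : Integrable (fun p => F (T2 p)) (P.prod μ') := by
    have h1 : Integrable F (μ.map T1) :=
      (integrable_map_measure hF.aestronglyMeasurable hT1.aemeasurable).2 hint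
    rw [hmeas] at h1
    exact (integrable_map_measure hF.aestronglyMeasurable hT2.aemeasurable).1 h1
  have e1 : ∫ k, F (T1 k) ∂μ = ∫ p, F (T2 p) ∂(P.prod μ') := by
    rw [← integral_map hT1.aemeasurable hF.aestronglyMeasurable, hmeas,
      integral_map hT2.aemeasurable hF.aestronglyMeasurable]
  refine e1.trans ?_
  rw [integral_prod _ hint2, integral_withDensity_eq_integral_toReal_smul hd
    (ae_of_all _ fun x => ENNReal.ofReal_lt_top)]
  refine setIntegral_congr_fun (orth_meas m) fun x hx => ?_
  simp only [d]
  rw [ENNReal.toReal_ofReal (mul_nonneg hc (rho_nn ha ha' hx))]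

lemma log_det_Dmat {m : ℕ} {a : Fin m → ℝ} (ha : ∀ j, 0 < a j) :
    (Dmat a).det ≠ 0 ∧ Real.log (Dmat a).det = 2 * Real.log (∏ j, a j) := by
  have h : (Dmat a).det * (Dmat a).det = ∏ i, -(a (blk i) ^ 2) := by
    rw [← Matrix.det_mul, Dmat_sq, Matrix.diagonal_neg, Matrix.det_diagonal]
  have h1 : (Dmat a).det ≠ 0 := by
    intro h0
    rw [h0, mul_zero] at h
    have : ∏ i : Fin (2 * m), -(a (blk i) ^ 2) ≠ 0 := Finset.prod_ne_zero_iff.2 fun i _ =>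
      neg_ne_zero.2 (pow_ne_zero _ (ha _).ne')
    exact this h.symm
  refine ⟨h1, ?_⟩
  have h2 := congrArg Real.log h
  rw [Real.log_mul h1 h1, Real.log_prod (fun i _ => neg_ne_zero.2 (pow_ne_zero _ (ha _).ne')),
    sum_blk] at h2
  simp only [blk_even, blk_odd, Real.log_neg_eq_log, Real.log_pow] at h2
  rw [Real.log_prod (fun i _ => (ha i).ne'), Finset.mul_sum]
  have h3 : ∑ x, ((2 : ℕ) * Real.log (a x) + (2 : ℕ) * Real.log (a x)) =
      2 * ∑ i, 2 * Real.log (a i) := by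
    rw [Finset.mul_sum]; exact Finset.sum_congr rfl fun i _ => by push_cast; ring
  rw [h3] at h2
  linarith

lemma det_cj {N : ℕ} (k : OG N) (X : Matrix (Fin N) (Fin N) ℝ) : (cj k X).det = X.det := by
  have h := congrArg Matrix.det (og_mul_t k)
  rw [Matrix.det_mul, Matrix.det_one] at h
  rw [cj, Matrix.det_mul, Matrix.det_mul]
  linear_combination X.det * h

lemma final {m : ℕ}
    (μ : Measure (OG (2 * (m + 1)))) (hμ : μ.IsHaarMeasure) (hμ1 : IsProbabilityMeasure μ)
    (μ' : Measure (OG (2 * m))) (hμ' : μ'.IsHaarMeasure)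
    (hμ1' : IsProbabilityMeasure μ')
    (a : Fin (m + 1) → ℝ) (ha : ∀ j, 0 < a j) (ha' : Function.Injective a)
    (s : Fin (m + 1) → ℂ)
    (hre : ∀ j : Fin (m + 1), ∀ h : j.val + 1 < m + 1, 2 ≤ (s j - s ⟨j.val + 1, h⟩).re) :
    sphInt (m + 1) μ s (Dmat a) =
      (((2 * m).factorial : ℂ) / (m.factorial : ℂ)) *
        cpw (∏ j, a j) (s (Fin.last m) + ((m + 1 : ℕ) : ℂ) - 1) *
          ∫ x in orth m, ((rho a x : ℝ) : ℂ) *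
              sphInt m μ' (fun j : Fin m => s j.castSucc - s (Fin.last m) - ((m + 1 : ℕ) : ℂ))
                (Dmat x) := by
  set s' : Fin m → ℂ := fun j : Fin m => s j.castSucc - s (Fin.last m) - ((m + 1 : ℕ) : ℂ) with hs'
  have hex : ∀ j : Fin m, expo (m + 1) s j.castSucc = expo m s' j := by
    intro j
    unfold expo
    have h1 : j.castSucc.val + 1 < m + 1 := by have := j.isLt; simp
    rw [dif_pos h1]
    split_ifs with h2
    · simp only [hs']
      have : (Fin.castSucc ⟨j.val + 1, h2⟩ : Fin (m + 1)) = ⟨j.castSucc.val + 1, h1⟩ := by ext; simp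
      rw [this]; ring
    · have : Fin.last m = ⟨j.castSucc.val + 1, h1⟩ := by
        have := j.isLt
        ext; simp; omega
      simp only [hs']
      rw [this]; push_cast; ring
  have hpos : ∀ j, 0 ≤ (expo m s' j).re := by
    intro j
    rw [← hex j]
    have h1 : j.castSucc.val + 1 < m + 1 := by have := j.isLt; simp
    have := hre j.castSucc h1
    unfold expo
    rw [dif_pos h1]
    have e : ∀ z : ℂ, (z / 2 - 1).re = z.re / 2 - 1 := fun z => by simp
    rw [e]
    linarith
  have hlast : ∀ k : OG (2 * (m + 1)), cpw ((((k : Matrix (Fin (2 * (m + 1))) (Fin (2 * (m + 1))) ℝ) *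
        Dmat a * (k : Matrix (Fin (2 * (m + 1))) (Fin (2 * (m + 1))) ℝ)ᵀ).submatrix
          (Fin.castLE (by have := (Fin.last m).isLt; omega :
            2 * ((Fin.last m).val + 1) ≤ 2 * (m + 1)))
          (Fin.castLE (by have := (Fin.last m).isLt; omega :
            2 * ((Fin.last m).val + 1) ≤ 2 * (m + 1)))).det) (expo (m + 1) s (Fin.last m)) =
      cpw (∏ j, a j) (s (Fin.last m) + ((m + 1 : ℕ) : ℂ) - 1) := by
    intro k
    have e : ((k : Matrix (Fin (2 * (m + 1))) (Fin (2 * (m + 1))) ℝ) *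
        Dmat a * (k : Matrix (Fin (2 * (m + 1))) (Fin (2 * (m + 1))) ℝ)ᵀ).submatrix
          (Fin.castLE (by have := (Fin.last m).isLt; omega :
            2 * ((Fin.last m).val + 1) ≤ 2 * (m + 1)))
          (Fin.castLE (by have := (Fin.last m).isLt; omega :
            2 * ((Fin.last m).val + 1) ≤ 2 * (m + 1))) = cj k (Dmat a) := rfl
    rw [e]
    have e2 : (cj k (Dmat a)).det = (Dmat a).det := det_cj k _
    have hl := log_det_Dmat ha
    have hp : (∏ j, a j) ≠ 0 := (Finset.prod_pos fun j _ => ha j).ne'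
    have e3 : cpw (cj k (Dmat a)).det (expo (m + 1) s (Fin.last m)) =
        Complex.exp (expo (m + 1) s (Fin.last m) * (2 * Real.log (∏ j, a j) : ℝ)) := by
      rw [e2, cpw, if_neg hl.1, hl.2]
    refine e3.trans ?_
    rw [cpw, if_neg hp]
    congr 1
    unfold expo
    rw [dif_neg (by simp)]
    push_cast; ring
  have hL : sphInt (m + 1) μ s (Dmat a) =
      (∫ k : OG (2 * m + 1 + 1), Fs m s' (crn (crn (cj k (Dmat a :
        Matrix (Fin (2 * (m + 1))) (Fin (2 * (m + 1))) ℝ)))) ∂μ) *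
        cpw (∏ j, a j) (s (Fin.last m) + ((m + 1 : ℕ) : ℂ) - 1) := by
    refine Eq.trans ?_ (integral_mul_const (α := OG (2 * m + 1 + 1)) (μ := μ) _ _)
    refine integral_congr_ae (ae_of_all _ fun k => ?_)
    simp only
    rw [Fin.prod_univ_castSucc, hlast k]
    congr 1
    refine Finset.prod_congr rfl fun j _ => ?_
    rw [hex j]
    rfl
  have hb : ∃ C, ∀ k : OG (2 * m + 1 + 1),
      ‖Fs m s' (crn (crn (cj k (Dmat a : Matrix (Fin (2 * (m + 1))) (Fin (2 * (m + 1))) ℝ))))‖ ≤ C := by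
    refine Fs_bound m s' hpos (N := 2 * m + 1 + 1) (fun k => crn (crn (cj k (Dmat a :
      Matrix (Fin (2 * (m + 1))) (Fin (2 * (m + 1))) ℝ)))) ?_
    refine continuous_crn.comp (continuous_crn.comp ?_)
    exact continuous_cj.comp (continuous_id.prodMk continuous_const)
  have hμa : Measure.IsHaarMeasure (G := OG (2 * m + 1 + 1)) μ := hμ
  have hμb : IsProbabilityMeasure (α := OG (2 * m + 1 + 1)) μ := hμ1
  rw [hL, main_c ha ha' μ μ' (measurable_Fs m s') hb]
  have e5 : ∀ x : Fin m → ℝ, (((2 * m).factorial / m.factorial : ℝ) * rho a x : ℝ) •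
        ∫ k, Fs m s' (cj k (Dmat x)) ∂μ' = (((2 * m).factorial : ℂ) / (m.factorial : ℂ)) *
          (((rho a x : ℝ) : ℂ) * sphInt m μ' s' (Dmat x)) := by
    intro x
    rw [Complex.real_smul]
    push_cast
    rw [mul_assoc]
    rfl
  simp_rw [e5]
  rw [integral_const_mul]
  ring


/-- Lemma A.4: recursion in the dimension for `f_n(s, D(a))`. -/
theorem sphInt_recursion (n : ℕ) (hn : 2 ≤ n)
    (μ : Measure (OG (2 * n))) (hμ : μ.IsHaarMeasure) (hμ1 : IsProbabilityMeasure μ)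
    (μ' : Measure (OG (2 * (n - 1)))) (hμ' : μ'.IsHaarMeasure)
    (hμ1' : IsProbabilityMeasure μ')
    (a : Fin n → ℝ) (ha : ∀ j, 0 < a j) (ha' : Function.Injective a)
    (s : Fin n → ℂ)
    (hre : ∀ j : Fin n, ∀ h : j.val + 1 < n, 2 ≤ (s j - s ⟨j.val + 1, h⟩).re) :
    sphInt n μ s (Dmat a) =
      ((Nat.factorial (2 * n - 2) : ℂ) / (Nat.factorial (n - 1) : ℂ)) *
        cpw (∏ j, a j) (s ⟨n - 1, by omega⟩ + (n : ℂ) - 1) *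
          ∫ x in {x : Fin (n - 1) → ℝ | ∀ j, 0 < x j},
            (((vdm fun j => (x j) ^ 2) / (vdm fun j => (a j) ^ 2) * (Mxa x a hn).det : ℝ) : ℂ) *
              sphInt (n - 1) μ'
                (fun j : Fin (n - 1) =>
                  s ⟨j.val, by have := j.isLt; omega⟩ - s ⟨n - 1, by omega⟩ - (n : ℂ))
                (Dmat x) := by
  obtain ⟨m, rfl⟩ : ∃ m, n = m + 1 := ⟨n - 1, by omega⟩
  have h := final μ hμ hμ1 μ' hμ' hμ1' a ha ha' s hre
  have e : ∀ x : Fin m → ℝ, rho a x =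
      (vdm fun j => (x j) ^ 2) / (vdm fun j => (a j) ^ 2) * (Mxa (n := m + 1) x a hn).det := by
    intro x; rw [Mxa_eq]; rfl
  simp only [e] at h
  exact h

end
end

section
/- Let ν > −1/2 be real. Then for every bounded measurable ψ : (0,∞) → ℝ, ∫_{M₂(ℝ)} ψ(|det z|) · |det z|^{2ν} · exp(−Tr(z zᵀ)/2) dz = 4π² · ∫₀^∞ ψ(t) · t^{2ν} · e^{−t} dt, where the left integral is with respect to Lebesgue measure on the space M₂(ℝ) ≅ ℝ⁴ of 2×2 real matrices. -/
open MeasureTheory Matrix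

noncomputable section

lemma L_lin (K : ℝ → ℝ → ENNReal) (hK : Measurable (Function.uncurry K)) :
    ∫⁻ b, ∫⁻ c, K b c = 2 * ∫⁻ p, ∫⁻ q, K (p + q) (p - q) := by
  have h1 : ∀ b, ∫⁻ c, K b c = 2 * ∫⁻ q, K b (b - 2 * q) := by
    intro b
    have e := Real.smul_map_volume_mul_left (a := 2) (by norm_num)
    have m : Measurable (K b) := hK.of_uncurry_left
    calc ∫⁻ c, K b c = ∫⁻ c, K b (b - c) := (lintegral_sub_left_eq_self _ b).symm
      _ = ∫⁻ c, K b (b - c) ∂(ENNReal.ofReal |2| • Measure.map (2 * ·) volume) := by rw [e]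
      _ = _ := by
        rw [lintegral_smul_measure, lintegral_map (by fun_prop) (by fun_prop)]
        simp
  simp_rw [h1]
  rw [lintegral_const_mul _ (by fun_prop), lintegral_lintegral_swap (by fun_prop),
    lintegral_lintegral_swap (f := fun p q => K (p + q) (p - q)) (by fun_prop)]
  congr 2
  ext q
  rw [← lintegral_add_right_eq_self _ q]
  congr 1
  ext p
  congr 1
  ring

lemma L_polar (h : ℝ → ENNReal) (hh : Measurable h) :
    ∫⁻ p : ℝ, ∫⁻ s : ℝ, h (p ^ 2 + s ^ 2) = ENNReal.ofReal Real.pi * ∫⁻ u in Set.Ioi (0:ℝ), h u := by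
  have e : ∫⁻ u in Set.Ioi (0:ℝ), h u = ∫⁻ r in Set.Ioi (0:ℝ), ENNReal.ofReal (2 * r) * h (r ^ 2) := by
    have im : (fun r : ℝ => r ^ 2) '' Set.Ioi 0 = Set.Ioi 0 := by
      ext x
      constructor
      · rintro ⟨r, hr, rfl⟩
        exact pow_pos (Set.mem_Ioi.1 hr) 2
      · intro hx
        exact ⟨√x, Real.sqrt_pos.2 hx, Real.sq_sqrt (le_of_lt hx)⟩
    conv_lhs => rw [← im]
    rw [lintegral_image_eq_lintegral_abs_deriv_mul (f' := fun r => 2 * r) measurableSet_Ioi]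
    · apply setLIntegral_congr_fun measurableSet_Ioi
      intro r hr
      have : (0:ℝ) < r := hr
      simp only
      rw [abs_of_pos (by positivity)]
    · intro x hx
      have := (hasDerivAt_pow 2 x).hasDerivWithinAt (s := Set.Ioi 0)
      simpa using this
    · intro a ha b hb hab
      exact (pow_left_inj₀ (le_of_lt ha) (le_of_lt hb) two_ne_zero).1 hab
  have f : ∫⁻ p : ℝ, ∫⁻ s : ℝ, h (p ^ 2 + s ^ 2) = ∫⁻ x : ℝ × ℝ, h (x.1 ^ 2 + x.2 ^ 2) := by
    rw [Measure.volume_eq_prod, lintegral_prod _ (by fun_prop)]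
  rw [f, ← lintegral_comp_polarCoord_symm, e, polarCoord_target, Measure.volume_eq_prod, ← Measure.prod_restrict,
    lintegral_prod _ (by fun_prop)]
  have g : ∀ r θ : ℝ, h ((polarCoord.symm (r, θ)).1 ^ 2 + (polarCoord.symm (r, θ)).2 ^ 2) = h (r ^ 2) := by
    intro r θ
    simp only [polarCoord_symm_apply]
    congr 1
    linear_combination r ^ 2 * Real.sin_sq_add_cos_sq θ
  simp_rw [g]
  simp only [lintegral_const, Measure.restrict_apply MeasurableSet.univ, Set.univ_inter, Real.volume_Ioo]
  rw [← lintegral_const_mul _ (by fun_prop)]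
  congr 1
  ext r
  rw [ENNReal.ofReal_mul (by norm_num), smul_eq_mul, show Real.pi - -Real.pi = 2 * Real.pi by ring, ENNReal.ofReal_mul (by norm_num)]
  ring

lemma L_expInt (c t : ℝ) : ∫⁻ v in Set.Ioi c, ENNReal.ofReal (Real.exp (-(2 * v + t)))
    = ENNReal.ofReal (Real.exp (-(2 * c + t)) / 2) := by
  have e : ∀ v, Real.exp (-(2 * v + t)) = Real.exp (-t) * Real.exp ((-2) * v) := by
    intro v
    rw [← Real.exp_add]; congr 1; ring
  simp_rw [e]
  rw [← ofReal_integral_eq_lintegral_ofReal]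
  · rw [integral_const_mul, integral_exp_mul_Ioi (by norm_num)]
    congr 1
    ring
  · exact (integrableOn_exp_mul_Ioi (by norm_num) c).const_mul _
  · exact Filter.Eventually.of_forall fun v => by positivity

lemma L_even (h : ℝ → ENNReal) :
    ∫⁻ t, h |t| = 2 * ∫⁻ t in Set.Ioi (0:ℝ), h t := by
  rw [← lintegral_add_compl _ (measurableSet_Ioi (a := (0:ℝ))), two_mul]
  congr 1
  · apply setLIntegral_congr_fun measurableSet_Ioi
    intro t ht
    simp only [abs_of_pos (Set.mem_Ioi.1 ht)]
  · rw [Set.compl_Ioi, ← setLIntegral_congr Iio_ae_eq_Iic]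
    have := (Measure.measurePreserving_neg (volume : Measure ℝ)).setLIntegral_comp_preimage_emb
      (MeasurableEquiv.neg ℝ).measurableEmbedding h (Set.Ioi 0)
    rw [← this]
    have e : (Neg.neg ⁻¹' Set.Ioi (0:ℝ)) = Set.Iio 0 := by
      ext; simp
    rw [e]
    apply setLIntegral_congr_fun measurableSet_Iio
    intro t ht
    simp only [abs_of_neg (Set.mem_Iio.1 ht)]

lemma L_exp (g : ℝ → ENNReal) (hg : Measurable g) :
    ∫⁻ u in Set.Ioi (0:ℝ), ∫⁻ v in Set.Ioi (0:ℝ), g |u - v| * ENNReal.ofReal (Real.exp (-(u + v)))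
     = ∫⁻ t in Set.Ioi (0:ℝ), g t * ENNReal.ofReal (Real.exp (-t)) := by
  rw [lintegral_lintegral_swap (by fun_prop)]
  have h1 : ∀ v : ℝ, ∫⁻ u in Set.Ioi (0:ℝ), g |u - v| * ENNReal.ofReal (Real.exp (-(u + v)))
      = ∫⁻ t, g |t| * (Set.Ioi (-t)).indicator (fun v => ENNReal.ofReal (Real.exp (-(2 * v + t)))) v := by
    intro v
    rw [← lintegral_indicator measurableSet_Ioi, ← lintegral_add_right_eq_self _ v]
    congr 1
    ext t
    by_cases ht : 0 < t + v
    · rw [Set.indicator_of_mem (by exact ht), Set.indicator_of_mem (by simp only [Set.mem_Ioi]; linarith)]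
      congr 3
      · ring_nf
      · ring_nf
    · rw [Set.indicator_of_notMem (by exact ht), Set.indicator_of_notMem (by simp only [Set.mem_Ioi]; linarith), mul_zero]
  simp_rw [h1]
  have hm : Measurable (Function.uncurry fun v t : ℝ => g |t| *
      (Set.Ioi (-t)).indicator (fun v => ENNReal.ofReal (Real.exp (-(2 * v + t)))) v) := by
    have : (Function.uncurry fun v t : ℝ => g |t| *
      (Set.Ioi (-t)).indicator (fun v => ENNReal.ofReal (Real.exp (-(2 * v + t)))) v) =
      fun x : ℝ × ℝ => g |x.2| * ({x : ℝ × ℝ | -x.2 < x.1}.indicator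
        (fun x => ENNReal.ofReal (Real.exp (-(2 * x.1 + x.2)))) x) := by
      ext x
      rfl
    rw [this]
    refine Measurable.mul (by fun_prop) (Measurable.indicator (by fun_prop) ?_)
    exact measurableSet_lt (by fun_prop) (by fun_prop)
  rw [lintegral_lintegral_swap hm.aemeasurable]
  have h2 : ∀ t : ℝ, ∫⁻ v in Set.Ioi (0:ℝ), g |t| *
      (Set.Ioi (-t)).indicator (fun v => ENNReal.ofReal (Real.exp (-(2 * v + t)))) v
      = g |t| * ENNReal.ofReal (Real.exp (-|t|) / 2) := by
    intro t
    rw [lintegral_const_mul _ (Measurable.indicator (by fun_prop) measurableSet_Ioi),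
      lintegral_indicator measurableSet_Ioi, Measure.restrict_restrict measurableSet_Ioi,
      Set.Ioi_inter_Ioi, L_expInt]
    congr 4
    rcases le_total 0 t with h | h
    · rw [abs_of_nonneg h, sup_of_le_right (by linarith)]; ring
    · rw [abs_of_nonpos h, sup_of_le_left (by linarith)]; ring
  simp_rw [h2]
  rw [L_even (fun t => g t * ENNReal.ofReal (Real.exp (-t) / 2)), ← lintegral_const_mul _ (by fun_prop)]
  congr 1
  ext t
  rw [mul_left_comm, ← ENNReal.ofReal_ofNat 2, ← ENNReal.ofReal_mul (by norm_num)]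
  congr 2
  ring

lemma L_swap4 (F : ℝ → ℝ → ℝ → ℝ → ENNReal)
    (hF : Measurable fun x : ℝ × ℝ × ℝ × ℝ => F x.1 x.2.1 x.2.2.1 x.2.2.2) :
    ∫⁻ a, ∫⁻ b, ∫⁻ c, ∫⁻ d, F a b c d = ∫⁻ a, ∫⁻ d, ∫⁻ b, ∫⁻ c, F a b c d := by
  congr 1
  ext a
  have h1 : ∀ b, ∫⁻ c, ∫⁻ d, F a b c d = ∫⁻ d, ∫⁻ c, F a b c d := fun b =>
    lintegral_lintegral_swap
      (hF.comp (f := fun x : ℝ × ℝ => (a, b, x.1, x.2)) (by fun_prop)).aemeasurable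
  simp_rw [h1]
  apply lintegral_lintegral_swap
  apply Measurable.aemeasurable
  exact Measurable.lintegral_prod_right' (f := fun x : (ℝ × ℝ) × ℝ => F a x.1.1 x.2 x.1.2)
    (hF.comp (f := fun x : (ℝ × ℝ) × ℝ => (a, x.1.1, x.2, x.1.2)) (by fun_prop))

lemma L_main (g : ℝ → ENNReal) (hg : Measurable g) :
    ∫⁻ a : ℝ, ∫⁻ b : ℝ, ∫⁻ c : ℝ, ∫⁻ d : ℝ, g |a * d - b * c| *
        ENNReal.ofReal (Real.exp (-(a ^ 2 + b ^ 2 + c ^ 2 + d ^ 2) / 2))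
      = ENNReal.ofReal (4 * Real.pi ^ 2) *
        ∫⁻ t in Set.Ioi (0:ℝ), g t * ENNReal.ofReal (Real.exp (-t)) := by
  rw [L_swap4 _ (by fun_prop)]
  have h1 : ∀ a d : ℝ, ∫⁻ b : ℝ, ∫⁻ c : ℝ, g |a * d - b * c| *
        ENNReal.ofReal (Real.exp (-(a ^ 2 + b ^ 2 + c ^ 2 + d ^ 2) / 2)) =
      2 * ∫⁻ r : ℝ, ∫⁻ s : ℝ, g |a * d - (r + s) * (r - s)| *
        ENNReal.ofReal (Real.exp (-(a ^ 2 + (r + s) ^ 2 + (r - s) ^ 2 + d ^ 2) / 2)) :=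
    fun a d => L_lin (fun b c => g |a * d - b * c| *
        ENNReal.ofReal (Real.exp (-(a ^ 2 + b ^ 2 + c ^ 2 + d ^ 2) / 2))) (by fun_prop)
  simp_rw [h1]
  rw [L_lin _ (by fun_prop)]
  have h2 : ∀ p q r s : ℝ, g |(p + q) * (p - q) - (r + s) * (r - s)| *
        ENNReal.ofReal (Real.exp (-((p + q) ^ 2 + (r + s) ^ 2 + (r - s) ^ 2 + (p - q) ^ 2) / 2))
      = g |(p ^ 2 + s ^ 2) - (q ^ 2 + r ^ 2)| *
        ENNReal.ofReal (Real.exp (-((p ^ 2 + s ^ 2) + (q ^ 2 + r ^ 2)))) := by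
    intro p q r s
    congr 3 <;> ring_nf
  simp_rw [h2]
  have h3 : ∀ p, ∫⁻ q : ℝ, 2 * ∫⁻ r : ℝ, ∫⁻ s : ℝ, g |(p ^ 2 + s ^ 2) - (q ^ 2 + r ^ 2)| *
        ENNReal.ofReal (Real.exp (-((p ^ 2 + s ^ 2) + (q ^ 2 + r ^ 2)))) =
      2 * ∫⁻ q : ℝ, ∫⁻ r : ℝ, ∫⁻ s : ℝ, g |(p ^ 2 + s ^ 2) - (q ^ 2 + r ^ 2)| *
        ENNReal.ofReal (Real.exp (-((p ^ 2 + s ^ 2) + (q ^ 2 + r ^ 2)))) :=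
    fun p => lintegral_const_mul _ (by fun_prop)
  simp_rw [h3]
  rw [lintegral_const_mul _ (by fun_prop), L_swap4 _ (by fun_prop)]
  have h4 : ∀ p s : ℝ, ∫⁻ q : ℝ, ∫⁻ r : ℝ, g |(p ^ 2 + s ^ 2) - (q ^ 2 + r ^ 2)| *
        ENNReal.ofReal (Real.exp (-((p ^ 2 + s ^ 2) + (q ^ 2 + r ^ 2)))) =
      ENNReal.ofReal Real.pi * ∫⁻ v in Set.Ioi (0:ℝ), g |(p ^ 2 + s ^ 2) - v| *
        ENNReal.ofReal (Real.exp (-((p ^ 2 + s ^ 2) + v))) :=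
    fun p s => L_polar (fun v => g |(p ^ 2 + s ^ 2) - v| *
        ENNReal.ofReal (Real.exp (-((p ^ 2 + s ^ 2) + v)))) (by fun_prop)
  simp_rw [h4]
  rw [L_polar (fun u => ENNReal.ofReal Real.pi * ∫⁻ v in Set.Ioi (0:ℝ), g |u - v| *
        ENNReal.ofReal (Real.exp (-(u + v)))) (by fun_prop), lintegral_const_mul _ (by fun_prop),
    L_exp g hg, ENNReal.ofReal_mul (by norm_num), ENNReal.ofReal_pow Real.pi_pos.le,
    show (4:ℝ) = 2 * 2 by norm_num, ENNReal.ofReal_mul (by norm_num), ENNReal.ofReal_ofNat]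
  ring

lemma L_pi (F : (Fin 2 → Fin 2 → ℝ) → ENNReal) (hF : Measurable F) :
    ∫⁻ z, F z = ∫⁻ a, ∫⁻ b, ∫⁻ c, ∫⁻ d, F ![![a, b], ![c, d]] := by
  have key : ∀ (α : Type) [MeasureSpace α] [SigmaFinite (volume : Measure α)] (G : (Fin 2 → α) → ENNReal),
      Measurable G → ∫⁻ z, G z = ∫⁻ a, ∫⁻ b, G ![a, b] := by
    intro α _ _ G hG
    have := ((volume_preserving_finTwoArrow α).symm).lintegral_comp_emb
      (MeasurableEquiv.measurableEmbedding _) G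
    rw [← this, Measure.volume_eq_prod, lintegral_prod (fun a => G (MeasurableEquiv.finTwoArrow.symm a))
      (hG.comp (MeasurableEquiv.measurable _)).aemeasurable]
    rfl
  have m1 : Measurable fun x : (Fin 2 → ℝ) × (Fin 2 → ℝ) => F ![x.1, x.2] :=
    hF.comp (MeasurableEquiv.measurable (MeasurableEquiv.finTwoArrow (α := Fin 2 → ℝ)).symm)
  rw [key _ F hF, key ℝ _ m1.lintegral_prod_right']
  congr 1; ext a; congr 1; ext b
  exact key ℝ (fun y => F ![![a, b], y])
    (m1.comp (f := fun y : Fin 2 → ℝ => ((![a, b] : Fin 2 → ℝ), y)) (by fun_prop))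

lemma L_map : Measure.map (fun z : Fin 2 → Fin 2 → ℝ => |(Matrix.of z).det|)
      (volume.withDensity fun z => ENNReal.ofReal (Real.exp (-(Matrix.of z * (Matrix.of z)ᵀ).trace / 2)))
    = ENNReal.ofReal (4 * Real.pi ^ 2) •
      (volume.restrict (Set.Ioi (0:ℝ))).withDensity fun t => ENNReal.ofReal (Real.exp (-t)) := by
  apply Measure.ext_of_lintegral
  intro g hg
  have md : Measurable (fun z : Fin 2 → Fin 2 → ℝ => |(Matrix.of z).det|) := by
    simp only [Matrix.det_fin_two, Matrix.of_apply]; fun_prop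
  have mt : Measurable (fun z : Fin 2 → Fin 2 → ℝ =>
      ENNReal.ofReal (Real.exp (-(Matrix.of z * (Matrix.of z)ᵀ).trace / 2))) := by
    simp only [Matrix.trace_fin_two, Matrix.mul_apply, Fin.sum_univ_two, Matrix.of_apply,
      Matrix.transpose_apply]
    fun_prop
  have mg : Measurable (fun z : Fin 2 → Fin 2 → ℝ => g |(Matrix.of z).det|) := hg.comp md
  rw [lintegral_map hg md, lintegral_withDensity_eq_lintegral_mul _ mt mg,
    lintegral_smul_measure, lintegral_withDensity_eq_lintegral_mul _ (by fun_prop) hg,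
    L_pi _ (mt.mul mg), smul_eq_mul]
  simp only [Pi.mul_apply, mul_comm (ENNReal.ofReal (Real.exp _))]
  rw [← L_main g hg]
  congr 1; ext a; congr 1; ext b; congr 1; ext c; congr 1; ext d
  simp only [Matrix.det_fin_two, Matrix.trace_fin_two, Matrix.mul_apply, Fin.sum_univ_two,
    Matrix.of_apply, Matrix.transpose_apply]
  simp
  congr 3
  ring

/-- Eq. (4.4): the density of `|det z|` in the induced `2×2` real
Ginibre ensemble. -/
theorem ginibre_det_density (ν : ℝ) (hν : -(1 / 2 : ℝ) < ν) :
    ∀ ψ : ℝ → ℝ, Measurable ψ → (∃ C, ∀ t, |ψ t| ≤ C) →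
      (∫ z : Fin 2 → Fin 2 → ℝ,
          ψ |(Matrix.of z).det| * |(Matrix.of z).det| ^ (2 * ν) *
            Real.exp (-(Matrix.of z * (Matrix.of z)ᵀ).trace / 2)) =
        4 * Real.pi ^ 2 *
          ∫ t in Set.Ioi (0 : ℝ), ψ t * t ^ (2 * ν) * Real.exp (-t) := by
  intro ψ hψ _
  have md : Measurable (fun z : Fin 2 → Fin 2 → ℝ => |(Matrix.of z).det|) := by
    simp only [Matrix.det_fin_two, Matrix.of_apply]; fun_prop
  have mt : Measurable (fun z : Fin 2 → Fin 2 → ℝ =>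
      ENNReal.ofReal (Real.exp (-(Matrix.of z * (Matrix.of z)ᵀ).trace / 2))) := by
    simp only [Matrix.trace_fin_two, Matrix.mul_apply, Fin.sum_univ_two, Matrix.of_apply,
      Matrix.transpose_apply]
    fun_prop
  have mf : Measurable fun t : ℝ => ψ t * t ^ (2 * ν) := by fun_prop
  have h := congrArg (fun μ => ∫ t, ψ t * t ^ (2 * ν) ∂μ) L_map
  beta_reduce at h
  rw [integral_map md.aemeasurable mf.aestronglyMeasurable,
    integral_withDensity_eq_integral_toReal_smul mt (by simp),
    integral_smul_measure,
    integral_withDensity_eq_integral_toReal_smul (by fun_prop) (by simp),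
    ENNReal.toReal_ofReal (by positivity)] at h
  simp only [ENNReal.toReal_ofReal (Real.exp_pos _).le, smul_eq_mul,
    mul_comm (Real.exp _)] at h
  exact h

end
end

section
/- Let p > −1 be real and let 0 < a < 1. Then ∫_a^1 ((1 − t²)·(1 − a²/t²))^p dt = (√π · Γ(p+1) / (2·Γ(p + 3/2))) · (1 − a)^{2p+1}. -/
open MeasureTheory

noncomputable section

lemma bti_beta (p : ℝ) (hp : -1 < p) :
    ∫ x in Set.Ioo (0:ℝ) 1, (x * (1 - x)) ^ p =
      Real.Gamma (p+1) * Real.Gamma (p+1) / Real.Gamma (2 * (p + 1)) := by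
  have h := ProbabilityTheory.beta_eq_betaIntegralReal (p+1) (p+1) (by linarith) (by linarith)
  rw [ProbabilityTheory.beta, ← two_mul] at h
  rw [h, Complex.betaIntegral, intervalIntegral.integral_of_le zero_le_one,
    integral_Ioc_eq_integral_Ioo]
  have : ∫ x in Set.Ioo (0:ℝ) 1, ((x:ℂ) ^ (((p+1:ℝ):ℂ) - 1) * (1 - (x:ℂ)) ^ (((p+1:ℝ):ℂ) - 1))
      = ∫ x in Set.Ioo (0:ℝ) 1, (((x * (1 - x)) ^ p : ℝ) : ℂ) := by
    apply setIntegral_congr_fun measurableSet_Ioo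
    intro x hx
    have h1 : 0 ≤ x := hx.1.le
    have h2 : 0 ≤ 1 - x := by linarith [hx.2]
    simp only
    rw [Real.mul_rpow h1 h2, Complex.ofReal_mul, Complex.ofReal_cpow h1, Complex.ofReal_cpow h2]
    push_cast
    simp
  rw [this, integral_complex_ofReal, Complex.ofReal_re]

/-- substitution `s = (t - a/t + 1 - a)/(2(1-a))` -/
def btiPhi (a t : ℝ) : ℝ := (t - a / t + (1 - a)) / (2 * (1 - a))

lemma btiPhi_deriv (a t : ℝ) (ht : 0 < t) :
    HasDerivAt (btiPhi a) ((1 + a / t ^ 2) / (2 * (1 - a))) t := by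
  have h : HasDerivAt (fun t : ℝ => t - a * t⁻¹ + (1 - a)) (1 - a * (-(t^2)⁻¹)) t :=
    (((hasDerivAt_id t).sub ((hasDerivAt_inv ht.ne').const_mul a)).add_const (1-a))
  have h2 := h.div_const (2 * (1 - a))
  have e : btiPhi a = fun t => (t - a * t⁻¹ + (1 - a)) / (2 * (1 - a)) := by
    funext t
    simp only [btiPhi, div_eq_mul_inv]
  rw [e]
  exact h2.congr_deriv (by simp only [div_eq_mul_inv]; ring)

lemma btiPhi_mono (a : ℝ) (ha : 0 < a) (ha1 : a < 1) : StrictMonoOn (btiPhi a) (Set.Icc a 1) := by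
  intro x hx y hy hxy
  have hx0 : 0 < x := lt_of_lt_of_le ha hx.1
  have h1 : 0 < 2 * (1 - a) := by linarith
  have h2 : a / y < a / x := div_lt_div_of_pos_left ha hx0 hxy
  unfold btiPhi
  apply div_lt_div_of_pos_right _ h1
  linarith

lemma btiPhi_image (a : ℝ) (ha : 0 < a) (ha1 : a < 1) :
    btiPhi a '' Set.Ioo a 1 = Set.Ioo 0 1 := by
  have h1 : 1 - a ≠ 0 := by linarith
  have e0 : btiPhi a a = 0 := by
    unfold btiPhi; rw [div_self ha.ne']; simp
  have e1 : btiPhi a 1 = 1 := by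
    unfold btiPhi; field_simp; ring
  have hm := btiPhi_mono a ha ha1
  apply Set.Subset.antisymm
  · rintro _ ⟨t, ht, rfl⟩
    constructor
    · rw [← e0]
      exact hm ⟨le_rfl, ha1.le⟩ ⟨ht.1.le, ht.2.le⟩ ht.1
    · rw [← e1]
      exact hm ⟨ht.1.le, ht.2.le⟩ ⟨ha1.le, le_rfl⟩ ht.2
  · have := intermediate_value_Ioo ha1.le (f := btiPhi a)
      (fun x hx => (btiPhi_deriv a x (lt_of_lt_of_le ha hx.1)).continuousAt.continuousWithinAt)
    rwa [e0, e1] at this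

lemma bti_inv_image (a : ℝ) (ha : 0 < a) (_ha1 : a < 1) :
    (fun t : ℝ => a / t) '' Set.Ioo a 1 = Set.Ioo a 1 := by
  have key : ∀ t ∈ Set.Ioo a 1, a / t ∈ Set.Ioo a 1 := by
    intro t ht
    have h0 : 0 < t := ha.trans ht.1
    constructor
    · rw [lt_div_iff₀ h0]; nlinarith [ht.2]
    · rw [div_lt_one h0]; exact ht.1
  apply Set.Subset.antisymm
  · rintro _ ⟨t, ht, rfl⟩
    exact key t ht
  · intro t ht
    have h0 : 0 < t := ha.trans ht.1
    exact ⟨a / t, key t ht, by field_simp⟩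

/-- the integral evaluation in the proof of Corollary 4.2:
`∫_a^1 ((1-t²)(1-a²/t²))^p dt = √π Γ(p+1)/(2 Γ(p+3/2)) (1-a)^{2p+1}`. -/
theorem boole_type_integral (p : ℝ) (hp : -1 < p) (a : ℝ) (ha : 0 < a) (ha1 : a < 1) :
    (∫ t in a..1, ((1 - t ^ 2) * (1 - a ^ 2 / t ^ 2)) ^ p) =
      (Real.sqrt Real.pi * Real.Gamma (p + 1) / (2 * Real.Gamma (p + 3 / 2))) *
        (1 - a) ^ (2 * p + 1) := by
  rw [intervalIntegral.integral_of_le ha1.le, integral_Ioc_eq_integral_Ioo]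
  set F : ℝ → ℝ := fun t => ((1 - t ^ 2) * (1 - a ^ 2 / t ^ 2)) ^ p with hF
  have hb : 0 < 1 - a := by linarith
  have hG1 : 0 < Real.Gamma (p+1) := Real.Gamma_pos_of_pos (by linarith)
  have hG2 : 0 < Real.Gamma (2*(p+1)) := Real.Gamma_pos_of_pos (by linarith)
  have hG3 : 0 < Real.Gamma (p+3/2) := Real.Gamma_pos_of_pos (by linarith)
  have hB := bti_beta p hp
  have hBpos : 0 < Real.Gamma (p+1) * Real.Gamma (p+1) / Real.Gamma (2 * (p + 1)) := by positivity
  have hBint : IntegrableOn (fun x : ℝ => (x * (1 - x)) ^ p) (Set.Ioo 0 1) := by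
    by_contra hcon
    rw [integral_undef hcon] at hB
    linarith
  have hd : ∀ x ∈ Set.Ioo a 1, HasDerivWithinAt (btiPhi a)
      ((1 + a / x ^ 2) / (2 * (1 - a))) (Set.Ioo a 1) x :=
    fun x hx => (btiPhi_deriv a x (ha.trans hx.1)).hasDerivWithinAt
  have hinj : Set.InjOn (btiPhi a) (Set.Ioo a 1) :=
    (btiPhi_mono a ha ha1).injOn.mono Set.Ioo_subset_Icc_self
  set c : ℝ := (2 * (1 - a)) * (4 * (1 - a) ^ 2) ^ p with hc
  have hcpos : 0 < c := by positivity
  have hFpos : ∀ t ∈ Set.Ioo a 1, 0 ≤ (1 - t ^ 2) * (1 - a ^ 2 / t ^ 2) := by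
    intro t ht
    have h0 : 0 < t := ha.trans ht.1
    apply mul_nonneg
    · nlinarith [ht.2]
    · rw [sub_nonneg, div_le_one (by positivity)]
      nlinarith [ht.1]
  have hcongr : Set.EqOn (fun x => |(1 + a / x ^ 2) / (2 * (1 - a))| •
      (btiPhi a x * (1 - btiPhi a x)) ^ p) (fun x => c⁻¹ * (F x + a / x ^ 2 * F x))
      (Set.Ioo a 1) := by
    intro t ht
    have h0 : 0 < t := ha.trans ht.1
    have e : btiPhi a t * (1 - btiPhi a t) =
        ((1 - t ^ 2) * (1 - a ^ 2 / t ^ 2)) / (4 * (1 - a) ^ 2) := by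
      unfold btiPhi
      field_simp
      ring
    simp only [smul_eq_mul]
    rw [e, Real.div_rpow (hFpos t ht) (by positivity), abs_of_pos (by positivity)]
    have : 0 < (4 * (1 - a) ^ 2) ^ p := by positivity
    simp only [hF, hc]
    field_simp
  have hK := integral_image_eq_integral_abs_deriv_smul measurableSet_Ioo hd hinj
    (fun x : ℝ => (x * (1 - x)) ^ p)
  have hKi := (integrableOn_image_iff_integrableOn_abs_deriv_smul measurableSet_Ioo hd hinj
    (fun x : ℝ => (x * (1 - x)) ^ p)).1 (by rwa [btiPhi_image a ha ha1])
  rw [btiPhi_image a ha ha1, hB, setIntegral_congr_fun measurableSet_Ioo hcongr,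
    integral_const_mul] at hK
  replace hKi := hKi.congr_fun hcongr measurableSet_Ioo
  have hKi2 : IntegrableOn (fun x => F x + a / x ^ 2 * F x) (Set.Ioo a 1) := by
    have := hKi.const_mul c
    refine this.congr (Filter.Eventually.of_forall fun x => ?_)
    simp only
    field_simp
  have hFm : Measurable F := by
    simp only [hF]; fun_prop
  have hFi : IntegrableOn F (Set.Ioo a 1) := by
    refine Integrable.mono' hKi2 hFm.aestronglyMeasurable ?_
    refine (ae_restrict_iff' measurableSet_Ioo).2 (Filter.Eventually.of_forall fun x hx => ?_)
    have h1 : 0 ≤ F x := Real.rpow_nonneg (hFpos x hx) p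
    rw [Real.norm_of_nonneg h1]
    have : 0 ≤ a / x ^ 2 * F x := by positivity
    linarith
  have hGi : IntegrableOn (fun x => a / x ^ 2 * F x) (Set.Ioo a 1) := by
    have := hKi2.sub hFi
    refine this.congr (Filter.Eventually.of_forall fun x => ?_)
    simp
  have hsym : ∫ x in Set.Ioo a 1, F x = ∫ x in Set.Ioo a 1, a / x ^ 2 * F x := by
    have h := integral_image_eq_integral_abs_deriv_smul (s := Set.Ioo a 1)
      (f := fun t : ℝ => a / t) (f' := fun t => - (a / t ^ 2)) measurableSet_Ioo
      (fun x hx => by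
        have := ((hasDerivAt_inv (ha.trans hx.1).ne').const_mul a).hasDerivWithinAt
          (s := Set.Ioo a 1)
        simp only [div_eq_mul_inv]
        exact this.congr_deriv (by ring))
      (fun x hx y hy hxy => by
        have h1 : 0 < x := ha.trans hx.1
        have h2 : 0 < y := ha.trans hy.1
        simp only at hxy
        field_simp at hxy
        linarith) F
    rw [bti_inv_image a ha ha1] at h
    rw [h]
    apply setIntegral_congr_fun measurableSet_Ioo
    intro t ht
    have h0 : 0 < t := ha.trans ht.1
    simp only [smul_eq_mul]
    rw [abs_neg, abs_of_pos (by positivity)]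
    congr 1
    simp only [hF]
    congr 1
    field_simp
  rw [integral_add hFi hGi, ← hsym] at hK
  have hI : ∫ x in Set.Ioo a 1, F x =
      c * (Real.Gamma (p+1) * Real.Gamma (p+1) / Real.Gamma (2 * (p + 1))) / 2 := by
    rw [hK]; field_simp; ring
  rw [hI]
  have hdup := Real.Gamma_mul_Gamma_add_half (p+1)
  rw [show p + 1 + 1/2 = p + 3/2 by ring] at hdup
  have hcc : c * (2:ℝ) ^ (1 - 2 * (p+1)) = (1 - a) ^ (2 * p + 1) := by
    rw [hc, Real.mul_rpow (by norm_num) (by positivity), Real.rpow_add hb, Real.rpow_mul hb.le,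
      Real.rpow_one, show (4:ℝ) = 2 ^ (2:ℝ) by norm_num, ← Real.rpow_mul (by norm_num),
      show (1 - 2 * (p+1)) = -(2 * p) - 1 by ring, Real.rpow_sub (by norm_num),
      Real.rpow_neg (by norm_num), Real.rpow_two]
    have : (0:ℝ) < 2 ^ (2 * p) := by positivity
    simp only [Real.rpow_one]
    field_simp
  rw [← hcc]
  generalize (2:ℝ) ^ (1 - 2 * (p+1)) = w at *
  generalize Real.Gamma (2 * (p+1)) = g2 at *
  generalize Real.Gamma (p+1) = g1 at *
  generalize Real.Gamma (p+3/2) = g3 at *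
  clear_value c
  field_simp
  linear_combination hdup

end
end
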